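/- arXiv:2605.27212 — 9 statements merged into one kernel-verified Lean document; each statement's English description precedes it below -/
import Mathlib

section
/- There is an absolute constant c > 0 such that, for all sufficiently large n and every 1 ≤ k ≤ n, the half-lazy k-column transvection walk satisfies τ_mix(Q_{n,k}) ≥ c·max( n·log n , n·k / log(e·n) ). -/
open Finset

noncomputable section

def tvDist {X : Type*} [Fintype X] (f g : X → ℝ) : ℝ := (1/2) * ∑ x, |f x - g x|

open Classical in
def unifOn {X : Type*} [Fintype X] (G : Set X) : X → ℝ :=
  fun x => if x ∈ G then (Nat.card G : ℝ)⁻¹ else 0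

def mixTime {X : Type*} [Fintype X] [DecidableEq X] (Q : Matrix X X ℝ) (π : X → ℝ)
    (start : Set X) : ℕ :=
  sInf {t : ℕ | ∀ x ∈ start, tvDist ((Q ^ t) x) π ≤ 1 / 4}

abbrev TState (n k : ℕ) := Fin n → (Fin k → ZMod 2)

def Stief (n k : ℕ) : Set (TState n k) :=
  {z | Submodule.span (ZMod 2) (Set.range z) = ⊤}

def transP (n k : ℕ) : Matrix (TState n k) (TState n k) ℝ :=
  fun z w => (∑ a : Fin n, ∑ b : Fin n,
    if a ≠ b ∧ w = Function.update z b (z b + z a) then (1 : ℝ) else 0) / ((n : ℝ) * ((n : ℝ) - 1))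

def transQ (n k : ℕ) : Matrix (TState n k) (TState n k) ℝ :=
  (2⁻¹ : ℝ) • ((1 : Matrix (TState n k) (TState n k) ℝ) + transP n k)


def stp {n k : ℕ} (z : TState n k) (a b : Fin n) : TState n k := Function.update z b (z b + z a)

lemma stp_stp {n k : ℕ} (z : TState n k) {a b : Fin n} (h : a ≠ b) : stp (stp z a b) a b = z := by
  have h2 : z b + z a + z a = z b := by
    ext i
    simp only [Pi.add_apply]
    have : ∀ x y : ZMod 2, x + y + y = x := by decide
    exact this _ _
  unfold stp
  simp [Function.update_of_ne h, h2]

lemma stp_mem_aux {n k : ℕ} (z : TState n k) (a b : Fin n) :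
    Submodule.span (ZMod 2) (Set.range (stp z a b)) ≤ Submodule.span (ZMod 2) (Set.range z) := by
  rw [Submodule.span_le]
  rintro _ ⟨i, rfl⟩
  unfold stp
  by_cases hi : i = b
  · subst hi
    simp only [Function.update_self]
    exact Submodule.add_mem _ (Submodule.subset_span ⟨_, rfl⟩) (Submodule.subset_span ⟨_, rfl⟩)
  · rw [Function.update_of_ne hi]
    exact Submodule.subset_span ⟨_, rfl⟩

lemma stp_mem {n k : ℕ} {z : TState n k} {a b : Fin n} (h : a ≠ b) (hz : z ∈ Stief n k) :
    stp z a b ∈ Stief n k := by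
  have := stp_mem_aux (stp z a b) a b
  rw [stp_stp z h] at this
  have hz' : Submodule.span (ZMod 2) (Set.range z) = ⊤ := hz
  rw [hz'] at this
  exact top_le_iff.mp this

lemma transP_eq {n k : ℕ} (z w : TState n k) : transP n k z w =
    (∑ a : Fin n, ∑ b : Fin n, if a ≠ b then (if w = stp z a b then (1:ℝ) else 0) else 0)
      / ((n : ℝ) * ((n : ℝ) - 1)) := by
  unfold transP stp
  congr 1
  refine Finset.sum_congr rfl fun a _ => Finset.sum_congr rfl fun b _ => ?_
  split_ifs <;> simp_all

lemma denom_nonneg (n : ℕ) : 0 ≤ (n : ℝ) * ((n : ℝ) - 1) := by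
  rcases Nat.eq_zero_or_pos n with h | h
  · simp [h]
  · have : (1:ℝ) ≤ n := by exact_mod_cast h
    apply mul_nonneg <;> linarith

lemma transP_nonneg {n k : ℕ} (z w : TState n k) : 0 ≤ transP n k z w := by
  rw [transP_eq]
  refine div_nonneg (Finset.sum_nonneg fun a _ => Finset.sum_nonneg fun b _ => ?_) (denom_nonneg n)
  split_ifs <;> norm_num

lemma transP_symm {n k : ℕ} (z w : TState n k) : transP n k z w = transP n k w z := by
  rw [transP_eq, transP_eq]
  congr 1
  refine Finset.sum_congr rfl fun a _ => Finset.sum_congr rfl fun b _ => ?_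
  by_cases h : a ≠ b
  · rw [if_pos h, if_pos h]
    refine if_congr ⟨?_, ?_⟩ rfl rfl
    · rintro rfl; exact (stp_stp z h).symm
    · rintro rfl; exact (stp_stp w h).symm
  · simp [h]

lemma transP_mulVec {n k : ℕ} (g : TState n k → ℝ) (z : TState n k) :
    ∑ w, transP n k z w * g w =
    (∑ a : Fin n, ∑ b : Fin n, if a ≠ b then g (stp z a b) else 0)
      / ((n : ℝ) * ((n : ℝ) - 1)) := by
  simp_rw [transP_eq, div_mul_eq_mul_div]
  rw [← Finset.sum_div]
  congr 1
  simp_rw [Finset.sum_mul]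
  rw [Finset.sum_comm]
  refine Finset.sum_congr rfl fun a _ => ?_
  rw [Finset.sum_comm]
  refine Finset.sum_congr rfl fun b _ => ?_
  by_cases h : a ≠ b
  · simp [h]
  · simp [h]

lemma count_ne (n : ℕ) (h : Fin n → ℝ) :
    (∑ a : Fin n, ∑ b : Fin n, if a ≠ b then h a else 0) = ((n:ℝ) - 1) * ∑ a, h a := by
  rw [Finset.mul_sum]
  refine Finset.sum_congr rfl fun a _ => ?_
  have : ∀ b, (if a ≠ b then h a else 0) = h a - (if a = b then h a else 0) := by
    intro b; by_cases hb : a = b <;> simp [hb]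
  simp_rw [this]
  rw [Finset.sum_sub_distrib]
  simp
  ring

lemma transQ_apply {n k : ℕ} (z w : TState n k) :
    transQ n k z w = 2⁻¹ * ((if z = w then 1 else 0) + transP n k z w) := by
  simp [transQ, Matrix.one_apply]

lemma transQ_mulVec {n k : ℕ} (g : TState n k → ℝ) (z : TState n k) :
    ∑ w, transQ n k z w * g w = 2⁻¹ * (g z + (∑ a : Fin n, ∑ b : Fin n,
      if a ≠ b then g (stp z a b) else 0) / ((n : ℝ) * ((n : ℝ) - 1))) := by
  rw [← transP_mulVec]
  simp_rw [transQ_apply, mul_assoc, ← Finset.mul_sum, add_mul, Finset.sum_add_distrib]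
  simp

lemma transQ_nonneg {n k : ℕ} (z w : TState n k) : 0 ≤ transQ n k z w := by
  rw [transQ_apply]
  have := transP_nonneg z w
  split_ifs <;> linarith

lemma transQ_symm {n k : ℕ} (z w : TState n k) : transQ n k z w = transQ n k w z := by
  rw [transQ_apply, transQ_apply, transP_symm z w]
  simp [eq_comm]

lemma transQ_sum {n k : ℕ} (hn : 2 ≤ n) (z : TState n k) : ∑ w, transQ n k z w = 1 := by
  have := transQ_mulVec (fun _ => (1:ℝ)) z
  simp only [mul_one] at this
  rw [this, count_ne n (fun _ => 1)]
  have h2 : (2:ℝ) ≤ n := by exact_mod_cast hn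
  have h3 : (n:ℝ) - 1 ≠ 0 := by linarith
  simp
  field_simp
  norm_num

lemma transQ_support {n k : ℕ} {z w : TState n k} (h : transQ n k z w ≠ 0) :
    w = z ∨ ∃ a b, a ≠ b ∧ w = stp z a b := by
  by_contra hc
  push Not at hc
  apply h
  rw [transQ_apply, if_neg (fun h => hc.1 h.symm), transP_eq]
  have : ∀ a b : Fin n, (if a ≠ b then (if w = stp z a b then (1:ℝ) else 0) else 0) = 0 := by
    intro a b
    split_ifs with h1 h2
    · exact absurd h2 (hc.2 a b h1)
    · rfl
    · rfl
  simp [this]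

lemma transQ_mem {n k : ℕ} {z w : TState n k} (h : transQ n k z w ≠ 0) (hz : z ∈ Stief n k) :
    w ∈ Stief n k := by
  rcases transQ_support h with rfl | ⟨a, b, hab, rfl⟩
  · exact hz
  · exact stp_mem hab hz

lemma transQ_self_pos {n k : ℕ} (z : TState n k) : 0 < transQ n k z z := by
  rw [transQ_apply]
  have := transP_nonneg z z
  simp; linarith

lemma transQ_stp_pos {n k : ℕ} (hn : 2 ≤ n) (z : TState n k) {a b : Fin n} (h : a ≠ b) :
    0 < transQ n k z (stp z a b) := by
  have h2 : (2:ℝ) ≤ n := by exact_mod_cast hn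
  have hp : 0 < transP n k z (stp z a b) := by
    rw [transP_eq]
    refine div_pos ?_ (by apply mul_pos <;> linarith)
    refine Finset.sum_pos' (fun a _ => Finset.sum_nonneg fun b _ => by split_ifs <;> norm_num)
      ⟨a, Finset.mem_univ _, ?_⟩
    refine Finset.sum_pos' (fun b _ => by split_ifs <;> norm_num) ⟨b, Finset.mem_univ _, ?_⟩
    simp [h]
  rw [transQ_apply]
  split_ifs <;> linarith

/- powers -/
lemma Qpow_nonneg {n k : ℕ} (t : ℕ) (z w : TState n k) : 0 ≤ (transQ n k ^ t) z w := by
  induction t generalizing w with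
  | zero => simp [Matrix.one_apply]; split_ifs <;> norm_num
  | succ t ih =>
    rw [pow_succ, Matrix.mul_apply]
    exact Finset.sum_nonneg fun y _ => mul_nonneg (ih y) (transQ_nonneg _ _)

lemma Qpow_sum {n k : ℕ} (hn : 2 ≤ n) (t : ℕ) (z : TState n k) :
    ∑ w, (transQ n k ^ t) z w = 1 := by
  induction t with
  | zero => simp [Matrix.one_apply]
  | succ t ih =>
    simp_rw [pow_succ, Matrix.mul_apply]
    rw [Finset.sum_comm]
    simp_rw [← Finset.mul_sum, transQ_sum hn, mul_one, ih]

lemma Qpow_mem {n k : ℕ} (t : ℕ) {z w : TState n k} (h : (transQ n k ^ t) z w ≠ 0)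
    (hz : z ∈ Stief n k) : w ∈ Stief n k := by
  induction t generalizing w with
  | zero =>
    rw [pow_zero, Matrix.one_apply] at h
    have : z = w := by by_contra hc; simp [hc] at h
    exact this ▸ hz
  | succ t ih =>
    rw [pow_succ, Matrix.mul_apply] at h
    obtain ⟨y, -, hy⟩ := Finset.exists_ne_zero_of_sum_ne_zero h
    exact transQ_mem (right_ne_zero_of_mul hy) (ih (left_ne_zero_of_mul hy))

lemma Qpow_mono {n k : ℕ} {s t : ℕ} (hst : s ≤ t) {z w : TState n k}
    (h : 0 < (transQ n k ^ s) z w) : 0 < (transQ n k ^ t) z w := by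
  induction t, hst using Nat.le_induction with
  | base => exact h
  | succ t _ ih =>
    rw [pow_succ, Matrix.mul_apply]
    exact Finset.sum_pos' (fun y _ => mul_nonneg (Qpow_nonneg _ _ _) (transQ_nonneg _ _))
      ⟨w, Finset.mem_univ _, mul_pos ih (transQ_self_pos _)⟩

lemma Qpow_trans {n k : ℕ} {s t : ℕ} {x y z : TState n k}
    (h : 0 < (transQ n k ^ s) x y) (h' : 0 < (transQ n k ^ t) y z) :
    0 < (transQ n k ^ (s + t)) x z := by
  rw [pow_add, Matrix.mul_apply]
  exact Finset.sum_pos' (fun y _ => mul_nonneg (Qpow_nonneg _ _ _) (Qpow_nonneg _ _ _))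
      ⟨y, Finset.mem_univ _, mul_pos h h'⟩

def Reach {n k : ℕ} (x y : TState n k) : Prop := ∃ t, 0 < (transQ n k ^ t) x y

lemma Reach.trans {n k : ℕ} {x y z : TState n k} (h : Reach x y) (h' : Reach y z) : Reach x z := by
  obtain ⟨s, hs⟩ := h
  obtain ⟨t, ht⟩ := h'
  exact ⟨_, Qpow_trans hs ht⟩

lemma Reach.refl {n k : ℕ} (x : TState n k) : Reach x x := ⟨0, by simp⟩

def act {n k : ℕ} (M : Matrix (Fin n) (Fin n) (ZMod 2)) (z : TState n k) : TState n k :=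
  fun i j => (M * Matrix.of z) i j

lemma act_one {n k : ℕ} (z : TState n k) : act 1 z = z := by
  unfold act; rw [Matrix.one_mul]; rfl

lemma act_mul {n k : ℕ} (A B : Matrix (Fin n) (Fin n) (ZMod 2)) (z : TState n k) :
    act (A * B) z = act A (act B z) := by
  unfold act; rw [Matrix.mul_assoc]; rfl

lemma act_transvection {n k : ℕ} (z : TState n k) (i j : Fin n) :
    act (Matrix.transvection i j 1) z = stp z j i := by
  ext a b
  unfold act
  by_cases ha : a = i
  · subst ha
    rw [Matrix.transvection_mul_apply_same]
    simp [stp]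
  · rw [Matrix.transvection_mul_apply_of_ne _ _ _ _ ha]
    simp [stp, ha]

lemma reach_mul {n k : ℕ} (hn : 2 ≤ n) (M : Matrix (Fin n) (Fin n) (ZMod 2)) (hM : M.det ≠ 0)
    (z : TState n k) : Reach z (act M z) := by
  revert z
  refine Matrix.diagonal_transvection_induction_of_det_ne_zero
    (fun M => ∀ z : TState n k, Reach z (act M z)) M hM ?_ ?_ ?_
  · intro D hD z
    have : Matrix.diagonal D = 1 := by
      rw [← Matrix.diagonal_one]
      congr 1
      ext i
      rw [Matrix.det_diagonal, Finset.prod_ne_zero_iff] at hD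
      have h1 := hD i (Finset.mem_univ _)
      have : ∀ x : ZMod 2, x ≠ 0 → x = 1 := by decide
      rw [this _ h1]
    rw [this, act_one]
    exact Reach.refl _
  · rintro ⟨i, j, hij, c⟩ z
    have hc : ∀ x : ZMod 2, x = 0 ∨ x = 1 := by decide
    rcases hc c with rfl | rfl
    · simp only [Matrix.TransvectionStruct.toMatrix_mk, Matrix.transvection_zero, act_one]
      exact Reach.refl _
    · rw [Matrix.TransvectionStruct.toMatrix_mk, act_transvection]
      exact ⟨1, by rw [pow_one]; exact transQ_stp_pos hn z hij.symm⟩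
  · intro A B _ _ hA hB z
    rw [act_mul]
    exact (hB z).trans (hA _)

lemma surj_split {E F : Type*} [AddCommGroup E] [Module (ZMod 2) E] [AddCommGroup F]
    [Module (ZMod 2) F] (f : E →ₗ[ZMod 2] F) (hf : LinearMap.range f = ⊤) :
    ∃ e : E ≃ₗ[ZMod 2] F × (LinearMap.ker f), ∀ x, (e x).1 = f x := by
  obtain ⟨C, hC⟩ := Submodule.exists_isCompl (LinearMap.ker f)
  refine ⟨LinearMap.equivProdOfSurjectiveOfIsCompl f (Submodule.projectionOnto _ _ hC) hf 
    (Submodule.range_projectionOnto hC) (by rw [Submodule.ker_projectionOnto]; exact hC), ?_⟩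
  intro x
  rfl

lemma surj_equiv {E F : Type*} [AddCommGroup E] [Module (ZMod 2) E] [AddCommGroup F]
    [Module (ZMod 2) F] [FiniteDimensional (ZMod 2) E] (f g : E →ₗ[ZMod 2] F)
    (hf : LinearMap.range f = ⊤) (hg : LinearMap.range g = ⊤) :
    ∃ e : E ≃ₗ[ZMod 2] E, ∀ x, f (e x) = g x := by
  obtain ⟨e1, h1⟩ := surj_split f hf
  obtain ⟨e2, h2⟩ := surj_split g hg
  have hr : Module.finrank (ZMod 2) (LinearMap.ker g) = Module.finrank (ZMod 2) (LinearMap.ker f) := by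
    have a := LinearMap.finrank_range_add_finrank_ker f
    have b := LinearMap.finrank_range_add_finrank_ker g
    rw [hf] at a
    rw [hg] at b
    omega
  let ek := LinearEquiv.ofFinrankEq _ _ hr
  refine ⟨e2.trans (((LinearEquiv.refl (ZMod 2) F).prodCongr ek).trans e1.symm), ?_⟩
  intro x
  rw [← h1]
  simp [h2]

lemma reach_all {n k : ℕ} (hn : 2 ≤ n) {z w : TState n k} (hz : z ∈ Stief n k)
    (hw : w ∈ Stief n k) : Reach z w := by
  obtain ⟨e, he⟩ := surj_equiv (Fintype.linearCombination (ZMod 2) z)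
    (Fintype.linearCombination (ZMod 2) w)
    (by rw [Fintype.range_linearCombination]; exact hz)
    (by rw [Fintype.range_linearCombination]; exact hw)
  have hd : (LinearMap.toMatrix' (e : (Fin n → ZMod 2) →ₗ[ZMod 2] (Fin n → ZMod 2))).transpose.det ≠ 0 := by
    rw [Matrix.det_transpose, LinearMap.det_toMatrix']
    exact e.isUnit_det'.ne_zero
  have := reach_mul hn _ hd z
  suffices hs : w = act
      (LinearMap.toMatrix' (e : (Fin n → ZMod 2) →ₗ[ZMod 2] (Fin n → ZMod 2))).transpose z by
    rw [hs]; exact this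
  ext i j
  unfold act
  have h1 := congrFun (he (Pi.single i 1)) j
  simp only [Fintype.linearCombination_apply_single, one_smul] at h1
  rw [← h1, Matrix.mul_apply, Fintype.linearCombination_apply, Finset.sum_apply]
  refine Finset.sum_congr rfl fun x _ => ?_
  simp [LinearMap.toMatrix'_apply]

lemma stief_card_pos {n k : ℕ} {x : TState n k} (hx : x ∈ Stief n k) :
    0 < (Nat.card (Stief n k) : ℝ) := by
  have : Nonempty (Stief n k) := ⟨⟨x, hx⟩⟩
  exact_mod_cast Nat.card_pos

open Classical in
lemma stief_card_eq {n k : ℕ} :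
    (Nat.card (Stief n k) : ℝ) = ((Finset.univ.filter (fun z => z ∈ Stief n k)).card : ℝ) := by
  rw [Nat.card_eq_fintype_card, Fintype.card_subtype]

lemma unif_sum {n k : ℕ} {x : TState n k} (hx : x ∈ Stief n k) :
    ∑ w, unifOn (Stief n k) w = 1 := by
  classical
  have h := stief_card_pos hx
  unfold unifOn
  rw [← Finset.sum_filter, Finset.sum_const, nsmul_eq_mul]
  rw [stief_card_eq] at h ⊢
  convert mul_inv_cancel₀ h.ne'

lemma unif_stat {n k : ℕ} (hn : 2 ≤ n) (w : TState n k) :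
    ∑ z, unifOn (Stief n k) z * transQ n k z w = unifOn (Stief n k) w := by
  classical
  have : ∀ z, unifOn (Stief n k) z * transQ n k z w = unifOn (Stief n k) w * transQ n k w z := by
    intro z
    rw [transQ_symm z w]
    by_cases h : transQ n k w z = 0
    · simp [h]
    · congr 1
      have h1 : w ∈ Stief n k ↔ z ∈ Stief n k :=
        ⟨transQ_mem h, transQ_mem (by rwa [transQ_symm])⟩
      simp [unifOn, h1]
  simp_rw [this]
  rw [← Finset.mul_sum, transQ_sum hn, mul_one]

lemma unif_stat_pow {n k : ℕ} (hn : 2 ≤ n) (t : ℕ) (w : TState n k) :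
    ∑ z, unifOn (Stief n k) z * (transQ n k ^ t) z w = unifOn (Stief n k) w := by
  induction t generalizing w with
  | zero => simp [Matrix.one_apply]
  | succ t ih =>
    simp_rw [pow_succ, Matrix.mul_apply, Finset.mul_sum]
    rw [Finset.sum_comm]
    simp_rw [← mul_assoc, ← Finset.sum_mul, ih]
    exact unif_stat hn w

lemma doeblin {n k : ℕ} (hn : 2 ≤ n) (T : ℕ) (δ : ℝ)
    (hT : ∀ x ∈ Stief n k, ∀ y ∈ Stief n k, δ ≤ (transQ n k ^ T) x y)
    (ν : TState n k → ℝ) (hν : ∀ x, x ∉ Stief n k → ν x = 0) (h0 : ∑ x, ν x = 0) :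
    ∑ y, |∑ x, ν x * (transQ n k ^ T) x y| ≤ (1 - δ * Nat.card (Stief n k)) * ∑ x, |ν x| := by
  classical
  let J : TState n k → ℝ := fun y => if y ∈ Stief n k then δ else 0
  have hJ : ∑ y, J y = δ * Nat.card (Stief n k) := by
    rw [stief_card_eq]
    simp only [J]
    rw [← Finset.sum_filter, Finset.sum_const, nsmul_eq_mul, mul_comm]
  have e1 : ∀ y, ∑ x, ν x * (transQ n k ^ T) x y = ∑ x, ν x * ((transQ n k ^ T) x y - J y) := by
    intro y
    simp_rw [mul_sub, Finset.sum_sub_distrib, ← Finset.sum_mul, h0]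
    simp
  calc ∑ y, |∑ x, ν x * (transQ n k ^ T) x y|
      ≤ ∑ y, ∑ x, |ν x| * ((transQ n k ^ T) x y - J y) := by
        refine Finset.sum_le_sum fun y _ => ?_
        rw [e1]
        refine (Finset.abs_sum_le_sum_abs _ _).trans (Finset.sum_le_sum fun x _ => ?_)
        rw [abs_mul]
        by_cases hx : x ∈ Stief n k
        · refine mul_le_mul_of_nonneg_left (le_of_eq (abs_of_nonneg ?_)) (abs_nonneg _)
          simp only [J]
          split_ifs with hy
          · linarith [hT x hx y hy]
          · linarith [Qpow_nonneg T x y]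
        · simp [hν x hx]
    _ = (1 - δ * Nat.card (Stief n k)) * ∑ x, |ν x| := by
        rw [Finset.sum_comm]
        simp_rw [← Finset.mul_sum, Finset.sum_sub_distrib, Qpow_sum hn, hJ]
        rw [← Finset.sum_mul, mul_comm]

lemma exists_T {n k : ℕ} (hn : 2 ≤ n) : ∃ T : ℕ, ∃ δ : ℝ, 0 < δ ∧
    ∀ x ∈ Stief n k, ∀ y ∈ Stief n k, δ ≤ (transQ n k ^ T) x y := by
  classical
  have h : ∀ p : TState n k × TState n k, ∃ t : ℕ, p.1 ∈ Stief n k → p.2 ∈ Stief n k →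
      0 < (transQ n k ^ t) p.1 p.2 := by
    intro p
    by_cases hp : p.1 ∈ Stief n k ∧ p.2 ∈ Stief n k
    · obtain ⟨t, ht⟩ := reach_all hn hp.1 hp.2
      exact ⟨t, fun _ _ => ht⟩
    · exact ⟨0, fun a b => absurd ⟨a, b⟩ hp⟩
  choose τ hτ using h
  let T := Finset.univ.sup τ
  have hT : ∀ p : TState n k × TState n k, p.1 ∈ Stief n k → p.2 ∈ Stief n k →
      0 < (transQ n k ^ T) p.1 p.2 := fun p h1 h2 =>
    Qpow_mono (Finset.le_sup (Finset.mem_univ p)) (hτ p h1 h2)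
  obtain ⟨p, -, hp⟩ := Finset.exists_min_image (Finset.univ : Finset (TState n k × TState n k))
    (fun p => if p.1 ∈ Stief n k ∧ p.2 ∈ Stief n k then (transQ n k ^ T) p.1 p.2 else 1)
    Finset.univ_nonempty
  refine ⟨T, _, ?_, fun x hx y hy => (hp (x, y) (Finset.mem_univ _)).trans (by simp [hx, hy])⟩
  split_ifs with h
  · exact hT p h.1 h.2
  · norm_num

lemma contraction {n k : ℕ} (hn : 2 ≤ n) (T : ℕ) (δ : ℝ)
    (hT : ∀ x ∈ Stief n k, ∀ y ∈ Stief n k, δ ≤ (transQ n k ^ T) x y)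
    (hd : 0 ≤ 1 - δ * Nat.card (Stief n k))
    {x : TState n k} (hx : x ∈ Stief n k) (m : ℕ) :
    ∑ y, |(transQ n k ^ (T * m)) x y - unifOn (Stief n k) y| ≤
      (1 - δ * Nat.card (Stief n k)) ^ m * 2 := by
  classical
  have hu : ∀ y, 0 ≤ unifOn (Stief n k) y := by
    intro y; unfold unifOn; split_ifs <;> positivity
  induction m with
  | zero =>
    rw [pow_zero, one_mul]
    calc _ ≤ ∑ y, ((transQ n k ^ (T * 0)) x y + unifOn (Stief n k) y) := by
          refine Finset.sum_le_sum fun y _ => ?_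
          have := Qpow_nonneg (T * 0) x y
          have := hu y
          rw [abs_le]; constructor <;> linarith
      _ = 2 := by rw [Finset.sum_add_distrib, Qpow_sum hn, unif_sum hx]; norm_num
  | succ m ih =>
    have e : ∀ y, (transQ n k ^ (T * (m+1))) x y - unifOn (Stief n k) y =
        ∑ z, ((transQ n k ^ (T * m)) x z - unifOn (Stief n k) z) * (transQ n k ^ T) z y := by
      intro y
      simp_rw [sub_mul, Finset.sum_sub_distrib, unif_stat_pow hn]
      rw [mul_add, mul_one, pow_add, Matrix.mul_apply]
    simp_rw [e]
    refine (doeblin hn T δ hT _ ?_ ?_).trans ?_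
    · intro z hz
      have : (transQ n k ^ (T * m)) x z = 0 := by
        by_contra hc; exact hz (Qpow_mem _ hc hx)
      simp [this, unifOn, hz]
    · rw [Finset.sum_sub_distrib, Qpow_sum hn, unif_sum hx]; norm_num
    · rw [pow_succ']
      rw [mul_assoc]
      exact mul_le_mul_of_nonneg_left ih hd

lemma mix_nonempty {n k : ℕ} (hn : 2 ≤ n) :
    ∃ t : ℕ, ∀ x ∈ Stief n k, tvDist ((transQ n k ^ t) x) (unifOn (Stief n k)) ≤ 1 / 4 := by
  classical
  by_cases hS : ∃ x, x ∈ Stief n k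
  swap
  · exact ⟨0, fun x hx => absurd ⟨x, hx⟩ hS⟩
  obtain ⟨x0, hx0⟩ := hS
  obtain ⟨T, δ, hδ, hT⟩ := exists_T (k := k) hn
  have hc := stief_card_pos hx0
  have hd : 0 ≤ 1 - δ * Nat.card (Stief n k) := by
    have : ∑ y, (if y ∈ Stief n k then δ else 0) ≤ ∑ y, (transQ n k ^ T) x0 y := by
      refine Finset.sum_le_sum fun y _ => ?_
      split_ifs with hy
      · exact hT x0 hx0 y hy
      · exact Qpow_nonneg _ _ _
    rw [Qpow_sum hn, ← Finset.sum_filter, Finset.sum_const, nsmul_eq_mul] at this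
    rw [stief_card_eq]
    linarith
  obtain ⟨m, hm⟩ := exists_pow_lt_of_lt_one (show (0:ℝ) < 1/4 by norm_num)
    (show 1 - δ * Nat.card (Stief n k) < 1 by nlinarith)
  refine ⟨T * m, fun x hx => ?_⟩
  have := contraction hn T δ hT hd hx m
  unfold tvDist
  linarith

lemma mix_bound {n k : ℕ} (hn : 2 ≤ n) (B : ℝ)
    (h : ∀ t : ℕ, (∀ x ∈ Stief n k, tvDist ((transQ n k ^ t) x) (unifOn (Stief n k)) ≤ 1 / 4) →
      B ≤ t) : B ≤ (mixTime (transQ n k) (unifOn (Stief n k)) (Stief n k) : ℝ) :=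
  h _ (Nat.sInf_mem (s := {t : ℕ | ∀ x ∈ Stief n k,
    tvDist ((transQ n k ^ t) x) (unifOn (Stief n k)) ≤ 1 / 4}) (mix_nonempty hn))

lemma tv_test {X : Type*} [Fintype X] (μ ν f : X → ℝ) (h : ∑ x, μ x = ∑ x, ν x)
    (hf : ∀ x, 0 ≤ f x ∧ f x ≤ 1) : ∑ x, ν x * f x - ∑ x, μ x * f x ≤ tvDist μ ν := by
  have : ∑ x, ν x * f x - ∑ x, μ x * f x = ∑ x, (ν x - μ x) * (f x - 1/2) := by
    simp_rw [sub_mul, mul_sub, Finset.sum_sub_distrib, ← Finset.sum_mul, h]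
    ring
  rw [this]
  unfold tvDist
  rw [Finset.mul_sum]
  refine Finset.sum_le_sum fun x _ => ?_
  refine (le_abs_self _).trans ?_
  rw [abs_mul, abs_sub_comm, mul_comm]
  refine mul_le_mul_of_nonneg_right ?_ (abs_nonneg _)
  have := hf x
  rw [abs_le]; constructor <;> linarith

def ind {n k : ℕ} (j : Fin k) (i : Fin n) (z : TState n k) : ℝ := if z i j = 1 then 1 else 0

def wt {n k : ℕ} (j : Fin k) (z : TState n k) : ℝ := ∑ i, ind j i z

lemma ind_nonneg {n k : ℕ} (j : Fin k) (i : Fin n) (z : TState n k) : 0 ≤ ind j i z := by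
  unfold ind; split_ifs <;> norm_num

lemma ind_le {n k : ℕ} (j : Fin k) (i : Fin n) (z : TState n k) : ind j i z ≤ 1 := by
  unfold ind; split_ifs <;> norm_num

lemma wt_nonneg {n k : ℕ} (j : Fin k) (z : TState n k) : 0 ≤ wt j z :=
  Finset.sum_nonneg fun i _ => ind_nonneg j i z

lemma wt_le {n k : ℕ} (j : Fin k) (z : TState n k) : wt j z ≤ n := by
  refine (Finset.sum_le_sum fun i _ => ind_le j i z).trans ?_
  simp

lemma wt_stp {n k : ℕ} (j : Fin k) (z : TState n k) (a b : Fin n) :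
    wt j (stp z a b) ≤ wt j z + ind j a z := by
  have : ∀ i, ind j i (stp z a b) ≤ ind j i z + if i = b then ind j a z else 0 := by
    intro i
    by_cases hi : i = b
    · subst hi
      have : ∀ x y : ZMod 2, (if x + y = 1 then (1:ℝ) else 0) ≤
          (if x = 1 then 1 else 0) + (if y = 1 then 1 else 0) := by
        intro x y
        have h : x + y = 1 → x = 1 ∨ y = 1 := by revert x y; decide
        split_ifs <;> simp_all
      simpa [ind, stp] using this (z i j) (z a j)
    · simp [ind, stp, hi]
  calc wt j (stp z a b) ≤ ∑ i, (ind j i z + if i = b then ind j a z else 0) :=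
        Finset.sum_le_sum fun i _ => this i
    _ = _ := by rw [Finset.sum_add_distrib]; simp [wt]

lemma Q_wt {n k : ℕ} (hn : 2 ≤ n) (j : Fin k) (z : TState n k) :
    ∑ w, transQ n k z w * wt j w ≤ (1 + 1 / (2 * n)) * wt j z := by
  rw [transQ_mulVec]
  have h2 : (2:ℝ) ≤ n := by exact_mod_cast hn
  have hpos : 0 < (n:ℝ) * ((n:ℝ) - 1) := by apply mul_pos <;> linarith
  have h : (∑ a : Fin n, ∑ b : Fin n, if a ≠ b then wt j (stp z a b) else 0) ≤
      ((n:ℝ) - 1) * (∑ a : Fin n, (wt j z + ind j a z)) := by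
    rw [← count_ne]
    refine Finset.sum_le_sum fun a _ => Finset.sum_le_sum fun b _ => ?_
    split_ifs
    · exact wt_stp j z a b
    · rfl
  have h' : (∑ a : Fin n, ∑ b : Fin n, if a ≠ b then wt j (stp z a b) else 0) /
      ((n:ℝ) * ((n:ℝ) - 1)) ≤ wt j z + wt j z / n := by
    rw [div_le_iff₀ hpos]
    refine h.trans (le_of_eq ?_)
    rw [Finset.sum_add_distrib]
    change _ * (_ + wt j z) = _
    have : (n:ℝ) ≠ 0 := by linarith
    simp
    field_simp
  have e : (1 + 1 / (2 * (n:ℝ))) * wt j z = 2⁻¹ * (wt j z + (wt j z + wt j z / n)) := by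
    have : (n:ℝ) ≠ 0 := by linarith
    field_simp
    ring
  rw [e]
  linarith

lemma Qpow_wt {n k : ℕ} (hn : 2 ≤ n) (j : Fin k) (t : ℕ) (z : TState n k) :
    ∑ w, (transQ n k ^ t) z w * wt j w ≤ (1 + 1 / (2 * n)) ^ t * wt j z := by
  induction t with
  | zero => simp [Matrix.one_apply]
  | succ t ih =>
    simp_rw [pow_succ, Matrix.mul_apply, Finset.sum_mul]
    rw [Finset.sum_comm]
    calc ∑ y, ∑ w, (transQ n k ^ t) z y * transQ n k y w * wt j w
        = ∑ y, (transQ n k ^ t) z y * ∑ w, transQ n k y w * wt j w := by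
          simp_rw [Finset.mul_sum, mul_assoc]
      _ ≤ ∑ y, (transQ n k ^ t) z y * ((1 + 1 / (2 * n)) * wt j y) :=
          Finset.sum_le_sum fun y _ => mul_le_mul_of_nonneg_left (Q_wt hn j y) (Qpow_nonneg _ _ _)
      _ = (1 + 1 / (2 * n)) * ∑ y, (transQ n k ^ t) z y * wt j y := by
          rw [Finset.mul_sum]; exact Finset.sum_congr rfl fun y _ => by ring
      _ ≤ (1 + 1 / (2 * n)) * ((1 + 1 / (2 * n)) ^ t * wt j z) :=
          mul_le_mul_of_nonneg_left ih (by positivity)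
      _ = _ := by ring

def x0 (n k : ℕ) : TState n k := fun i => if h : i.val < k then Pi.single ⟨i.val, h⟩ 1 else 0

lemma x0_mem {n k : ℕ} (hk : k ≤ n) : x0 n k ∈ Stief n k := by
  change _ = ⊤
  rw [← top_le_iff, ← (Pi.basisFun (ZMod 2) (Fin k)).span_eq, Submodule.span_le]
  rintro _ ⟨j, rfl⟩
  apply Submodule.subset_span
  exact ⟨⟨j.val, by omega⟩, by simp [x0]⟩

lemma x0_wt {n k : ℕ} (hk : k ≤ n) (j : Fin k) : wt j (x0 n k) = 1 := by
  have : ∀ i : Fin n, ind j i (x0 n k) = if i = ⟨j.val, by omega⟩ then 1 else 0 := by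
    intro i
    unfold ind x0
    by_cases h : i.val < k
    · simp only [h, dif_pos, Pi.single_apply]
      by_cases h' : i.val = j.val
      · simp [Fin.ext_iff, h']
      · simp [Fin.ext_iff, h', Ne.symm h']
    · have : i.val ≠ j.val := by omega
      simp [h, Fin.ext_iff, this]
  unfold wt
  simp [this]

lemma col_ne {n k : ℕ} {z : TState n k} (hz : z ∈ Stief n k) (j : Fin k) : ∃ i, z i j = 1 := by
  by_contra hc
  push Not at hc
  have h0 : ∀ i, z i j = 0 := by
    intro i
    have : ∀ x : ZMod 2, x ≠ 1 → x = 0 := by decide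
    exact this _ (hc i)
  have hle : Submodule.span (ZMod 2) (Set.range z) ≤
      LinearMap.ker (LinearMap.proj j : (Fin k → ZMod 2) →ₗ[ZMod 2] ZMod 2) := by
    rw [Submodule.span_le]
    rintro _ ⟨i, rfl⟩
    simpa using h0 i
  have hz' : Submodule.span (ZMod 2) (Set.range z) = ⊤ := hz
  rw [hz'] at hle
  have := hle (Submodule.mem_top (x := Pi.single j 1))
  simp at this

open Classical in
lemma half_card {n k : ℕ} (j : Fin k) (i : Fin n) :
    (univ.filter (fun z : TState n k => z ∈ Stief n k ∧ z i j ≠ 1)).card ≤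
    (univ.filter (fun z : TState n k => z ∈ Stief n k ∧ z i j = 1)).card := by
  let v : TState n k → Fin n → ZMod 2 := fun z => Function.update (fun l => z l j) i 0
  let sel : (Fin n → ZMod 2) → Fin n := fun u => if h : ∃ l, u l = 1 then h.choose else i
  have hv : ∀ z a, v (stp z a i) = v z := by
    intro z a
    ext l
    by_cases hl : l = i
    · subst hl; simp [v]
    · simp [v, stp, hl]
  have hsel : ∀ z, z ∈ Stief n k → z i j ≠ 1 → sel (v z) ≠ i ∧ z (sel (v z)) j = 1 := by
    intro z hz hi
    obtain ⟨l, hl⟩ := col_ne hz j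
    have hli : l ≠ i := by rintro rfl; exact hi hl
    have hex : ∃ l, v z l = 1 := ⟨l, by simp [v, hli, hl]⟩
    have hs : v z (sel (v z)) = 1 := by
      simp only [sel, dif_pos hex]
      exact hex.choose_spec
    have hne : sel (v z) ≠ i := by
      intro h
      rw [h] at hs
      simp [v] at hs
    refine ⟨hne, ?_⟩
    generalize sel (v z) = s at hs hne
    simpa [v, hne] using hs
  refine Finset.card_le_card_of_injOn (fun z => stp z (sel (v z)) i) ?_ ?_
  · intro z hz
    simp only [Finset.coe_filter, Finset.mem_univ, true_and, Set.mem_ofPred_eq] at hz ⊢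
    obtain ⟨h1, h2⟩ := hsel z hz.1 hz.2
    refine ⟨stp_mem h1 hz.1, ?_⟩
    have h0 : z i j = 0 := by
      have : ∀ x : ZMod 2, x ≠ 1 → x = 0 := by decide
      exact this _ hz.2
    simp [stp, h0, h2]
  · intro z hz w hw hzw
    simp only [Finset.coe_filter, Finset.mem_univ, true_and, Set.mem_ofPred_eq] at hz hw
    obtain ⟨h1, -⟩ := hsel z hz.1 hz.2
    obtain ⟨h2, -⟩ := hsel w hw.1 hw.2
    have e : v z = v w := by
      rw [← hv z (sel (v z)), ← hv w (sel (v w))]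
      exact congrArg v hzw
    simp only at hzw
    rw [← e] at hzw
    rw [← stp_stp z h1, hzw, stp_stp w h1]

lemma unif_ind {n k : ℕ} {x : TState n k} (hx : x ∈ Stief n k) (j : Fin k) (i : Fin n) :
    1 / 2 ≤ ∑ z, unifOn (Stief n k) z * ind j i z := by
  classical
  have hc := stief_card_pos hx
  have h1 : ∑ z, unifOn (Stief n k) z * ind j i z =
      (Nat.card (Stief n k) : ℝ)⁻¹ *
        (univ.filter (fun z : TState n k => z ∈ Stief n k ∧ z i j = 1)).card := by
    rw [mul_comm, ← nsmul_eq_mul, ← Finset.sum_const, Finset.sum_filter]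
    refine Finset.sum_congr rfl fun z _ => ?_
    unfold unifOn ind
    by_cases a : z ∈ Stief n k <;> by_cases b : z i j = 1 <;> simp [a, b]
  rw [h1, inv_mul_eq_div, div_le_div_iff₀ (by norm_num) hc, stief_card_eq]
  have h2 := half_card (n := n) (k := k) j i
  have h3 : (univ.filter (fun z : TState n k => z ∈ Stief n k)).card =
    (univ.filter (fun z : TState n k => z ∈ Stief n k ∧ z i j = 1)).card +
    (univ.filter (fun z : TState n k => z ∈ Stief n k ∧ z i j ≠ 1)).card := by
    rw [← Finset.card_filter_add_card_filter_not (fun z : TState n k => z i j = 1),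
      Finset.filter_filter, Finset.filter_filter]
  have h4 : ((univ.filter (fun z : TState n k => z ∈ Stief n k)).card : ℝ) ≤
    2 * (univ.filter (fun z : TState n k => z ∈ Stief n k ∧ z i j = 1)).card := by
    rw [h3]; push_cast
    have : ((univ.filter (fun z : TState n k => z ∈ Stief n k ∧ z i j ≠ 1)).card : ℝ) ≤
      (univ.filter (fun z : TState n k => z ∈ Stief n k ∧ z i j = 1)).card := by exact_mod_cast h2
    linarith
  linarith

lemma bound1 {n k : ℕ} (hn : 16 ≤ n) (hk1 : 1 ≤ k) (hk : k ≤ n) (t : ℕ)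
    (ht : ∀ x ∈ Stief n k, tvDist ((transQ n k ^ t) x) (unifOn (Stief n k)) ≤ 1 / 4) :
    (n:ℝ) * Real.log n ≤ t := by
  have hn2 : 2 ≤ n := by omega
  have hnR : (16:ℝ) ≤ n := by exact_mod_cast hn
  let j : Fin k := ⟨0, hk1⟩
  have hm := x0_mem hk
  have h1 := tv_test ((transQ n k ^ t) (x0 n k)) (unifOn (Stief n k)) (fun z => wt j z / n)
    (by rw [Qpow_sum hn2, unif_sum hm])
    (fun z => ⟨div_nonneg (wt_nonneg _ _) (by positivity),
      (div_le_one (by linarith)).mpr (wt_le _ _)⟩)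
  have h2 := ht _ hm
  have h3 := Qpow_wt hn2 j t (x0 n k)
  rw [x0_wt hk, mul_one] at h3
  have h4 : (n:ℝ) / 2 ≤ ∑ z, unifOn (Stief n k) z * wt j z := by
    unfold wt
    simp_rw [Finset.mul_sum]
    rw [Finset.sum_comm]
    calc (n:ℝ) / 2 = ∑ i : Fin n, (1/2 : ℝ) := by simp; ring
      _ ≤ _ := Finset.sum_le_sum fun i _ => unif_ind hm j i
  simp_rw [← mul_div_assoc, ← Finset.sum_div] at h1
  have h5 : (n:ℝ) / 4 ≤ (1 + 1 / (2 * n)) ^ t := by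
    have : (∑ z, unifOn (Stief n k) z * wt j z - ∑ z, (transQ n k ^ t) (x0 n k) z * wt j z) / n
        ≤ 1 / 4 := by rw [sub_div]; linarith
    rw [div_le_iff₀ (by linarith)] at this
    linarith
  have h6 : (1 + 1 / (2 * (n:ℝ))) ^ t ≤ Real.exp (t / (2 * n)) := by
    have := Real.add_one_le_exp (1 / (2 * (n:ℝ)))
    calc _ ≤ (Real.exp (1 / (2 * (n:ℝ)))) ^ t :=
          pow_le_pow_left₀ (by positivity) (by linarith) t
      _ = _ := by rw [← Real.exp_nat_mul]; congr 1; ring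
  have h7 : Real.log ((n:ℝ)/4) ≤ t / (2 * n) := by
    rw [Real.log_le_iff_le_exp (by linarith)]; linarith
  have h8 : Real.log n ≤ 2 * Real.log ((n:ℝ)/4) := by
    have : 2 * Real.log ((n:ℝ)/4) = Real.log (((n:ℝ)/4)^2) := by rw [Real.log_pow]; norm_num
    rw [this]
    apply Real.log_le_log (by linarith)
    nlinarith
  rw [le_div_iff₀ (by linarith)] at h7
  nlinarith

open Classical in
lemma supp_card {n k : ℕ} (hn : 2 ≤ n) (t : ℕ) (x : TState n k) :
    (univ.filter (fun w => (transQ n k ^ t) x w ≠ 0)).card ≤ (n * n) ^ t := by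
  induction t with
  | zero =>
    rw [pow_zero (n * n), Finset.card_le_one]
    intro a ha b hb
    simp [Matrix.one_apply] at ha hb
    rw [← ha, ← hb]
  | succ t ih =>
    let f : TState n k → Fin n × Fin n → TState n k := fun y p =>
      if p.1 = p.2 then y else stp y p.1 p.2
    have hsub : (univ.filter (fun w => (transQ n k ^ (t+1)) x w ≠ 0)) ⊆
        (univ.filter (fun w => (transQ n k ^ t) x w ≠ 0)).biUnion
          (fun y => univ.image (f y)) := by
      intro w hw
      simp only [Finset.mem_filter, Finset.mem_univ, true_and] at hw
      rw [pow_succ, Matrix.mul_apply] at hw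
      obtain ⟨y, -, hy⟩ := Finset.exists_ne_zero_of_sum_ne_zero hw
      simp only [Finset.mem_biUnion, Finset.mem_filter, Finset.mem_univ, true_and, Finset.mem_image]
      refine ⟨y, left_ne_zero_of_mul hy, ?_⟩
      rcases transQ_support (right_ne_zero_of_mul hy) with rfl | ⟨a, b, hab, rfl⟩
      · exact ⟨(⟨0, by omega⟩, ⟨0, by omega⟩), by simp [f]⟩
      · exact ⟨(a, b), by simp [f, hab]⟩
    refine (Finset.card_le_card hsub).trans ?_
    rw [pow_succ]
    refine (Finset.card_biUnion_le_card_mul _ _ (n * n) ?_).trans (Nat.mul_le_mul_right _ ih)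
    intro y _
    refine Finset.card_image_le.trans ?_
    simp

lemma stief_card_lower {n k : ℕ} (hk : k ≤ n) : 2 ^ ((n - 1) * k) ≤ Nat.card (Stief n k) := by
  have h1 := card_linearIndependent (K := ZMod 2) (V := Fin n → ZMod 2) (k := k) (by simpa using hk)
  have h2 : 2 ^ ((n - 1) * k) ≤ Nat.card { s : Fin k → (Fin n → ZMod 2) // LinearIndependent (ZMod 2) s } := by
    rw [h1, pow_mul]
    simp only [Module.finrank_fintype_fun_eq_card, Fintype.card_fin, ZMod.card]
    rw [← Fin.prod_const]
    refine Finset.prod_le_prod' fun i _ => ?_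
    have hi : i.val ≤ n - 1 := by omega
    have := Nat.pow_le_pow_right (show 2 > 0 by norm_num) hi
    have e : 2 ^ n = 2 ^ (n - 1) * 2 := by rw [← pow_succ]; congr 1; omega
    omega
  refine h2.trans ?_
  refine Nat.card_le_card_of_injective
    (fun s => ⟨fun i j => s.1 j i, ?_⟩ : _ → Stief n k) ?_
  · have hs := s.2
    change Submodule.span _ _ = ⊤
    let M : Matrix (Fin k) (Fin n) (ZMod 2) := Matrix.of s.1
    have hr : M.rank = k := by
      have := LinearIndependent.rank_matrix (M := M) hs
      simpa using this
    rw [← Matrix.rank_transpose, Matrix.rank_eq_finrank_span_row] at hr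
    apply Submodule.eq_top_of_finrank_eq
    simp only [Module.finrank_fintype_fun_eq_card, Fintype.card_fin]
    exact hr
  · intro s t hst
    ext j i
    have := congrArg (fun z : Stief n k => z.1 i j) hst
    exact this

lemma bound2 {n k : ℕ} (hn : 16 ≤ n) (hk1 : 1 ≤ k) (hk : k ≤ n) (t : ℕ)
    (ht : ∀ x ∈ Stief n k, tvDist ((transQ n k ^ t) x) (unifOn (Stief n k)) ≤ 1 / 4) :
    (1/8) * ((n:ℝ) * k / Real.log (Real.exp 1 * n)) ≤ t := by
  classical
  have hn2 : 2 ≤ n := by omega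
  have hnR : (16:ℝ) ≤ n := by exact_mod_cast hn
  have hkR : (1:ℝ) ≤ k := by exact_mod_cast hk1
  have hm := x0_mem hk
  have hc := stief_card_pos hm
  let A := univ.filter (fun w => (transQ n k ^ t) (x0 n k) w ≠ 0)
  -- test function: complement of the support
  have h1 := tv_test ((transQ n k ^ t) (x0 n k)) (unifOn (Stief n k))
    (fun z => if (transQ n k ^ t) (x0 n k) z ≠ 0 then 0 else 1)
    (by rw [Qpow_sum hn2, unif_sum hm])
    (fun z => by split_ifs <;> norm_num)
  have h2 := ht _ hm
  have h3 : ∑ z, (transQ n k ^ t) (x0 n k) z *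
      (if (transQ n k ^ t) (x0 n k) z ≠ 0 then (0:ℝ) else 1) = 0 := by
    refine Finset.sum_eq_zero fun z _ => ?_
    split_ifs with h
    · simp
    · push Not at h; simp [h]
  have h4 : 1 - (Nat.card (Stief n k) : ℝ)⁻¹ * A.card ≤ ∑ z, unifOn (Stief n k) z *
      (if (transQ n k ^ t) (x0 n k) z ≠ 0 then (0:ℝ) else 1) := by
    refine le_trans (le_of_eq (congrArg (fun r => r - (Nat.card (Stief n k) : ℝ)⁻¹ * A.card)
      (unif_sum hm).symm)) ?_
    rw [mul_comm, ← nsmul_eq_mul, ← Finset.sum_const, Finset.sum_filter,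
      ← Finset.sum_sub_distrib]
    refine Finset.sum_le_sum fun z _ => ?_
    have : unifOn (Stief n k) z ≤ (Nat.card (Stief n k) : ℝ)⁻¹ := by
      unfold unifOn; split_ifs
      · rfl
      · positivity
    split_ifs <;> linarith
  have h5 : (3/4) * (Nat.card (Stief n k) : ℝ) ≤ A.card := by
    have : 3/4 ≤ (Nat.card (Stief n k) : ℝ)⁻¹ * A.card := by linarith
    rwa [inv_mul_eq_div, le_div_iff₀ hc] at this
  have h6 : (A.card : ℝ) ≤ ((n:ℝ) * n) ^ t := by exact_mod_cast supp_card hn2 t (x0 n k)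
  have h7 : (2:ℝ) ^ ((n-1)*k) ≤ (Nat.card (Stief n k) : ℝ) := by exact_mod_cast stief_card_lower hk
  have h8 : (2:ℝ)⁻¹ * (2:ℝ) ^ ((n-1)*k) ≤ ((n:ℝ) * n) ^ t := by
    have : (0:ℝ) < (2:ℝ) ^ ((n-1)*k) := by positivity
    linarith
  have h9 := Real.log_le_log (by positivity) h8
  rw [Real.log_mul (by norm_num) (by positivity), Real.log_inv, Real.log_pow, Real.log_pow,
    Real.log_mul (by positivity) (by positivity)] at h9
  have hl2 := Real.log_two_gt_d9
  push_cast [Nat.cast_sub (show 1 ≤ n by omega)] at h9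
  have hlog : Real.log (Real.exp 1 * n) = 1 + Real.log n := by
    rw [Real.log_mul (by positivity) (by positivity), Real.log_exp]
  have hlp : 0 ≤ Real.log n := Real.log_nonneg (by linarith)
  have h10 : (n:ℝ) * k / 2 ≤ ((n:ℝ) - 1) * k - 1 := by nlinarith
  have h11 : (n:ℝ) * k / 4 ≤ t * (Real.log n + Real.log n) := by nlinarith
  rw [hlog, ← mul_div_assoc, div_le_iff₀ (by linarith)]
  have : (0:ℝ) ≤ t := by positivity
  nlinarith

theorem stmt1 :
    ∃ c : ℝ, 0 < c ∧ ∃ N : ℕ, ∀ n : ℕ, N ≤ n → ∀ k : ℕ, 1 ≤ k → k ≤ n →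
      c * max ((n : ℝ) * Real.log n) ((n : ℝ) * k / Real.log (Real.exp 1 * n)) ≤
        (mixTime (transQ n k) (unifOn (Stief n k)) (Stief n k) : ℝ) := by
  refine ⟨1/8, by norm_num, 16, fun n hn k hk1 hk => mix_bound (by omega) _ fun t ht => ?_⟩
  rw [mul_max_of_nonneg _ _ (by norm_num)]
  have hnR : (16:ℝ) ≤ n := by exact_mod_cast hn
  have hlp : 0 ≤ (n:ℝ) * Real.log n := mul_nonneg (by linarith) (Real.log_nonneg (by linarith))
  exact max_le (by linarith [bound1 hn hk1 hk t ht]) (bound2 hn hk1 hk t ht)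
end
end

section
/- There is a universal constant C < ∞ such that the following holds. Let K be a Markov kernel on a finite set E, reversible with respect to a probability measure ρ with ρ(x) > 0 for all x, and suppose Var_ρ(f) ≤ C_P · E_K^ρ(f,f) for all real functions f (Poincaré constant at most C_P). Then for every real function f, Ent_ρ(f²) ≤ C · C_P · log(1/ρ_*) · E_K^ρ(f,f), where ρ_* = min_{x∈E} ρ(x). -/
open Finset

noncomputable section

/-- `Ent_ρ(g) = ρ(g log g) − ρ(g) log ρ(g)` for a weight `ρ` and nonnegative `g`. -/
def ent {E : Type*} [Fintype E] (ρ g : E → ℝ) : ℝ :=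
  (∑ x, ρ x * g x * Real.log (g x)) - (∑ x, ρ x * g x) * Real.log (∑ x, ρ x * g x)

/-- Variance of `f` under the weight `ρ`. -/
def var {E : Type*} [Fintype E] (ρ f : E → ℝ) : ℝ :=
  (∑ x, ρ x * (f x) ^ 2) - (∑ x, ρ x * f x) ^ 2

/-- Dirichlet form `E_K^ρ(f,f) = (1/2) Σ_{x,y} ρ(x) K(x,y) (f(x)−f(y))²`. -/
def dirichlet {E : Type*} [Fintype E] (ρ : E → ℝ) (K : E → E → ℝ) (f : E → ℝ) : ℝ :=
  (1 / 2) * ∑ x, ∑ y, ρ x * K x y * (f x - f y) ^ 2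

theorem aux_phi (s L : ℝ) (hL : Real.log 2 ≤ L) (hs : s ≠ 0) (h : 1 < (s-1)^2 → Real.log ((s-1)^2) ≤ L) :
    s^2 * Real.log (s^2) - s^2 + 1 ≤ 14 * L * (s-1)^2 := by
  have h2 := Real.log_two_gt_d9
  have hu := sq_nonneg (s-1)
  have hLu : 0.69 * (s-1)^2 ≤ L * (s-1)^2 := mul_le_mul_of_nonneg_right (by linarith) hu
  rcases le_or_gt ((s-1)^2) 1 with h1 | h1
  · have hs1 : |s-1| ≤ 1 := by rwa [← sq_le_one_iff_abs_le_one]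
    rw [abs_le] at hs1
    have hs0 : 0 < s := lt_of_le_of_ne (by linarith) (Ne.symm hs)
    have := Real.log_le_sub_one_of_pos hs0
    have h3 : Real.log (s^2) ≤ 2 * (s-1) := by
      rw [Real.log_pow]; push_cast; linarith
    have h4 : s^2 * Real.log (s^2) ≤ s^2 * (2 * (s-1)) :=
      mul_le_mul_of_nonneg_left h3 (sq_nonneg s)
    have h5 : (s-1)^2 * (s - 1) ≤ (s-1)^2 * 1 := mul_le_mul_of_nonneg_left hs1.2 hu
    nlinarith
  · have h3 := h h1
    have ha : 1 < |s-1| := by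
      rw [← sq_abs] at h1
      nlinarith [abs_nonneg (s-1)]
    have h4 : s^2 ≤ 4 * (s-1)^2 := by
      rcases lt_abs.1 ha with h | h <;> nlinarith
    have h5 : Real.log (s^2) ≤ 3 * L := by
      have h6 : Real.log (s^2) ≤ Real.log (4 * (s-1)^2) := Real.log_le_log (by positivity) h4
      rw [Real.log_mul (by norm_num) (by linarith)] at h6
      have : Real.log 4 = 2 * Real.log 2 := by
        rw [show (4:ℝ) = 2^2 by norm_num, Real.log_pow]; push_cast; rfl
      linarith
    have h7 : s^2 * Real.log (s^2) ≤ s^2 * (3 * L) := mul_le_mul_of_nonneg_left h5 (sq_nonneg s)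
    have h8 : s^2 * (3 * L) ≤ 4 * (s-1)^2 * (3*L) := mul_le_mul_of_nonneg_right h4 (by linarith)
    nlinarith [sq_nonneg s]

theorem aux_phi' (f m L : ℝ) (hL : Real.log 2 ≤ L) (hm : m ≠ 0)
    (h : (f-m)^2 ≤ m^2 * Real.exp L) :
    f^2 * Real.log (f^2) - f^2 * Real.log (m^2) - f^2 + m^2 ≤ 14 * L * (f-m)^2 := by
  have h2 := Real.log_two_gt_d9
  have hm2 : 0 < m^2 := by positivity
  by_cases hf : f = 0
  · subst hf
    simp
    nlinarith
  have key := aux_phi (f/m) L hL (div_ne_zero hf hm) (by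
    intro h1
    rw [Real.log_le_iff_le_exp (by linarith)]
    rw [show f/m - 1 = (f-m)/m by field_simp, div_pow, div_le_iff₀ hm2]
    linarith)
  rw [show f/m - 1 = (f-m)/m by field_simp, div_pow, div_pow,
    Real.log_div (by positivity) (by positivity)] at key
  have := mul_le_mul_of_nonneg_left key hm2.le
  calc f^2 * Real.log (f^2) - f^2 * Real.log (m^2) - f^2 + m^2
      = m^2 * (f^2 / m^2 * (Real.log (f^2) - Real.log (m^2)) - f^2 / m^2 + 1) := by
        generalize Real.log (f^2) = a
        generalize Real.log (m^2) = b
        field_simp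
    _ ≤ m^2 * (14 * L * ((f-m)^2 / m^2)) := this
    _ = 14 * L * (f-m)^2 := by field_simp

theorem aux_ent {E : Type} [Fintype E] (ρ f : E → ℝ) (r L : ℝ) (hr : 0 < r) (hrx : ∀ x, r ≤ ρ x)
    (h1 : ∑ x, ρ x = 1) (hL : Real.log 2 ≤ L) (hLr : Real.exp L = 1 / r) :
    ent ρ (fun x => f x ^ 2) ≤ 14 * L * var ρ f := by
  have h2 := Real.log_two_gt_d9
  have hρ : ∀ x, 0 < ρ x := fun x => hr.trans_le (hrx x)
  set m := ∑ x, ρ x * f x with hm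
  set A := ∑ x, ρ x * f x ^ 2 with hA
  have hV : var ρ f = A - m^2 := rfl
  have hV' : ∑ x, ρ x * (f x - m)^2 = A - m^2 := by
    have : ∀ x, ρ x * (f x - m)^2 = ρ x * f x ^2 - 2 * m * (ρ x * f x) + m^2 * ρ x := by
      intro x; ring
    simp_rw [this, sum_add_distrib, sum_sub_distrib, ← mul_sum, h1, ← hm, ← hA]
    ring
  have hVnn : 0 ≤ A - m^2 := by
    rw [← hV']; exact sum_nonneg fun x _ => mul_nonneg (hρ x).le (sq_nonneg _)
  have hpt : ∀ g : E → ℝ, ∀ x, g x ^ 2 ≤ (∑ y, ρ y * g y ^ 2) * Real.exp L := by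
    intro g x
    have h3 : ρ x * g x ^ 2 ≤ ∑ y, ρ y * g y ^ 2 :=
      single_le_sum (f := fun y => ρ y * g y ^ 2)
        (fun y _ => mul_nonneg (hρ y).le (sq_nonneg _)) (mem_univ x)
    rw [hLr, mul_one_div, le_div_iff₀ hr]
    nlinarith [mul_le_mul_of_nonneg_right (hrx x) (sq_nonneg (g x))]
  have hent : ent ρ (fun x => f x ^ 2) = ∑ x, ρ x * f x ^ 2 * Real.log (f x ^ 2) - A * Real.log A := rfl
  rw [hent, hV]
  rcases le_or_gt (m^2) (A - m^2) with hc | hc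
  · have h4 : ∑ x, ρ x * f x ^ 2 * Real.log (f x ^ 2) ≤ ∑ x, ρ x * f x ^ 2 * (Real.log A + L) := by
      refine sum_le_sum fun x _ => ?_
      by_cases hf : f x = 0
      · simp [hf]
      refine mul_le_mul_of_nonneg_left ?_ (mul_nonneg (hρ x).le (sq_nonneg _))
      have h5 := hpt f x
      have hf2 : 0 < f x ^ 2 := by positivity
      have hApos : 0 < A := by
        by_contra hn
        have := mul_nonpos_of_nonpos_of_nonneg (not_lt.1 hn) (Real.exp_pos L).le
        linarith
      have := Real.log_le_log hf2 h5
      rwa [Real.log_mul hApos.ne' (Real.exp_pos L).ne', Real.log_exp] at this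
    rw [← sum_mul, ← hA] at h4
    have : A * L ≤ 2 * (A - m^2) * L := mul_le_mul_of_nonneg_right (by linarith) (by linarith)
    have : 0 ≤ (A - m^2) * L := mul_nonneg hVnn (by linarith)
    nlinarith
  · have hm0 : m ≠ 0 := by
      rintro h; rw [h] at hc hVnn; norm_num at hc hVnn; linarith
    have hm2 : 0 < m^2 := by positivity
    have hApos : 0 < A := by linarith
    have h4 : ∑ x, ρ x * (f x^2 * Real.log (f x^2) - f x^2 * Real.log (m^2) - f x^2 + m^2)
        ≤ ∑ x, ρ x * (14 * L * (f x-m)^2) := by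
      refine sum_le_sum fun x _ => mul_le_mul_of_nonneg_left ?_ (hρ x).le
      refine aux_phi' _ _ _ hL hm0 ?_
      have := hpt (fun x => f x - m) x
      simp only [hV'] at this
      exact this.trans (mul_le_mul_of_nonneg_right hc.le (Real.exp_pos L).le)
    have e1 : ∑ x, ρ x * (14 * L * (f x-m)^2) = 14 * L * (A - m^2) := by
      rw [← hV', mul_sum]; exact sum_congr rfl fun x _ => by ring
    have e2 : ∑ x, ρ x * (f x^2 * Real.log (f x^2) - f x^2 * Real.log (m^2) - f x^2 + m^2)
        = ∑ x, ρ x * f x ^ 2 * Real.log (f x ^ 2) - A * Real.log (m^2) - A + m^2 := by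
      have : ∀ x, ρ x * (f x^2 * Real.log (f x^2) - f x^2 * Real.log (m^2) - f x^2 + m^2)
        = ρ x * f x ^ 2 * Real.log (f x ^ 2) - Real.log (m^2) * (ρ x * f x^2) - ρ x * f x^2 + m^2 * ρ x := by
        intro x; ring
      simp_rw [this, sum_add_distrib, sum_sub_distrib, ← mul_sum, h1, ← hA]
      ring
    rw [e1, e2] at h4
    have h5 := Real.log_le_sub_one_of_pos (div_pos hm2 hApos)
    rw [Real.log_div hm2.ne' hApos.ne'] at h5
    have h6 := mul_le_mul_of_nonneg_left h5 hApos.le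
    have h7 : A * (m^2 / A - 1) = m^2 - A := by field_simp
    linarith

theorem stmt2 :
    ∃ C : ℝ, 0 < C ∧
      ∀ (E : Type) [Fintype E] [Nonempty E] (K : E → E → ℝ) (ρ : E → ℝ) (CP : ℝ),
        (∀ x, 0 < ρ x) → (∑ x, ρ x) = 1 →
        (∀ x y, 0 ≤ K x y) → (∀ x, (∑ y, K x y) = 1) →
        (∀ x y, ρ x * K x y = ρ y * K y x) →
        (∀ f : E → ℝ, var ρ f ≤ CP * dirichlet ρ K f) →
        ∀ f : E → ℝ,
          ent ρ (fun x => (f x) ^ 2) ≤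
            C * CP * Real.log (1 / ⨅ x, ρ x) * dirichlet ρ K f := by
  refine ⟨14, by norm_num, ?_⟩
  intro E _ _ K ρ CP hρ h1 hK hK1 hrev hP f
  have hbdd : BddBelow (Set.range ρ) := (Set.finite_range ρ).bddBelow
  obtain ⟨x₀, hx₀⟩ := exists_eq_ciInf_of_finite (f := ρ)
  have hrx : ∀ x, (⨅ x, ρ x) ≤ ρ x := fun x => ciInf_le hbdd x
  have hr : 0 < ⨅ x, ρ x := hx₀ ▸ hρ x₀
  generalize (⨅ x, ρ x) = r at *
  rcases subsingleton_or_nontrivial E with hE | hE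
  · have hu : ∀ g : E → ℝ, ∑ x, g x = g x₀ := fun g => Fintype.sum_subsingleton g x₀
    rw [hu] at h1
    have : r = 1 := by rw [← hx₀, h1]
    simp [ent, hu, h1, this]
  · obtain ⟨y, hy⟩ := exists_ne x₀
    have h3 : ρ x₀ + ρ y ≤ 1 := by
      classical
      rw [← h1, ← sum_pair hy.symm]
      exact sum_le_sum_of_subset_of_nonneg (subset_univ _) fun i _ _ => (hρ i).le
    have h4 : r ≤ 1/2 := by linarith [hrx y]
    have hL : Real.log 2 ≤ Real.log (1/r) := by
      apply Real.log_le_log (by norm_num)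
      rw [le_div_iff₀ hr]; linarith
    have h5 := aux_ent ρ f r _ hr hrx h1 hL (Real.exp_log (by positivity))
    have h6 := mul_le_mul_of_nonneg_left (hP f)
      (show 0 ≤ 14 * Real.log (1/r) by linarith [Real.log_two_gt_d9])
    nlinarith
end
end

section
/- Let P be a coordinate-replacement kernel on X = S^N with fibre kernels K_i(x_{−i}), and let G ⊆ X. Suppose there is γ > 0 such that, for every coordinate i and every configuration x_{−i} whose i-fibre {x^{i,u} : u ∈ S} intersects G, the fibre kernel K_i(x_{−i}) has spectral gap at least γ with respect to the uniform measure on S (i.e. Var(φ) ≤ (1/γ)·E_{K_i(x_{−i})}(φ,φ) for all φ: S → ℝ). Then there is a universal constant C < ∞ such that every nonnegative F: X → ℝ with support contained in G satisfies Ent_μ(F²) ≤ C · (N · log|S| / γ) · E_P^μ(F,F). -/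
open Finset

noncomputable section

/-- The uniform weight on a finite type. -/
def unif (E : Type*) [Fintype E] : E → ℝ := fun _ => (Fintype.card E : ℝ)⁻¹

/-- unnormalised entropy -/
def DD {E : Type*} [Fintype E] (g : E → ℝ) : ℝ :=
  (∑ x, g x * Real.log (g x)) - (∑ x, g x) * Real.log (∑ x, g x)
    + (∑ x, g x) * Real.log (Fintype.card E)

theorem ent_eq_DD {E : Type*} [Fintype E] [Nonempty E] (g : E → ℝ) :
    ent (unif E) g = (Fintype.card E : ℝ)⁻¹ * DD g := by
  unfold ent unif DD
  have hc : (Fintype.card E : ℝ) ≠ 0 := by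
    exact_mod_cast Fintype.card_ne_zero
  have h1 : ∑ x, (Fintype.card E : ℝ)⁻¹ * g x * Real.log (g x)
      = (Fintype.card E : ℝ)⁻¹ * ∑ x, g x * Real.log (g x) := by
    rw [Finset.mul_sum]; exact Finset.sum_congr rfl fun x _ => by ring
  rw [h1, ← Finset.mul_sum]
  by_cases h : ∑ x, g x = 0
  · rw [h]; simp
  · rw [Real.log_mul (inv_ne_zero hc) h, Real.log_inv]; ring

theorem gibbs_pt (a b : ℝ) (ha : 0 ≤ a) (hb : 0 ≤ b) (h : b = 0 → a = 0) :
    a * Real.log b + (a - b) ≤ a * Real.log a := by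
  rcases ha.eq_or_lt with h0 | h0
  · subst h0; simp; exact hb
  · have hb' : 0 < b := lt_of_le_of_ne hb (fun e => h0.ne' (h e.symm))
    have := Real.log_le_sub_one_of_pos (div_pos hb' h0)
    rw [Real.log_div hb'.ne' h0.ne'] at this
    have h2 := mul_le_mul_of_nonneg_left this h0.le
    have : a * (b / a - 1) = b - a := by field_simp
    nlinarith

theorem DD_convex {E T : Type*} [Fintype E] [Fintype T] (g : T → E → ℝ)
    (hg : ∀ s x, 0 ≤ g s x) :
    DD (fun x => ∑ s, g s x) ≤ ∑ s, DD (g s) := by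
  set m : E → ℝ := fun x => ∑ s, g s x with hm
  set M : ℝ := ∑ x, m x with hM
  have hm0 : ∀ x, 0 ≤ m x := fun x => Finset.sum_nonneg fun s _ => hg s x
  have hmz : ∀ s x, m x = 0 → g s x = 0 := fun s x h =>
    (Finset.sum_eq_zero_iff_of_nonneg (fun s _ => hg s x)).1 h s (Finset.mem_univ _)
  have hsw : M = ∑ s, ∑ x, g s x := by rw [hM, hm]; exact Finset.sum_comm
  have key : ∀ s, (∑ x, g s x * Real.log (m x)) - (∑ x, g s x) * Real.log M
      + (∑ x, g s x) * Real.log (Fintype.card E) ≤ DD (g s) := by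
    intro s
    unfold DD
    set Gs := ∑ x, g s x with hGs
    have hGs0 : 0 ≤ Gs := Finset.sum_nonneg fun x _ => hg s x
    have hM0 : 0 ≤ M := Finset.sum_nonneg fun x _ => hm0 x
    have pt : ∀ x, g s x * Real.log (m x) + g s x * Real.log Gs - g s x * Real.log M
        + (g s x - Gs * m x / M) ≤ g s x * Real.log (g s x) := by
      intro x
      by_cases h0 : g s x = 0
      · rw [h0]
        have : 0 ≤ Gs * m x / M := div_nonneg (mul_nonneg hGs0 (hm0 x)) hM0
        simp; exact this
      · have hmx : m x ≠ 0 := fun h => h0 (hmz s x h)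
        have hGx : Gs ≠ 0 := fun h =>
          h0 ((Finset.sum_eq_zero_iff_of_nonneg (fun x _ => hg s x)).1 h x (Finset.mem_univ _))
        have hMx : M ≠ 0 := fun h =>
          hmx ((Finset.sum_eq_zero_iff_of_nonneg (fun x _ => hm0 x)).1 h x (Finset.mem_univ _))
        have := gibbs_pt (g s x) (Gs * m x / M) (hg s x)
          (div_nonneg (mul_nonneg hGs0 (hm0 x)) hM0)
          (fun h => absurd h (div_ne_zero (mul_ne_zero hGx hmx) hMx))
        rw [Real.log_div (mul_ne_zero hGx hmx) hMx, Real.log_mul hGx hmx] at this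
        linarith
    have hs := Finset.sum_le_sum fun x (_ : x ∈ Finset.univ) => pt x
    simp only [Finset.sum_add_distrib, Finset.sum_sub_distrib, ← Finset.sum_mul,
      ← Finset.sum_div, ← Finset.mul_sum] at hs
    rw [← hGs, ← hM] at hs
    have : Gs * M / M ≤ Gs := by
      by_cases h : M = 0
      · rw [h]; simpa using hGs0
      · rw [mul_div_assoc, div_self h, mul_one]
    linarith
  have hs := Finset.sum_le_sum fun s (_ : s ∈ Finset.univ) => key s
  refine le_trans (le_of_eq ?_) hs
  unfold DD
  simp only [Finset.sum_add_distrib, Finset.sum_sub_distrib, ← Finset.sum_mul]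
  rw [← hsw]
  congr 2
  rw [Finset.sum_comm]
  refine Finset.sum_congr rfl fun x _ => ?_
  rw [← Finset.sum_mul]

theorem sum_fin_cons_aux {S : Type*} [Fintype S] (N : ℕ) (f : (Fin (N+1) → S) → ℝ) :
    ∑ x, f x = ∑ y : Fin N → S, ∑ s : S, f (Fin.cons s y) := by
  rw [← (Fin.consEquiv (fun _ : Fin (N+1) => S)).sum_comp, Fintype.sum_prod_type,
    Finset.sum_comm]
  rfl

theorem tensor {S : Type*} [Fintype S] [DecidableEq S] [Nonempty S] (N : ℕ) :
    ∀ g : (Fin N → S) → ℝ, (∀ x, 0 ≤ g x) →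
      DD g ≤ ∑ i, ∑ x, (Fintype.card S : ℝ)⁻¹ * DD (fun u => g (Function.update x i u)) := by
  have hc : (Fintype.card S : ℝ) ≠ 0 := by exact_mod_cast Fintype.card_ne_zero
  have hc0 : (0:ℝ) ≤ (Fintype.card S : ℝ)⁻¹ := by positivity
  induction N with
  | zero =>
    intro g _
    simp [DD]
  | succ N ih =>
    intro g hg
    have h1 : DD g = ∑ y : Fin N → S, DD (fun s => g (Fin.cons s y))
        + DD (fun y : Fin N → S => ∑ s, g (Fin.cons s y)) := by
      unfold DD
      simp only [sum_fin_cons_aux, Finset.sum_add_distrib, Finset.sum_sub_distrib, ← Finset.sum_mul,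
        Fintype.card_fun, Fintype.card_fin, Nat.cast_pow, Real.log_pow]
      push_cast
      ring
    have h2 := ih (fun y : Fin N → S => ∑ s, g (Fin.cons s y))
      (fun y => Finset.sum_nonneg fun s _ => hg _)
    have h3 : ∀ i (y : Fin N → S),
        (Fintype.card S : ℝ)⁻¹ * DD (fun u => ∑ s, g (Fin.cons s (Function.update y i u)))
        ≤ ∑ s, (Fintype.card S : ℝ)⁻¹ * DD (fun u => g (Fin.cons s (Function.update y i u))) := by
      intro i y
      rw [← Finset.mul_sum]
      exact mul_le_mul_of_nonneg_left
        (DD_convex (fun s u => g (Fin.cons s (Function.update y i u))) (fun _ _ => hg _)) hc0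
    have h4 := h2.trans (Finset.sum_le_sum fun i _ => Finset.sum_le_sum fun y _ => h3 i y)
    rw [Fin.sum_univ_succ, h1]
    refine add_le_add (le_of_eq ?_) (h4.trans (le_of_eq ?_))
    · rw [sum_fin_cons_aux]
      refine Finset.sum_congr rfl fun y _ => ?_
      simp only [Fin.update_cons_zero, Finset.sum_const, Finset.card_univ, nsmul_eq_mul]
      field_simp
    · refine Finset.sum_congr rfl fun i _ => ?_
      rw [sum_fin_cons_aux]
      simp only [Fin.cons_update]

theorem pt_ineq (s L : ℝ) (hs : 0 < s) (hL : 1/2 ≤ L) (h : Real.log s ≤ L) :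
    s^2 * (2 * Real.log s) - s^2 + 1 ≤ 10 * L * (s-1)^2 := by
  by_cases h2 : s ≤ 2
  · have := Real.log_le_sub_one_of_pos hs
    have h3 : s^2 * (2 * Real.log s) ≤ s^2 * (2 * (s-1)) := by gcongr
    have h4 : (s-1)^2 * (2*s+1) ≤ (s-1)^2 * (10 * L) := by
      apply mul_le_mul_of_nonneg_left _ (sq_nonneg _); linarith
    nlinarith
  · push Not at h2
    have h3 : s^2 * (2 * Real.log s) ≤ s^2 * (2 * L) := by gcongr
    have h4 : L * s^2 ≤ L * (4 * (s-1)^2) := by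
      apply mul_le_mul_of_nonneg_left _ (by linarith); nlinarith
    have h5 : 0 ≤ L * (s-1)^2 := mul_nonneg (by linarith) (sq_nonneg _)
    nlinarith

theorem fibre_ineq {S : Type*} [Fintype S] [Nonempty S] (φ : S → ℝ) (h : ∀ u, 0 ≤ φ u) :
    ent (unif S) (fun u => (φ u)^2) ≤
      10 * Real.log (Fintype.card S) * var (unif S) φ := by
  set n : ℝ := (Fintype.card S : ℝ) with hn
  have hn0 : 0 < n := by rw [hn]; exact_mod_cast Fintype.card_pos
  by_cases h1 : Fintype.card S = 1
  · rw [ent_eq_DD]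
    obtain ⟨a, ha⟩ := Fintype.card_eq_one_iff.1 h1
    haveI : Unique S := ⟨⟨a⟩, ha⟩
    simp [DD, hn]
  have hL : 1/2 ≤ Real.log n := by
    have : (2:ℝ) ≤ n := by
      rw [hn]; exact_mod_cast (by have := Fintype.card_pos (α := S); omega : 2 ≤ Fintype.card S)
    have := Real.log_le_log (by norm_num) this
    linarith [Real.log_two_gt_d9]
  set m : ℝ := n⁻¹ * ∑ u, φ u with hm
  have hsum : ∑ u, φ u = n * m := by rw [hm]; field_simp
  have hm0 : 0 ≤ m := mul_nonneg (by positivity) (Finset.sum_nonneg fun u _ => h u)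
  have hvar : var (unif S) φ = n⁻¹ * ∑ u, (φ u - m)^2 := by
    have e : ∑ u, (φ u - m)^2 = ∑ u, (φ u)^2 - n * m^2 := by
      have : ∀ u, (φ u - m)^2 = (φ u)^2 - 2 * m * φ u + m^2 := fun u => by ring
      simp only [this, Finset.sum_add_distrib, Finset.sum_sub_distrib, ← Finset.mul_sum, hsum,
        Finset.sum_const, Finset.card_univ, nsmul_eq_mul, ← hn]
      ring
    unfold var unif
    rw [← Finset.mul_sum, ← Finset.mul_sum, ← hn, e, ← hm]
    field_simp
  rcases hm0.eq_or_lt with hz | hmp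
  · have hz' : ∑ u, φ u = 0 := by rw [hsum, ← hz, mul_zero]
    have : ∀ u, φ u = 0 := fun u =>
      (Finset.sum_eq_zero_iff_of_nonneg (fun u _ => h u)).1 hz' u (Finset.mem_univ _)
    simp [ent, var, this]
  rw [ent_eq_DD, hvar, ← hn]
  have : 10 * Real.log n * (n⁻¹ * ∑ u, (φ u - m)^2)
    = n⁻¹ * (10 * Real.log n * ∑ u, (φ u - m)^2) := by ring
  rw [this]
  refine mul_le_mul_of_nonneg_left ?_ (by positivity)
  have pt : ∀ u, (φ u)^2 * Real.log ((φ u)^2) - (φ u)^2 * (2 * Real.log m) - (φ u)^2 + m^2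
      ≤ 10 * Real.log n * (φ u - m)^2 := by
    intro u
    rcases (h u).eq_or_lt with h0 | h0
    · rw [← h0]; nlinarith [sq_nonneg m]
    · have hle : φ u / m ≤ n := by
        rw [div_le_iff₀ hmp, ← hsum]
        exact Finset.single_le_sum (f := φ) (fun u _ => h u) (Finset.mem_univ u)
      have hp := div_pos h0 hmp
      have := pt_ineq (φ u / m) (Real.log n) hp hL (Real.log_le_log hp hle)
      rw [Real.log_div h0.ne' hmp.ne'] at this
      have h5 := mul_le_mul_of_nonneg_left this (sq_nonneg m)
      rw [Real.log_pow]
      have e1 : m^2 * ((φ u / m)^2 * (2 * (Real.log (φ u) - Real.log m)) - (φ u / m)^2 + 1)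
        = (φ u)^2 * (2 * (Real.log (φ u) - Real.log m)) - (φ u)^2 + m^2 := by field_simp
      have e2 : m^2 * (10 * Real.log n * (φ u / m - 1)^2)
        = 10 * Real.log n * (φ u - m)^2 := by field_simp
      rw [e1, e2] at h5
      push_cast
      linarith
  have hs := Finset.sum_le_sum fun u (_ : u ∈ Finset.univ) => pt u
  simp only [Finset.sum_add_distrib, Finset.sum_sub_distrib, ← Finset.sum_mul, ← Finset.mul_sum,
    Finset.sum_const, Finset.card_univ, nsmul_eq_mul, ← hn] at hs
  unfold DD
  rw [← hn]
  set Q := ∑ u, (φ u)^2 with hQ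
  have hg := gibbs_pt Q (n * m^2) (Finset.sum_nonneg fun u _ => sq_nonneg _) (by positivity)
    (fun e => absurd e (by positivity))
  rw [Real.log_mul hn0.ne' (by positivity), Real.log_pow] at hg
  push_cast at hg
  linarith

theorem resample {S : Type*} [Fintype S] [DecidableEq S] {N : ℕ} (i : Fin N)
    (h : (Fin N → S) → ℝ) :
    ∑ x, ∑ v, h (Function.update x i v) = (Fintype.card S : ℝ) * ∑ x, h x := by
  have e : ∑ p : (Fin N → S) × S, h (Function.update p.1 i p.2)
      = ∑ p : (Fin N → S) × S, h p.1 := by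
    refine Fintype.sum_bijective
      (fun p : (Fin N → S) × S => (Function.update p.1 i p.2, p.1 i)) ?_ _ _ (fun p => rfl)
    apply Function.Involutive.bijective
    rintro ⟨x, v⟩
    simp
  rw [Fintype.sum_prod_type, Fintype.sum_prod_type] at e
  rw [e, Finset.mul_sum]
  simp

theorem stmt3 :
    ∃ C : ℝ, 0 < C ∧
      ∀ (S : Type) [Fintype S] [DecidableEq S] [Nonempty S] (N : ℕ), 1 ≤ N →
      ∀ (K : Fin N → (Fin N → S) → Matrix S S ℝ) (P : Matrix (Fin N → S) (Fin N → S) ℝ)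
        (G : Set (Fin N → S)) (γ : ℝ),
        0 < γ →
        -- each fibre kernel is a Markov kernel on S, reversible wrt uniform measure
        (∀ i x u v, 0 ≤ K i x u v) →
        (∀ i x u, (∑ v, K i x u v) = 1) →
        (∀ i x u v, K i x u v = K i x v u) →
        -- the fibre kernel only depends on the coordinates off `i`
        (∀ i (x y : Fin N → S), (∀ j, j ≠ i → x j = y j) → K i x = K i y) →
        -- coordinate-replacement structure of `P`
        (∀ x y, P x y =
          (1 / (N : ℝ)) * ∑ i, ∑ u, (if y = Function.update x i u then K i x (x i) u else 0)) →
        -- `P` is reversible with respect to the uniform measure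
        (∀ x y, P x y = P y x) →
        -- fibres meeting `G` have spectral gap at least `γ`
        (∀ i (x : Fin N → S), (∃ u, Function.update x i u ∈ G) →
          ∀ φ : S → ℝ, var (unif S) φ ≤ (1 / γ) * dirichlet (unif S) (K i x) φ) →
        ∀ F : (Fin N → S) → ℝ, (∀ x, 0 ≤ F x) → (∀ x, F x ≠ 0 → x ∈ G) →
          ent (unif (Fin N → S)) (fun x => (F x) ^ 2) ≤
            C * ((N : ℝ) * Real.log (Fintype.card S) / γ) *
              dirichlet (unif (Fin N → S)) P F := by
  refine ⟨10, by norm_num, ?_⟩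
  intro S _ _ _ N hN K P G γ hγ hK0 _ _ hKd hP _ hgap F hF hFG
  have hN0 : (N : ℝ) ≠ 0 := by exact_mod_cast (by omega : N ≠ 0)
  have hc : (Fintype.card S : ℝ) ≠ 0 := by exact_mod_cast Fintype.card_ne_zero
  have hL : 0 ≤ Real.log (Fintype.card S) := Real.log_natCast_nonneg _
  have hfib : ∀ i (x : Fin N → S),
      (Fintype.card S : ℝ)⁻¹ * DD (fun u => (F (Function.update x i u))^2) ≤
      10 * Real.log (Fintype.card S) / γ *
        dirichlet (unif S) (K i x) (fun u => F (Function.update x i u)) := by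
    intro i x
    rw [← ent_eq_DD]
    by_cases hx : ∃ u, Function.update x i u ∈ G
    · refine (fibre_ineq (fun u => F (Function.update x i u)) (fun _ => hF _)).trans ?_
      refine (mul_le_mul_of_nonneg_left (hgap i x hx _) (by positivity)).trans (le_of_eq ?_)
      ring
    · have : ∀ u, F (Function.update x i u) = 0 := fun u => by
        by_contra h0
        exact hx ⟨u, hFG _ h0⟩
      simp [ent, dirichlet, this]
  have hdir : ∀ i, ∑ x, dirichlet (unif S) (K i x) (fun u => F (Function.update x i u))
      = (1/2) * ∑ x, ∑ u, K i x (x i) u * (F x - F (Function.update x i u))^2 := by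
    intro i
    have hr := resample i (fun x => ∑ u, K i x (x i) u * (F x - F (Function.update x i u))^2)
    simp only [Function.update_self, Function.update_idem] at hr
    have hKu : ∀ x v, K i (Function.update x i v) = K i x := fun x v =>
      hKd i _ _ (fun j hj => Function.update_of_ne hj _ _)
    simp only [hKu] at hr
    unfold dirichlet unif
    simp only [mul_assoc, ← Finset.mul_sum]
    rw [hr]
    field_simp
  have hDP : dirichlet (unif (Fin N → S)) P F = (Fintype.card (Fin N → S) : ℝ)⁻¹ * (1 / (N:ℝ)) *
      ∑ i, ∑ x, dirichlet (unif S) (K i x) (fun u => F (Function.update x i u)) := by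
    simp only [hdir]
    have hx : ∀ x, ∑ y, P x y * (F x - F y)^2
        = (1 / (N:ℝ)) * ∑ i, ∑ u, K i x (x i) u * (F x - F (Function.update x i u))^2 := by
      intro x
      simp only [hP, mul_assoc, ← Finset.mul_sum, Finset.sum_mul]
      congr 1
      rw [Finset.sum_comm]
      refine Finset.sum_congr rfl fun i _ => ?_
      rw [Finset.sum_comm]
      refine Finset.sum_congr rfl fun u _ => ?_
      simp [ite_mul]
    unfold dirichlet unif
    simp only [mul_assoc, ← Finset.mul_sum, hx]
    rw [Finset.sum_comm]
    ring
  rw [ent_eq_DD, hDP]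
  have ht := tensor N (fun x => (F x)^2) (fun x => sq_nonneg _)
  have h5 := ht.trans (Finset.sum_le_sum fun i _ => Finset.sum_le_sum fun x _ => hfib i x)
  simp only [← Finset.mul_sum] at h5
  refine (mul_le_mul_of_nonneg_left h5 (by positivity)).trans (le_of_eq ?_)
  field_simp
end
end

section
/- Let K be a reversible substochastic kernel on a finite probability space (E,ρ) and set δ = ρ(1 − K1) (the average killing rate). Assume Ent_ρ(f²) ≤ A·E_K^ρ(f,f) for all nonnegative f. Let T_t = e^{t(K−I)} and u_t = T_t u_0 for any nonnegative u_0. Then for all t ≥ 0: H_ρ(u_t) ≤ e^{−t/A}·H_ρ(u_0) + A·δ·ρ(u_0)·(1 − e^{−t/A}). -/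
open Finset

noncomputable section

/-- Dirichlet form `⟨f, (I−K) f⟩_ρ` for a (possibly substochastic) kernel. -/
def dirichletSub {E : Type*} [Fintype E] (ρ : E → ℝ) (K : Matrix E E ℝ) (f : E → ℝ) : ℝ :=
  ∑ x, ρ x * f x * (f x - ∑ y, K x y * f y)

/-- `H_ρ(u) = ρ[u log(u/ρ(u))]`, with the convention `0 · log 0 = 0`. -/
def Hent {E : Type*} [Fintype E] (ρ u : E → ℝ) : ℝ :=
  ∑ x, ρ x * u x * Real.log (u x / (∑ y, ρ y * u y))

/-- `u_t = e^{t(K−I)} u₀ = e^{−t} Σ_j (t^j/j!) K^j u₀`. -/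
def heatSub {E : Type*} [Fintype E] [DecidableEq E] (K : Matrix E E ℝ) (t : ℝ) (u0 : E → ℝ) :
    E → ℝ :=
  fun x => ∑' j : ℕ, Real.exp (-t) * t ^ j / (Nat.factorial j) * ((K ^ j).mulVec u0 x)

theorem s5_bil {E : Type} [Fintype E] (ρ : E → ℝ) (K : Matrix E E ℝ)
    (hrev : ∀ x y, ρ x * K x y = ρ y * K y x) (a b : E → ℝ) :
    ∑ x, ρ x * b x * (a x - ∑ y, K x y * a y) =
      ∑ x, ρ x * (1 - ∑ y, K x y) * (a x * b x) +
        1 / 2 * ∑ x, ∑ y, ρ x * K x y * ((a x - a y) * (b x - b y)) := by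
  have h1 : ∑ x, ρ x * b x * (a x - ∑ y, K x y * a y) =
      ∑ x, ρ x * (1 - ∑ y, K x y) * (a x * b x) +
        ∑ x, ∑ y, ρ x * K x y * ((a x - a y) * b x) := by
    rw [← Finset.sum_add_distrib]
    refine Finset.sum_congr rfl fun x _ => ?_
    have : ∑ y, ρ x * K x y * ((a x - a y) * b x) =
        ρ x * b x * (a x * ∑ y, K x y - ∑ y, K x y * a y) := by
      rw [Finset.mul_sum, ← Finset.sum_sub_distrib, Finset.mul_sum]
      exact Finset.sum_congr rfl fun y _ => by ring
    rw [this]; ring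
  have h2 : ∑ x, ∑ y, ρ x * K x y * ((a x - a y) * b x) =
      ∑ x, ∑ y, ρ x * K x y * ((a x - a y) * (-b y)) := by
    rw [Finset.sum_comm]
    refine Finset.sum_congr rfl fun x _ => Finset.sum_congr rfl fun y _ => ?_
    rw [hrev y x]; ring
  have h3 : ∑ x, ∑ y, ρ x * K x y * ((a x - a y) * (b x - b y)) =
      ∑ x, ∑ y, ρ x * K x y * ((a x - a y) * b x) +
      ∑ x, ∑ y, ρ x * K x y * ((a x - a y) * (-b y)) := by
    simp only [← Finset.sum_add_distrib]
    exact Finset.sum_congr rfl fun x _ => Finset.sum_congr rfl fun y _ => by ring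
  rw [h1, h3, ← h2]; ring

theorem s5_pw_aux (p q : ℝ) (hq : 0 < q) (hpq : q ≤ p) :
    (p - q) * (p - q) ≤ (p ^ 2 - q ^ 2) * (Real.log (p ^ 2) - Real.log (q ^ 2)) := by
  have hp : 0 < p := lt_of_lt_of_le hq hpq
  have h := Real.one_sub_inv_le_log_of_pos (div_pos hp hq)
  rw [Real.log_div hp.ne' hq.ne', inv_div] at h
  rw [Real.log_pow, Real.log_pow]
  have h2 : (p - q) / p ≤ Real.log p - Real.log q := by
    rw [sub_div, div_self hp.ne']; exact h
  have h3 : (p - q) ≤ p * (Real.log p - Real.log q) := by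
    rw [div_le_iff₀ hp] at h2; linarith
  have h4 : 0 ≤ Real.log p - Real.log q := le_trans (div_nonneg (by linarith) hp.le) h2
  push_cast
  have h5 : (p - q) * (p - q) ≤ (p - q) * (p * (Real.log p - Real.log q)) :=
    mul_le_mul_of_nonneg_left h3 (by linarith)
  have h6 : 0 ≤ (p - q) * ((p + 2 * q) * (Real.log p - Real.log q)) :=
    mul_nonneg (by linarith) (mul_nonneg (by linarith) h4)
  nlinarith

theorem s5_pw (a b : ℝ) (ha : 0 < a) (hb : 0 < b) (c : ℝ) :
    (√a - √b) * (√a - √b) ≤ (a - b) * ((Real.log a - c) - (Real.log b - c)) := by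
  have ha' := Real.sq_sqrt ha.le
  have hb' := Real.sq_sqrt hb.le
  rcases le_total (√b) (√a) with h | h
  · have := s5_pw_aux _ _ (Real.sqrt_pos.2 hb) h
    rw [ha', hb'] at this; linarith
  · have := s5_pw_aux _ _ (Real.sqrt_pos.2 ha) h
    rw [ha', hb'] at this; linarith

theorem s5_pw2 (a m : ℝ) (ha : 0 < a) (hm : 0 < m) :
    a - m ≤ a * (Real.log a - Real.log m) := by
  have h := Real.one_sub_inv_le_log_of_pos (div_pos ha hm)
  rw [Real.log_div ha.ne' hm.ne', inv_div] at h
  have := mul_le_mul_of_nonneg_left h ha.le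
  have e : a * (1 - m / a) = a - m := by field_simp
  linarith

theorem s5_key {E : Type} [Fintype E] (ρ : E → ℝ) (K : Matrix E E ℝ) (A : ℝ)
    (hρ : ∀ x, 0 ≤ ρ x)
    (hK : ∀ x y, 0 ≤ K x y) (hs : ∀ x, (∑ y, K x y) ≤ 1)
    (hrev : ∀ x y, ρ x * K x y = ρ y * K y x) (hA : 0 < A)
    (hLS : ∀ f : E → ℝ, (∀ x, 0 ≤ f x) →
        ent ρ (fun x => (f x) ^ 2) ≤ A * dirichletSub ρ K f)
    (u : E → ℝ) (hu : ∀ x, 0 < u x) (m : ℝ) (hm : 0 < m) :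
    ent ρ u ≤ A * (∑ x, ρ x * (Real.log (u x) - Real.log m) * (u x - ∑ y, K x y * u y) +
      (∑ x, ρ x * (1 - ∑ y, K x y)) * m) := by
  have h := hLS (fun x => √(u x)) (fun x => Real.sqrt_nonneg _)
  have e : (fun x => (√(u x)) ^ 2) = u := funext fun x => Real.sq_sqrt (hu x).le
  simp only [e] at h
  refine h.trans (mul_le_mul_of_nonneg_left ?_ hA.le)
  unfold dirichletSub
  rw [s5_bil ρ K hrev, s5_bil ρ K hrev u]
  have h1 : ∑ x, ∑ y, ρ x * K x y * ((√(u x) - √(u y)) * (√(u x) - √(u y))) ≤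
      ∑ x, ∑ y, ρ x * K x y * ((u x - u y) *
        ((Real.log (u x) - Real.log m) - (Real.log (u y) - Real.log m))) :=
    Finset.sum_le_sum fun x _ => Finset.sum_le_sum fun y _ =>
      mul_le_mul_of_nonneg_left (s5_pw _ _ (hu x) (hu y) _) (mul_nonneg (hρ x) (hK x y))
  have h2 : ∑ x, ρ x * (1 - ∑ y, K x y) * (√(u x) * √(u x)) ≤
      ∑ x, ρ x * (1 - ∑ y, K x y) * (u x * (Real.log (u x) - Real.log m)) +
      (∑ x, ρ x * (1 - ∑ y, K x y)) * m := by
    rw [Finset.sum_mul, ← Finset.sum_add_distrib]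
    refine Finset.sum_le_sum fun x _ => ?_
    rw [Real.mul_self_sqrt (hu x).le, ← mul_add]
    exact mul_le_mul_of_nonneg_left (by linarith [s5_pw2 _ m (hu x) hm])
      (mul_nonneg (hρ x) (by linarith [hs x]))
  linarith

theorem s5_Hent {E : Type} [Fintype E] (ρ u : E → ℝ) (hρ : ∀ x, 0 ≤ ρ x)
    (hu : ∀ x, 0 ≤ u x) : Hent ρ u = ent ρ u := by
  unfold Hent ent
  rw [Finset.sum_mul, ← Finset.sum_sub_distrib]
  refine Finset.sum_congr rfl fun x _ => ?_
  by_cases h0 : ρ x * u x = 0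
  · simp [h0]
  have hx : u x ≠ 0 := right_ne_zero_of_mul h0
  have hpos : 0 < ρ x * u x := lt_of_le_of_ne (mul_nonneg (hρ x) (hu x)) (Ne.symm h0)
  have hm : 0 < ∑ y, ρ y * u y :=
    lt_of_lt_of_le hpos (Finset.single_le_sum (f := fun y => ρ y * u y)
      (fun y _ => mul_nonneg (hρ y) (hu y)) (Finset.mem_univ x))
  rw [Real.log_div hx hm.ne']; ring

theorem s5_ent_cont {E : Type} [Fintype E] (ρ : E → ℝ) : Continuous (fun u : E → ℝ => ent ρ u) := by
  unfold ent
  simp only [mul_assoc]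
  refine Continuous.sub ?_ ?_
  · exact continuous_finsetSum _ fun x _ => continuous_const.mul
      (Real.continuous_mul_log.comp (continuous_apply x))
  · exact Real.continuous_mul_log.comp
      (continuous_finsetSum _ fun x _ => continuous_const.mul (continuous_apply x))

section s5norm
attribute [local instance] Matrix.linftyOpNormedAddCommGroup Matrix.linftyOpNormedSpace
  Matrix.linftyOpNormedRing Matrix.linftyOpNormedAlgebra

theorem s5_hasSum {E : Type} [Fintype E] [DecidableEq E] (K : Matrix E E ℝ) (t : ℝ) (u0 : E → ℝ)
    (x : E) : HasSum (fun j : ℕ => Real.exp (-t) * t ^ j / (Nat.factorial j) * ((K ^ j).mulVec u0 x))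
      (Real.exp (-t) * (NormedSpace.exp (t • K)).mulVec u0 x) := by
  have h := NormedSpace.exp_series_hasSum_exp' (𝕂 := ℝ) (t • K)
  let l : Matrix E E ℝ →ₗ[ℝ] ℝ :=
    { toFun := fun M => M.mulVec u0 x
      map_add' := fun M N => by simp [Matrix.add_mulVec]
      map_smul' := fun c M => by simp [Matrix.smul_mulVec] }
  have hl : Continuous l := l.continuous_of_finiteDimensional
  have h2 := (h.map l hl).mul_left (Real.exp (-t))
  refine h2.congr_fun ?_ |> id
  intro j
  simp [l, smul_pow, Matrix.smul_mulVec]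
  ring

theorem s5_heat_eq {E : Type} [Fintype E] [DecidableEq E] (K : Matrix E E ℝ) (t : ℝ) (u0 : E → ℝ) :
    heatSub K t u0 = fun x => Real.exp (-t) * (NormedSpace.exp (t • K)).mulVec u0 x :=
  funext fun x => (s5_hasSum K t u0 x).tsum_eq

theorem s5_heat_cont {E : Type} [Fintype E] [DecidableEq E] (K : Matrix E E ℝ) (t : ℝ) :
    Continuous (fun u0 : E → ℝ => heatSub K t u0) := by
  simp only [s5_heat_eq]
  refine continuous_pi fun x => continuous_const.mul ?_
  simp only [Matrix.mulVec, dotProduct]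
  fun_prop

theorem s5_heat_zero {E : Type} [Fintype E] [DecidableEq E] (K : Matrix E E ℝ) (u0 : E → ℝ) :
    heatSub K 0 u0 = u0 := by
  rw [s5_heat_eq]; simp

theorem s5_pow_nonneg {E : Type} [Fintype E] [DecidableEq E] (K : Matrix E E ℝ)
    (hK : ∀ x y, 0 ≤ K x y) (u0 : E → ℝ) (hu : ∀ x, 0 ≤ u0 x) (j : ℕ) :
    ∀ x, 0 ≤ (K ^ j).mulVec u0 x := by
  induction j with
  | zero => simpa using hu
  | succ j ih =>
    intro x
    rw [pow_succ', ← Matrix.mulVec_mulVec]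
    exact Finset.sum_nonneg fun y _ => mul_nonneg (hK x y) (ih y)

theorem s5_heat_lb {E : Type} [Fintype E] [DecidableEq E] (K : Matrix E E ℝ)
    (hK : ∀ x y, 0 ≤ K x y) (u0 : E → ℝ) (hu : ∀ x, 0 ≤ u0 x) (t : ℝ) (ht : 0 ≤ t) (x : E) :
    Real.exp (-t) * u0 x ≤ heatSub K t u0 x := by
  have h := s5_hasSum K t u0 x
  have h1 := le_hasSum h 0 (fun j _ => mul_nonneg (by positivity) (s5_pow_nonneg K hK u0 hu j x))
  rw [s5_heat_eq]
  simpa using h1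

theorem s5_heat_deriv {E : Type} [Fintype E] [DecidableEq E] (K : Matrix E E ℝ) (u0 : E → ℝ)
    (t : ℝ) (x : E) : HasDerivAt (fun s => heatSub K s u0 x)
      (-(heatSub K t u0 x - ∑ y, K x y * heatSub K t u0 y)) t := by
  simp only [s5_heat_eq]
  have h := hasDerivAt_exp_smul_const' (𝕂 := ℝ) K t
  let l : Matrix E E ℝ →ₗ[ℝ] ℝ :=
    { toFun := fun M => M.mulVec u0 x
      map_add' := fun M N => by simp [Matrix.add_mulVec]
      map_smul' := fun c M => by simp [Matrix.smul_mulVec] }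
  have h2 := (LinearMap.toContinuousLinearMap l).hasFDerivAt.comp_hasDerivAt t h
  have h3 : HasDerivAt (fun s : ℝ => Real.exp (-s)) (-Real.exp (-t)) t := by
    simpa using (hasDerivAt_neg t).exp
  have h4 : HasDerivAt (fun s : ℝ => (NormedSpace.exp (s • K)).mulVec u0 x)
      ((K * NormedSpace.exp (t • K)).mulVec u0 x) t := h2
  refine (h3.mul h4).congr_deriv ?_
  rw [← Matrix.mulVec_mulVec]
  have : (K.mulVec ((NormedSpace.exp (t • K)).mulVec u0)) x =
    ∑ y, K x y * (NormedSpace.exp (t • K)).mulVec u0 y := rfl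
  rw [this]
  have e : ∑ y, K x y * (Real.exp (-t) * (NormedSpace.exp (t • K)).mulVec u0 y) =
    Real.exp (-t) * ∑ y, K x y * (NormedSpace.exp (t • K)).mulVec u0 y := by
    rw [Finset.mul_sum]; exact Finset.sum_congr rfl fun y _ => by ring
  rw [e]; ring

end s5norm

theorem s5_pos {E : Type} [Fintype E] [DecidableEq E] (ρ : E → ℝ) (K : Matrix E E ℝ) (A : ℝ)
    (hρ : ∀ x, 0 ≤ ρ x) (hρ1 : (∑ x, ρ x) = 1)
    (hK : ∀ x y, 0 ≤ K x y) (hs : ∀ x, (∑ y, K x y) ≤ 1)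
    (hrev : ∀ x y, ρ x * K x y = ρ y * K y x) (hA : 0 < A)
    (hLS : ∀ f : E → ℝ, (∀ x, 0 ≤ f x) →
        ent ρ (fun x => (f x) ^ 2) ≤ A * dirichletSub ρ K f)
    (u0 : E → ℝ) (hu0 : ∀ x, 0 < u0 x) (t : ℝ) (ht : 0 ≤ t) :
    ent ρ (heatSub K t u0) ≤ Real.exp (-t / A) * ent ρ u0 +
            A * (∑ x, ρ x * (1 - ∑ y, K x y)) * (∑ x, ρ x * u0 x) *
              (1 - Real.exp (-t / A)) := by
  set δ := ∑ x, ρ x * (1 - ∑ y, K x y) with hδ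
  have hδ0 : 0 ≤ δ := Finset.sum_nonneg fun x _ => mul_nonneg (hρ x) (by linarith [hs x])
  have hpos : ∀ s : ℝ, 0 ≤ s → ∀ x, 0 < heatSub K s u0 x := fun s hs x =>
    lt_of_lt_of_le (mul_pos (Real.exp_pos _) (hu0 x))
      (s5_heat_lb K hK u0 (fun x => (hu0 x).le) s hs x)
  have hcont : Continuous (fun s => heatSub K s u0) := continuous_pi fun x =>
    continuous_iff_continuousAt.2 fun s => (s5_heat_deriv K u0 s x).continuousAt
  let m : ℝ → ℝ := fun s => ∑ x, ρ x * heatSub K s u0 x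
  let L : ℝ → E → ℝ := fun s x => heatSub K s u0 x - ∑ y, K x y * heatSub K s u0 y
  have hmpos : ∀ s, 0 ≤ s → 0 < m s := by
    intro s hs0
    obtain ⟨x, hx⟩ : ∃ x, 0 < ρ x := by
      by_contra hcon
      push Not at hcon
      have : ∑ x, ρ x ≤ 0 := Finset.sum_nonpos fun x _ => hcon x
      linarith
    exact Finset.sum_pos' (fun y _ => mul_nonneg (hρ y) (hpos s hs0 y).le)
      ⟨x, Finset.mem_univ x, mul_pos hx (hpos s hs0 x)⟩
  have hmd : ∀ s, HasDerivAt m (-∑ x, ρ x * L s x) s := by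
    intro s
    refine (HasDerivAt.fun_sum (u := Finset.univ) fun x _ =>
      (s5_heat_deriv K u0 s x).const_mul (ρ x)).congr_deriv ?_
    rw [← Finset.sum_neg_distrib]
    exact Finset.sum_congr rfl fun x _ => by simp only [L]; ring
  have hmd_nonneg : ∀ s, 0 ≤ s → 0 ≤ ∑ x, ρ x * L s x := by
    intro s hs0
    have h := s5_bil ρ K hrev (heatSub K s u0) (fun _ => 1)
    simp only [mul_one, sub_self, mul_zero, Finset.sum_const_zero, add_zero] at h
    simp only [L]
    rw [h]
    exact Finset.sum_nonneg fun x _ => mul_nonneg (mul_nonneg (hρ x) (by linarith [hs x]))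
      (hpos s hs0 x).le
  have hm_anti : AntitoneOn m (Set.Ici 0) := by
    refine antitoneOn_of_deriv_nonpos (convex_Ici 0)
      (fun s _ => (hmd s).continuousAt.continuousWithinAt)
      (fun s _ => (hmd s).differentiableAt.differentiableWithinAt) ?_
    intro s hs0
    rw [interior_Ici] at hs0
    rw [(hmd s).deriv]
    linarith [hmd_nonneg s (le_of_lt hs0)]
  have hm0 : m 0 = ∑ x, ρ x * u0 x := by simp only [m, s5_heat_zero]
  have hGd : ∀ s, 0 < s → HasDerivAt (fun s => ent ρ (heatSub K s u0))
      (-∑ x, ρ x * (Real.log (heatSub K s u0 x) - Real.log (m s)) * L s x) s := by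
    intro s hs0
    have h1 : HasDerivAt (fun s => ∑ x, ρ x * heatSub K s u0 x * Real.log (heatSub K s u0 x))
        (∑ x, ρ x * ((Real.log (heatSub K s u0 x) + 1) * (-(L s x)))) s := by
      simp only [mul_assoc]
      refine HasDerivAt.fun_sum (u := Finset.univ) fun x _ => HasDerivAt.const_mul (ρ x) ?_
      exact HasDerivAt.comp (h₂ := fun z : ℝ => z * Real.log z) s
        (Real.hasDerivAt_mul_log (hpos s hs0.le x).ne') (s5_heat_deriv K u0 s x)
    have h2 : HasDerivAt (fun s => m s * Real.log (m s))
        ((Real.log (m s) + 1) * (-∑ x, ρ x * L s x)) s :=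
      (Real.hasDerivAt_mul_log (hmpos s hs0.le).ne').comp s (hmd s)
    refine (h1.sub h2).congr_deriv ?_
    rw [← Finset.sum_neg_distrib, ← Finset.sum_neg_distrib, Finset.mul_sum,
      ← Finset.sum_sub_distrib]
    exact Finset.sum_congr rfl fun x _ => by ring
  have hexp : ∀ s, HasDerivAt (fun s : ℝ => Real.exp (s / A)) (Real.exp (s / A) * (1 / A)) s :=
    fun s => ((hasDerivAt_id s).div_const A).exp
  let F : ℝ → ℝ := fun s => Real.exp (s / A) * (ent ρ (heatSub K s u0) - A * δ * m 0)
  have hFd : ∀ s, 0 < s → HasDerivAt F (Real.exp (s / A) * (1 / A) *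
      (ent ρ (heatSub K s u0) - A * δ * m 0) + Real.exp (s / A) *
      (-∑ x, ρ x * (Real.log (heatSub K s u0 x) - Real.log (m s)) * L s x)) s :=
    fun s hs0 => (hexp s).mul ((hGd s hs0).sub_const _)
  have hF_anti : AntitoneOn F (Set.Ici 0) := by
    refine antitoneOn_of_deriv_nonpos (convex_Ici 0) ?_ ?_ ?_
    · refine Continuous.continuousOn ?_
      exact (continuous_iff_continuousAt.2 fun s => (hexp s).continuousAt).mul
        (((s5_ent_cont ρ).comp hcont).sub continuous_const)
    · intro s hs0
      rw [interior_Ici] at hs0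
      exact (hFd s hs0).differentiableAt.differentiableWithinAt
    · intro s hs0
      rw [interior_Ici] at hs0
      have hs1 : 0 < s := hs0
      rw [(hFd s hs0).deriv]
      have key := s5_key ρ K A hρ hK hs hrev hA hLS (heatSub K s u0) (hpos s hs1.le)
        (m s) (hmpos s hs1.le)
      have hmm : m s ≤ m 0 := hm_anti (Set.mem_Ici.2 le_rfl) (Set.mem_Ici.2 hs1.le) hs1.le
      set D := ∑ x, ρ x * (Real.log (heatSub K s u0 x) - Real.log (m s)) * L s x with hD
      have key2 : ent ρ (heatSub K s u0) ≤ A * (D + δ * m 0) :=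
        key.trans (mul_le_mul_of_nonneg_left
          (add_le_add le_rfl (mul_le_mul_of_nonneg_left hmm hδ0)) hA.le)
      have e : Real.exp (s / A) * (1 / A) * (ent ρ (heatSub K s u0) - A * δ * m 0) +
          Real.exp (s / A) * (-D) =
          Real.exp (s / A) * (1 / A) * (ent ρ (heatSub K s u0) - A * (D + δ * m 0)) := by
        field_simp; ring
      rw [e]
      exact mul_nonpos_of_nonneg_of_nonpos (by positivity) (by linarith)
  have hfin := hF_anti (Set.mem_Ici.2 le_rfl) (Set.mem_Ici.2 ht) ht
  simp only [F, s5_heat_zero, zero_div, Real.exp_zero, one_mul] at hfin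
  rw [← hm0]
  have h := mul_le_mul_of_nonneg_left hfin (Real.exp_pos (-t / A)).le
  rw [← mul_assoc, ← Real.exp_add, neg_div, neg_add_cancel, Real.exp_zero, one_mul] at h
  rw [neg_div]
  linarith

theorem stmt5 :
    ∀ (E : Type) [Fintype E] [DecidableEq E] (ρ : E → ℝ) (K : Matrix E E ℝ) (A : ℝ)
      (u0 : E → ℝ),
      -- (E, ρ) is a finite probability space
      (∀ x, 0 ≤ ρ x) → (∑ x, ρ x) = 1 →
      -- K is substochastic and reversible with respect to ρ
      (∀ x y, 0 ≤ K x y) → (∀ x, (∑ y, K x y) ≤ 1) →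
      (∀ x y, ρ x * K x y = ρ y * K y x) →
      0 < A →
      -- log-Sobolev inequality for the substochastic kernel
      (∀ f : E → ℝ, (∀ x, 0 ≤ f x) →
        ent ρ (fun x => (f x) ^ 2) ≤ A * dirichletSub ρ K f) →
      (∀ x, 0 ≤ u0 x) →
      ∀ t : ℝ, 0 ≤ t →
        Hent ρ (heatSub K t u0) ≤
          Real.exp (-t / A) * Hent ρ u0 +
            A * (∑ x, ρ x * (1 - ∑ y, K x y)) * (∑ x, ρ x * u0 x) *
              (1 - Real.exp (-t / A)) := by
  intro E _ _ ρ K A u0 hρ hρ1 hK hs hrev hA hLS hu0 t ht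
  have hnn : ∀ x, 0 ≤ heatSub K t u0 x := fun x =>
    le_trans (mul_nonneg (Real.exp_pos _).le (hu0 x)) (s5_heat_lb K hK u0 hu0 t ht x)
  rw [s5_Hent ρ _ hρ hnn, s5_Hent ρ _ hρ hu0]
  let v : ℝ → E → ℝ := fun ε x => u0 x + ε
  have hv : Continuous v := continuous_pi fun x => continuous_const.add continuous_id
  have hv0 : v 0 = u0 := funext fun x => add_zero _
  have hc1 : Continuous (fun ε => ent ρ (heatSub K t (v ε))) :=
    (s5_ent_cont ρ).comp ((s5_heat_cont K t).comp hv)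
  have hc3 : Continuous (fun ε => ∑ x, ρ x * v ε x) :=
    continuous_finsetSum _ fun x _ => continuous_const.mul ((continuous_apply x).comp hv)
  have hc2 : Continuous (fun ε => Real.exp (-t / A) * ent ρ (v ε) +
      A * (∑ x, ρ x * (1 - ∑ y, K x y)) * (∑ x, ρ x * v ε x) * (1 - Real.exp (-t / A))) :=
    (continuous_const.mul ((s5_ent_cont ρ).comp hv)).add
      ((continuous_const.mul hc3).mul continuous_const)
  have hlim := le_of_tendsto_of_tendsto
    (hc1.continuousAt.tendsto.mono_left (nhdsWithin_le_nhds (a := (0 : ℝ)) (s := Set.Ioi 0)))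
    (hc2.continuousAt.tendsto.mono_left (nhdsWithin_le_nhds (a := (0 : ℝ)) (s := Set.Ioi 0)))
    (by
      filter_upwards [self_mem_nhdsWithin] with ε hε
      exact s5_pos ρ K A hρ hρ1 hK hs hrev hA hLS (v ε)
        (fun x => add_pos_of_nonneg_of_pos (hu0 x) hε) t ht)
  simpa only [hv0] using hlim
end
end

section
/- Let ρ be a probability measure on a finite set E, let u ≥ 0 be a function on E, and set λ = u·ρ (a subprobability measure) and m = ρ(u). Then ‖λ − ρ‖_TV ≤ (1 − m) + sqrt(H_ρ(u)/2). -/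
open Finset

noncomputable section

theorem aux_deriv (v : ℝ) (hv : 0 < v) :
    HasDerivAt (fun v : ℝ => Real.log v - (5*v^2-4*v-1)/(2*v^2+4*v))
      ((v-1)^3/(v^2*(v+2)^2)) v := by
  have h0 : 2*v^2+4*v ≠ 0 := by positivity
  have hid := hasDerivAt_id v
  have hn : HasDerivAt (fun v : ℝ => 5*v^2-4*v-1) (10*v-4) v := by
    have := (((hid.pow 2).const_mul 5).sub (hid.const_mul 4)).sub_const 1
    refine this.congr_deriv ?_
    simp; ring
  have hd : HasDerivAt (fun v : ℝ => 2*v^2+4*v) (4*v+4) v := by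
    have := ((hid.pow 2).const_mul 2).add (hid.const_mul 4)
    refine this.congr_deriv ?_
    simp; ring
  refine ((Real.hasDerivAt_log hv.ne').sub (hn.div hd h0)).congr_deriv ?_
  have h2 : v + 2 ≠ 0 := by positivity
  have e : 2*v^2+4*v = 2*v*(v+2) := by ring
  rw [e]
  field_simp
  ring

theorem aux_log (v : ℝ) (hv : 0 < v) :
    (5*v^2-4*v-1)/(2*v^2+4*v) ≤ Real.log v := by
  set g : ℝ → ℝ := fun v : ℝ => Real.log v - (5*v^2-4*v-1)/(2*v^2+4*v) with hg
  have g1 : g 1 = 0 := by simp [hg]; norm_num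
  have key : 0 ≤ g v := by
    rw [← g1]
    rcases le_total v 1 with h | h
    · refine antitoneOn_of_deriv_nonpos (convex_Icc v 1) ?_ ?_ ?_ ⟨le_rfl, h⟩ ⟨h, le_rfl⟩ h
      · exact fun x hx => (aux_deriv x (hv.trans_le hx.1)).continuousAt.continuousWithinAt
      · intro x hx
        rw [interior_Icc] at hx
        exact (aux_deriv x (hv.trans hx.1)).differentiableAt.differentiableWithinAt
      · intro x hx
        rw [interior_Icc] at hx
        rw [(aux_deriv x (hv.trans hx.1)).deriv]
        apply div_nonpos_of_nonpos_of_nonneg _ (by positivity)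
        have : 0 ≤ (1-x)^3 := pow_nonneg (by linarith [hx.2]) 3
        nlinarith
    · refine monotoneOn_of_deriv_nonneg (convex_Icc 1 v) ?_ ?_ ?_ ⟨le_rfl, h⟩ ⟨h, le_rfl⟩ h
      · exact fun x hx => (aux_deriv x (one_pos.trans_le hx.1)).continuousAt.continuousWithinAt
      · intro x hx
        rw [interior_Icc] at hx
        exact (aux_deriv x (one_pos.trans hx.1)).differentiableAt.differentiableWithinAt
      · intro x hx
        rw [interior_Icc] at hx
        rw [(aux_deriv x (one_pos.trans hx.1)).deriv]
        apply div_nonneg _ (by positivity)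
        exact pow_nonneg (by linarith [hx.1]) 3
  simp only [hg] at key
  linarith

theorem aux_pt (v : ℝ) (hv : 0 ≤ v) :
    (v-1)^2 ≤ (2/3*(v+2)) * (v * Real.log v - v + 1) := by
  rcases hv.eq_or_lt with rfl | hv
  · norm_num
  have h := aux_log v hv
  rw [div_le_iff₀ (by positivity)] at h
  nlinarith

theorem aux_pinsker {E : Type*} [Fintype E] (ρ v : E → ℝ) (hρ : ∀ x, 0 ≤ ρ x)
    (h1 : ∑ x, ρ x = 1) (hv : ∀ x, 0 ≤ v x) (hm : ∑ x, ρ x * v x = 1) :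
    (∑ x, ρ x * |v x - 1|)^2 ≤ 2 * ∑ x, ρ x * v x * Real.log (v x) := by
  have hφ : ∀ x, 0 ≤ v x * Real.log (v x) - v x + 1 := fun x => by
    have := aux_pt (v x) (hv x)
    have h3 : 0 < 2/3*(v x+2) := by linarith [hv x]
    exact nonneg_of_mul_nonneg_right ((sq_nonneg _).trans this) h3
  have := Finset.sum_sq_le_sum_mul_sum_of_sq_le_mul univ (r := fun x => ρ x * |v x - 1|)
    (f := fun x => ρ x * (2/3*(v x+2))) (g := fun x => ρ x * (v x * Real.log (v x) - v x + 1))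
    (fun x _ => mul_nonneg (hρ x) (by linarith [hv x]))
    (fun x _ => mul_nonneg (hρ x) (hφ x))
    (fun x _ => by
      rw [mul_pow, sq_abs]
      nlinarith [mul_le_mul_of_nonneg_left (aux_pt (v x) (hv x)) (sq_nonneg (ρ x))])
  refine this.trans (le_of_eq ?_)
  have e1 : ∑ x, ρ x * (2/3*(v x+2)) = 2 := by
    have : ∑ x, ρ x * (2/3*(v x+2)) = 2/3 * ∑ x, ρ x * v x + 4/3 * ∑ x, ρ x := by
      rw [mul_sum, mul_sum, ← sum_add_distrib]
      exact sum_congr rfl fun x _ => by ring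
    rw [this, h1, hm]; norm_num
  have e2 : ∑ x, ρ x * (v x * Real.log (v x) - v x + 1) = ∑ x, ρ x * v x * Real.log (v x) := by
    have : ∑ x, ρ x * (v x * Real.log (v x) - v x + 1)
        = ∑ x, ρ x * v x * Real.log (v x) - ∑ x, ρ x * v x + ∑ x, ρ x := by
      rw [← sum_sub_distrib, ← sum_add_distrib]
      exact sum_congr rfl fun x _ => by ring
    rw [this, h1, hm]; ring
  rw [e1, e2]

theorem stmt6 :
    ∀ (E : Type) [Fintype E] (ρ u : E → ℝ),
      -- ρ is a probability measure on E
      (∀ x, 0 ≤ ρ x) → (∑ x, ρ x) = 1 →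
      -- u is nonnegative, and λ = u·ρ is a subprobability with mass m = ρ(u)
      (∀ x, 0 ≤ u x) → (∑ x, ρ x * u x) ≤ 1 →
      -- ‖λ − ρ‖_TV ≤ (1 − m) + sqrt(H_ρ(u)/2)
      (1 / 2) * (∑ x, |u x * ρ x - ρ x|) ≤
        (1 - ∑ x, ρ x * u x) + Real.sqrt (Hent ρ u / 2) := by
  intro E _ ρ u hρ h1 hu hm1
  have hm0 : 0 ≤ ∑ x, ρ x * u x := sum_nonneg fun x _ => mul_nonneg (hρ x) (hu x)
  unfold Hent
  generalize hm : ∑ x, ρ x * u x = m at *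
  rcases hm0.eq_or_lt with h0 | h0
  · have hz : ∀ x, ρ x * u x = 0 := fun x =>
      (sum_eq_zero_iff_of_nonneg (fun x _ => mul_nonneg (hρ x) (hu x))).1
        (hm.trans h0.symm) x (mem_univ x)
    have : ∑ x, |u x * ρ x - ρ x| = 1 := by
      rw [← h1]
      refine sum_congr rfl fun x _ => ?_
      rw [mul_comm, hz, zero_sub, abs_neg, abs_of_nonneg (hρ x)]
    rw [this, ← h0]
    have := Real.sqrt_nonneg ((∑ x, ρ x * u x * Real.log (u x / 0)) / 2)
    linarith
  · have hP := aux_pinsker ρ (fun x => u x / m) hρ h1 (fun x => div_nonneg (hu x) hm0) (by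
      simp_rw [← mul_div_assoc]
      rw [← sum_div, hm, div_self h0.ne'])
    set T := ∑ x, ρ x * |u x / m - 1| with hT
    have hH : ∑ x, ρ x * u x * Real.log (u x / m)
        = m * ∑ x, ρ x * (u x / m) * Real.log (u x / m) := by
      rw [mul_sum]
      refine sum_congr rfl fun x _ => ?_
      have : m * (ρ x * (u x / m) * Real.log (u x / m))
        = ρ x * (m * (u x / m)) * Real.log (u x / m) := by ring
      rw [this, mul_div_cancel₀ _ h0.ne']
    have hL : ∑ x, |u x * ρ x - ρ x| ≤ m * T + (1 - m) := by
      have : m * T + (1 - m) = ∑ x, (m * (ρ x * |u x / m - 1|) + (1 - m) * ρ x) := by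
        rw [sum_add_distrib, ← mul_sum, ← mul_sum, h1, mul_one]
      rw [this]
      refine sum_le_sum fun x _ => ?_
      have e : u x * ρ x - ρ x = m * (ρ x * (u x / m - 1)) + -((1 - m) * ρ x) := by
        field_simp; ring
      rw [e]
      refine (abs_add_le _ _).trans ?_
      rw [abs_neg, abs_mul, abs_mul, abs_mul, abs_of_nonneg (hρ x), abs_of_pos h0,
        abs_of_nonneg (sub_nonneg.2 hm1)]
    have hS : m * T / 2 ≤ Real.sqrt ((∑ x, ρ x * u x * Real.log (u x / m)) / 2) := by
      apply Real.le_sqrt_of_sq_le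
      rw [hH]
      generalize ∑ x, ρ x * (u x / m) * Real.log (u x / m) = K at hP
      have a := mul_le_mul_of_nonneg_left hP hm0
      have b : m * (m * T^2) ≤ 1 * (m * T^2) := mul_le_mul_of_nonneg_right hm1 (by positivity)
      nlinarith
    linarith
end
end

section
/- There are absolute constants ε₀ > 0 and c₀ > 0 such that for all sufficiently large n: if k ≤ ε₀·n, then π(G_tr^c) ≤ e^{−c₀·n} and μ(G_tr^c) ≤ e^{−c₀·n}. -/
open Finset

noncomputable section

/-- `S_ξ(z) = Σ_i (−1)^{ξ(z_i)}`. -/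
def Sxi {n k : ℕ} (ξ : Module.Dual (ZMod 2) (Fin k → ZMod 2)) (z : TState n k) : ℝ :=
  ∑ i, (-1 : ℝ) ^ ((ξ (z i)).val)

/-- The balance condition defining the good set `G_tr`, as a subset of `V^n`. -/
def Gtr (n k : ℕ) : Set (TState n k) :=
  {z | ∀ ξ : Module.Dual (ZMod 2) (Fin k → ZMod 2), ξ ≠ 0 → |Sxi ξ z| ≤ (n : ℝ) / 4}

lemma aux_sum {k : ℕ} (ξ : Module.Dual (ZMod 2) (Fin k → ZMod 2)) (hξ : ξ ≠ 0) (l : ℝ) :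
    ∑ v : Fin k → ZMod 2, Real.exp (l * (-1 : ℝ) ^ ((ξ v).val)) = 2 ^ k * Real.cosh l := by
  obtain ⟨v0, hv0⟩ : ∃ v, ξ v ≠ 0 := by
    by_contra! h
    exact hξ (LinearMap.ext h)
  have key : ∀ a b : ZMod 2, b ≠ 0 → Real.exp (l * (-1 : ℝ) ^ a.val)
      + Real.exp (l * (-1 : ℝ) ^ (a + b).val) = 2 * Real.cosh l := by
    intro a b hb
    have hb : b = 1 := by revert b; decide
    subst hb
    rw [Real.cosh_eq]
    have : a = 0 ∨ a = 1 := by revert a; decide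
    rcases this with rfl | rfl
    · have h1 : ((0 : ZMod 2) + 1).val = 1 := by decide
      rw [h1, ZMod.val_zero]
      norm_num
      ring
    · have h1 : ((1 : ZMod 2) + 1).val = 0 := by decide
      have h2 : (1 : ZMod 2).val = 1 := by decide
      rw [h1, h2]
      norm_num
      ring
  have h1 := Equiv.sum_comp (Equiv.addRight v0)
    (fun v : Fin k → ZMod 2 => Real.exp (l * (-1 : ℝ) ^ ((ξ v).val)))
  have h2 : ∑ v : Fin k → ZMod 2, (Real.exp (l * (-1 : ℝ) ^ ((ξ v).val))
      + Real.exp (l * (-1 : ℝ) ^ ((ξ (v + v0)).val))) = 2 ^ k * (2 * Real.cosh l) := by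
    have h3 : ∀ v : Fin k → ZMod 2, Real.exp (l * (-1 : ℝ) ^ ((ξ v).val))
      + Real.exp (l * (-1 : ℝ) ^ ((ξ (v + v0)).val)) = 2 * Real.cosh l := fun v => by
      rw [map_add]; exact key _ _ hv0
    rw [Finset.sum_congr rfl (fun v _ => h3 v)]
    simp [ZMod.card]
  rw [Finset.sum_add_distrib] at h2
  simp only [Equiv.coe_addRight] at h1
  linarith

lemma aux_mgf {n k : ℕ} (ξ : Module.Dual (ZMod 2) (Fin k → ZMod 2)) (hξ : ξ ≠ 0) (l : ℝ) :
    ∑ z : TState n k, Real.exp (l * Sxi ξ z) = (2 ^ k * Real.cosh l) ^ n := by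
  rw [← aux_sum ξ hξ l, Finset.sum_pow']
  simp only [Sxi, Finset.mul_sum, Real.exp_sum]
  simp

lemma aux_tail {n k : ℕ} (ξ : Module.Dual (ZMod 2) (Fin k → ZMod 2)) (hξ : ξ ≠ 0) :
    (Nat.card ↥{z : TState n k | ¬ |Sxi ξ z| ≤ (n : ℝ) / 4} : ℝ)
      ≤ ((2 : ℝ) ^ k) ^ n * (2 * Real.exp (-(n / 32 : ℝ))) := by
  classical
  rw [Nat.card_eq_fintype_card, Fintype.card_subtype]
  have hc : ∀ l : ℝ, l ^ 2 = 1 / 16 → (2 ^ k * Real.cosh l) ^ n ≤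
      ((2 : ℝ) ^ k) ^ n * Real.exp (n / 32 : ℝ) := by
    intro l hl
    rw [mul_pow]
    gcongr
    calc Real.cosh l ^ n ≤ Real.exp (l ^ 2 / 2) ^ n := by
          gcongr
          · exact Real.cosh_le_exp_half_sq l
      _ = _ := by rw [← Real.exp_nat_mul, hl]; congr 1; ring
  have h1 := (aux_mgf (n := n) ξ hξ (1/4)).le.trans (hc (1/4) (by norm_num))
  have h2 := (aux_mgf (n := n) ξ hξ (-(1/4))).le.trans (hc (-(1/4)) (by norm_num))
  have h3 : ((Finset.univ.filter
      (fun z : TState n k => z ∈ {z : TState n k | ¬ |Sxi ξ z| ≤ (n : ℝ) / 4})).card : ℝ)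
      * Real.exp (n / 16 : ℝ) ≤ ∑ z : TState n k, (Real.exp (1/4 * Sxi ξ z)
        + Real.exp (-(1/4) * Sxi ξ z)) := by
    rw [← nsmul_eq_mul, ← Finset.sum_const]
    refine (Finset.sum_le_sum ?_).trans (Finset.sum_le_sum_of_subset_of_nonneg
      (Finset.filter_subset _ _) (fun z _ _ => by positivity))
    intro z hz
    simp only [Set.mem_ofPred_eq, Finset.mem_filter, not_le] at hz
    rcases lt_abs.1 hz.2 with h | h
    · have : Real.exp (n / 16 : ℝ) ≤ Real.exp (1/4 * Sxi ξ z) := Real.exp_le_exp.2 (by linarith)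
      have := Real.exp_pos (-(1/4) * Sxi ξ z)
      linarith
    · have : Real.exp (n / 16 : ℝ) ≤ Real.exp (-(1/4) * Sxi ξ z) :=
        Real.exp_le_exp.2 (by linarith)
      have := Real.exp_pos (1/4 * Sxi ξ z)
      linarith
  rw [Finset.sum_add_distrib] at h3
  refine le_of_mul_le_mul_right (a := Real.exp (n / 16 : ℝ)) ?_ (Real.exp_pos _)
  refine (h3.trans (add_le_add h1 h2)).trans (le_of_eq ?_)
  have : Real.exp (n / 32 : ℝ) = Real.exp (-(n / 32 : ℝ)) * Real.exp (n / 16 : ℝ) := by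
    rw [← Real.exp_add]; congr 1; ring
  rw [this]; ring

lemma aux_union (n k : ℕ) :
    (Nat.card ↥((Gtr n k)ᶜ) : ℝ)
      ≤ 2 ^ k * (((2 : ℝ) ^ k) ^ n * (2 * Real.exp (-(n / 32 : ℝ)))) := by
  classical
  let e := (Pi.basisFun (ZMod 2) (Fin k)).toDualEquiv
  have hsub : (Gtr n k)ᶜ ⊆ ⋃ v ∈ (Finset.univ.filter (fun v : Fin k → ZMod 2 => e v ≠ 0)),
      {z : TState n k | ¬ |Sxi (e v) z| ≤ (n : ℝ) / 4} := by
    intro z hz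
    simp only [Gtr, Set.mem_compl_iff, Set.mem_ofPred_eq, not_forall] at hz
    obtain ⟨ξ, h0, h⟩ := hz
    simp only [Set.mem_iUnion]
    refine ⟨e.symm ξ, ?_, ?_⟩
    · simpa using h0
    · simpa using h
  have h1 : Nat.card ↥((Gtr n k)ᶜ) ≤ ∑ v ∈ (Finset.univ.filter (fun v : Fin k → ZMod 2 => e v ≠ 0)),
      Nat.card ↥{z : TState n k | ¬ |Sxi (e v) z| ≤ (n : ℝ) / 4} := by
    simp only [Nat.card_coe_set_eq]
    exact (Set.ncard_le_ncard hsub (Set.toFinite _)).trans (Finset.set_ncard_biUnion_le _ _)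
  have h2 : (Nat.card ↥((Gtr n k)ᶜ) : ℝ) ≤
      ∑ v ∈ (Finset.univ.filter (fun v : Fin k → ZMod 2 => e v ≠ 0)),
      (Nat.card ↥{z : TState n k | ¬ |Sxi (e v) z| ≤ (n : ℝ) / 4} : ℝ) := by
    exact_mod_cast h1
  refine h2.trans ((Finset.sum_le_card_nsmul _ _ _ (fun v hv =>
    aux_tail (e v) (Finset.mem_filter.1 hv).2)).trans ?_)
  rw [nsmul_eq_mul]
  gcongr
  have : (Finset.univ.filter (fun v : Fin k → ZMod 2 => e v ≠ 0)).card ≤ 2 ^ k := by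
    refine (Finset.card_filter_le _ _).trans ?_
    simp [ZMod.card]
  exact_mod_cast this

lemma aux_sub {n k : ℕ} (hn : 1 ≤ n) : Gtr n k ⊆ Stief n k := by
  intro z hz
  by_contra h
  have hlt : Submodule.span (ZMod 2) (Set.range z) < ⊤ := lt_top_iff_ne_top.2 h
  obtain ⟨f, hf, hle⟩ := Submodule.exists_le_ker_of_lt_top _ hlt
  have h1 := hz f hf
  have h2 : Sxi f z = n := by
    have : ∀ i, f (z i) = 0 := fun i => hle (Submodule.subset_span ⟨i, rfl⟩)
    simp [Sxi, this]
  rw [h2, Nat.abs_cast] at h1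
  have : (1 : ℝ) ≤ n := by exact_mod_cast hn
  linarith

theorem stmt8 :
    ∃ ε₀ : ℝ, 0 < ε₀ ∧ ∃ c₀ : ℝ, 0 < c₀ ∧ ∃ N : ℕ, ∀ n : ℕ, N ≤ n →
      ∀ k : ℕ, 1 ≤ k → k ≤ n → (k : ℝ) ≤ ε₀ * n →
        -- π(G_tr^c) ≤ e^{−c₀ n}, where π is uniform on Stief(n,k)
        (Nat.card ↥(Stief n k ∩ (Gtr n k)ᶜ) : ℝ) / (Nat.card ↥(Stief n k) : ℝ) ≤
            Real.exp (-(c₀ * n)) ∧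
        -- μ(G_tr^c) ≤ e^{−c₀ n}, where μ is uniform on V^n
        (Nat.card ↥((Gtr n k)ᶜ) : ℝ) / (Fintype.card (TState n k) : ℝ) ≤
            Real.exp (-(c₀ * n)) := by
  refine ⟨1/128, by norm_num, 1/128, by norm_num, 128, ?_⟩
  intro n hn k _ _ hk
  have hnR : (128 : ℝ) ≤ n := by exact_mod_cast hn
  have hT : (Fintype.card (TState n k) : ℝ) = ((2 : ℝ) ^ k) ^ n := by
    simp [TState, ZMod.card]
  have hbad := aux_union n k
  set T : ℝ := ((2 : ℝ) ^ k) ^ n with hTdef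
  have hTpos : 0 < T := by positivity
  set B : ℝ := (Nat.card ↥((Gtr n k)ᶜ) : ℝ) with hB
  set E : ℝ := Real.exp (-(1/128 * n : ℝ)) with hE
  have hE1 : E ≤ 1 := Real.exp_le_one_iff.2 (by linarith)
  have hEpos : 0 < E := Real.exp_pos _
  have h2e : (2 : ℝ) ≤ Real.exp 1 := by
    have := Real.add_one_le_exp (1 : ℝ); linarith
  have hnum : (2 : ℝ) ^ k * (2 * Real.exp (-(n / 32 : ℝ))) * 2 ≤ E := by
    have h2k : (2 : ℝ) ^ k ≤ Real.exp k := by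
      calc (2 : ℝ) ^ k ≤ Real.exp 1 ^ k := by gcongr
        _ = _ := by rw [← Real.exp_nat_mul, mul_one]
    calc (2 : ℝ) ^ k * (2 * Real.exp (-(n / 32 : ℝ))) * 2
        ≤ Real.exp k * (Real.exp 1 * Real.exp (-(n / 32 : ℝ))) * Real.exp 1 := by gcongr
      _ = Real.exp (k + (1 + -(n / 32 : ℝ)) + 1) := by simp only [Real.exp_add]
      _ ≤ E := Real.exp_le_exp.2 (by linarith)
  have hB2 : B * 2 ≤ E * T := by nlinarith
  have hBnn : 0 ≤ B := Nat.cast_nonneg _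
  have hS : T ≤ (Nat.card ↥(Stief n k) : ℝ) + B := by
    rw [← hT, hB, ← Nat.card_eq_fintype_card]
    have h := Set.ncard_le_ncard (aux_sub (k := k) (by omega : 1 ≤ n)) (Set.toFinite _)
    have h' := Set.ncard_add_ncard_compl (Gtr n k)
    simp only [Nat.card_coe_set_eq]
    rw [← h']
    exact_mod_cast Nat.add_le_add_right h _
  have hI : (Nat.card ↥(Stief n k ∩ (Gtr n k)ᶜ) : ℝ) ≤ B := by
    rw [hB]
    simp only [Nat.card_coe_set_eq]
    exact_mod_cast Set.ncard_le_ncard Set.inter_subset_right (Set.toFinite _)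
  have hS2 : T / 2 ≤ (Nat.card ↥(Stief n k) : ℝ) := by nlinarith
  constructor
  · rw [div_le_iff₀ (by linarith)]
    nlinarith
  · rw [hT, div_le_iff₀ hTpos]
    linarith
end
end

section
/- Let p be an odd prime, H the Heisenberg group on a 2m-dimensional symplectic F_p-space with m ≥ 1, and r ≥ 2m+1. Then the power-averaged product-replacement (PA-PRA) chain is irreducible on Ω = V_r(H): for any two generating tuples g, g' ∈ Ω there is a finite sequence of left and right moves T^R_{j→i,a}, T^L_{j→i,a} taking g to g'. -/
noncomputable section

/-- Data of a bilinear form on `W` turning `W × ZMod p` into a Heisenberg group. -/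
class HeisData (p : ℕ) (W : Type*) [Fact (Nat.Prime p)] [AddCommGroup W]
    [Module (ZMod p) W] where
  ω : W →ₗ[ZMod p] W →ₗ[ZMod p] ZMod p

/-- The Heisenberg group structure on `W × ZMod p`:
`(v,z)·(w,t) = (v+w, z+t+ω(v,w)/2)`. -/
instance heisGroup (p : ℕ) (W : Type*) [Fact (Nat.Prime p)] [AddCommGroup W]
    [Module (ZMod p) W] [HeisData p W] : Group (W × ZMod p) where
  mul x y := (x.1 + y.1, x.2 + y.2 + (2 : ZMod p)⁻¹ * HeisData.ω x.1 y.1)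
  one := ((0 : W), (0 : ZMod p))
  inv x := (-x.1, -x.2 + (2 : ZMod p)⁻¹ * HeisData.ω x.1 x.1)
  mul_assoc a b c := by
    refine Prod.ext ?_ ?_
    · show a.1 + b.1 + c.1 = a.1 + (b.1 + c.1)
      exact add_assoc _ _ _
    · show a.2 + b.2 + (2 : ZMod p)⁻¹ * HeisData.ω a.1 b.1 + c.2 +
          (2 : ZMod p)⁻¹ * HeisData.ω (a.1 + b.1) c.1 =
        a.2 + (b.2 + c.2 + (2 : ZMod p)⁻¹ * HeisData.ω b.1 c.1) +
          (2 : ZMod p)⁻¹ * HeisData.ω a.1 (b.1 + c.1)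
      simp only [map_add, LinearMap.add_apply]
      ring
  one_mul a := by
    refine Prod.ext ?_ ?_
    · show 0 + a.1 = a.1; simp
    · show 0 + a.2 + (2 : ZMod p)⁻¹ * HeisData.ω 0 a.1 = a.2
      simp
  mul_one a := by
    refine Prod.ext ?_ ?_
    · show a.1 + 0 = a.1; simp
    · show a.2 + 0 + (2 : ZMod p)⁻¹ * HeisData.ω a.1 0 = a.2
      simp
  inv_mul_cancel a := by
    refine Prod.ext ?_ ?_
    · show -a.1 + a.1 = 0; simp
    · show -a.2 + (2 : ZMod p)⁻¹ * HeisData.ω a.1 a.1 + a.2 +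
          (2 : ZMod p)⁻¹ * HeisData.ω (-a.1) a.1 = 0
      simp only [map_neg, LinearMap.neg_apply]
      ring

/-- Tuples generating the whole group. -/
def genSet (r : ℕ) (H : Type*) [Group H] : Set (Fin r → H) :=
  {g | Subgroup.closure (Set.range g) = ⊤}

/-- One PA-PRA move: for distinct `i ≠ j` and `a ∈ F_p`, replace `g i` by
`g i * (g j)^a` (right move) or by `(g j)^a * g i` (left move). -/
def paMove (p : ℕ) {r : ℕ} {H : Type*} [Group H] (g g' : Fin r → H) : Prop :=
  ∃ (i j : Fin r) (a : ZMod p), i ≠ j ∧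
    (g' = Function.update g i (g i * (g j) ^ (a.val)) ∨
     g' = Function.update g i ((g j) ^ (a.val) * g i))

/-- Elementary moves on tuples of vectors. -/
def vMove (p : ℕ) {r : ℕ} {W : Type} [AddCommGroup W] [Module (ZMod p) W]
    (v v' : Fin r → W) : Prop :=
  ∃ (i j : Fin r) (a : ZMod p), i ≠ j ∧ v' = Function.update v i (v i + a • v j)

section vec
variable {p : ℕ} [Fact (Nat.Prime p)] {W : Type} [AddCommGroup W] [Module (ZMod p) W] {r : ℕ}

lemma vkey (v : Fin r → W) (j : Fin r) (w : W)
    (hw : w ∈ Submodule.span (ZMod p) (v '' {k | k ≠ j})) :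
    ∀ (c : ZMod p) (x : W), Relation.ReflTransGen (vMove p) (Function.update v j x)
      (Function.update v j (x + c • w)) := by
  induction hw using Submodule.span_induction with
  | mem w h =>
    obtain ⟨k, hk, rfl⟩ := h
    intro c x
    have hk' : k ≠ j := hk
    refine Relation.ReflTransGen.single ⟨j, k, c, hk'.symm, ?_⟩
    simp [hk']
  | zero => intro c x; simp; exact Relation.ReflTransGen.refl
  | add a b _ _ ha hb =>
    intro c x
    rw [smul_add, ← add_assoc]
    exact (ha c x).trans (hb c _)
  | smul a b _ hb =>
    intro c x
    rw [smul_smul]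
    exact hb _ _

lemma vkey2 (v : Fin r → W) (j : Fin r) (w : W)
    (hv : v j ∈ Submodule.span (ZMod p) (v '' {k | k ≠ j}))
    (hw : w ∈ Submodule.span (ZMod p) (v '' {k | k ≠ j})) :
    Relation.ReflTransGen (vMove p) v (Function.update v j w) := by
  have := vkey v j (w - v j) (Submodule.sub_mem _ hw hv) 1 (v j)
  simpa using this

lemma vscale [Module.Finite (ZMod p) W] (hr : Module.finrank (ZMod p) W < r)
    (v : Fin r → W) (i : Fin r) (c : ZMod p) (hc : c ≠ 0) :
    Relation.ReflTransGen (vMove p) v (Function.update v i (c • v i)) := by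
  have hdep : ¬ LinearIndependent (ZMod p) v := by
    intro h
    have := h.fintype_card_le_finrank
    simp at this
    omega
  rw [linearIndependent_iff_notMem_span] at hdep
  push Not at hdep
  obtain ⟨j, hj⟩ := hdep
  have hset : (Set.univ \ {j} : Set (Fin r)) = {k | k ≠ j} := by ext; simp
  rw [hset] at hj
  by_cases hij : j = i
  · subst hij
    exact vkey2 v j _ hj (Submodule.smul_mem _ _ hj)
  · have hi : v i ∈ Submodule.span (ZMod p) (v '' {k | k ≠ j}) :=
      Submodule.subset_span ⟨i, fun h => hij h.symm, rfl⟩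
    have h1 := vkey2 v j (c • v i) hj (Submodule.smul_mem _ _ hi)
    set v1 := Function.update v j (c • v i) with hv1
    set v2 := Function.update v1 i (c • v i) with hv2
    have hij' : i ≠ j := fun h => hij h.symm
    have h2 : vMove p v1 v2 := by
      refine ⟨i, j, 1 - c⁻¹, hij', ?_⟩
      rw [hv2]
      congr 1
      simp only [hv1, Function.update_self, Function.update_of_ne hij']
      rw [sub_smul, one_smul, smul_smul, inv_mul_cancel₀ hc, one_smul]
      abel
    have hle : Submodule.span (ZMod p) (v '' {k | k ≠ j}) ≤
        Submodule.span (ZMod p) (v2 '' {k | k ≠ j}) := by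
      rw [Submodule.span_le]
      rintro _ ⟨k, hk, rfl⟩
      have hk' : k ≠ j := hk
      by_cases hki : k = i
      · subst hki
        have : v k = c⁻¹ • v2 k := by
          simp [hv2, smul_smul, inv_mul_cancel₀ hc]
        rw [this]
        exact Submodule.smul_mem _ _ (Submodule.subset_span ⟨k, hk, rfl⟩)
      · have : v k = v2 k := by simp [hv2, hv1, hki, hk']
        rw [this]
        exact Submodule.subset_span ⟨k, hk, rfl⟩
    have h3 := vkey2 v2 j (v j) (by
      have : v2 j = c • v i := by simp [hv2, hv1, hij]
      rw [this]
      exact Submodule.smul_mem _ _ (hle hi)) (hle hj)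
    have h4 : Function.update v2 j (v j) = Function.update v i (c • v i) := by
      ext k
      by_cases hkj : k = j
      · subst hkj; simp [hij]
      · by_cases hki : k = i
        · subst hki; simp [hv2, hkj]
        · simp [hv2, hv1, hkj, hki]
    rw [h4] at h3
    exact (h1.tail h2).trans h3

/-- action of a matrix on tuples -/
def mact (M : Matrix (Fin r) (Fin r) (ZMod p)) (v : Fin r → W) : Fin r → W :=
  fun i => ∑ k, M i k • v k

lemma vdiag [Module.Finite (ZMod p) W] (hr : Module.finrank (ZMod p) W < r)
    (D : Fin r → ZMod p) (hD : ∀ i, D i ≠ 0) (v : Fin r → W) (s : Finset (Fin r)) :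
    Relation.ReflTransGen (vMove p) v (fun i => if i ∈ s then D i • v i else v i) := by
  induction s using Finset.induction_on with
  | empty => simp; exact Relation.ReflTransGen.refl
  | insert a s ha ih =>
    refine ih.trans ?_
    have := vscale hr (fun i => if i ∈ s then D i • v i else v i) a (D a) (hD a)
    convert this using 1
    ext k
    by_cases hk : k = a
    · subst hk; simp [ha]
    · simp [hk]

lemma vmat [Module.Finite (ZMod p) W] (hr : Module.finrank (ZMod p) W < r)
    (M : Matrix (Fin r) (Fin r) (ZMod p)) (hM : M.det ≠ 0) :
    ∀ v : Fin r → W, Relation.ReflTransGen (vMove p) v (mact M v) := by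
  refine Matrix.diagonal_transvection_induction_of_det_ne_zero
    (fun M => ∀ v : Fin r → W, Relation.ReflTransGen (vMove p) v (mact M v)) M hM ?_ ?_ ?_
  · intro D hD v
    rw [Matrix.det_diagonal, Finset.prod_ne_zero_iff] at hD
    have := vdiag hr D (fun i => hD i (Finset.mem_univ _)) v Finset.univ
    convert this using 1
    ext i
    simp [mact, Matrix.diagonal_apply]
  · intro t v
    refine Relation.ReflTransGen.single ⟨t.i, t.j, t.c, t.hij, ?_⟩
    ext k
    by_cases hk : k = t.i
    · subst hk
      simp [mact, Matrix.TransvectionStruct.toMatrix, Matrix.transvection, add_smul,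
        Finset.sum_add_distrib, Matrix.one_apply, Matrix.single_apply]
    · have hk' : ¬ t.i = k := fun h => hk h.symm
      simp [mact, Matrix.TransvectionStruct.toMatrix, Matrix.transvection, add_smul,
        Finset.sum_add_distrib, Matrix.one_apply, Matrix.single_apply, hk, hk']
  · intro A B _ _ hA hB v
    have h : mact (A * B) v = mact A (mact B v) := by
      ext i
      simp only [mact, Matrix.mul_apply, Finset.sum_smul, Finset.smul_sum, smul_smul]
      exact Finset.sum_comm
    rw [h]
    exact (hB v).trans (hA _)

lemma exists_equiv {K V U : Type*} [Field K] [AddCommGroup V] [Module K V] [AddCommGroup U]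
    [Module K U] [Module.Finite K V] (f f' : V →ₗ[K] U) (hf : Function.Surjective f)
    (hf' : Function.Surjective f') : ∃ e : V ≃ₗ[K] V, ∀ x, f (e x) = f' x := by
  have key : ∀ f : V →ₗ[K] U, Function.Surjective f →
      ∃ φ : V ≃ₗ[K] U × (LinearMap.ker f), ∀ x, (φ x).1 = f x := by
    intro f hf
    obtain ⟨q, hq⟩ := (LinearMap.ker f).subtype.exists_leftInverse_of_injective
      (Submodule.ker_subtype _)
    have hq' : ∀ x : LinearMap.ker f, q x = x := fun x => LinearMap.congr_fun hq x
    exact ⟨LinearMap.equivProdOfSurjectiveOfIsCompl f q (LinearMap.range_eq_top.2 hf)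
      (LinearMap.range_eq_top.2 fun x => ⟨x, hq' x⟩) (LinearMap.isCompl_of_proj hq'),
      fun x => rfl⟩
  obtain ⟨φ, hφ⟩ := key f hf
  obtain ⟨φ', hφ'⟩ := key f' hf'
  have h1 := LinearMap.finrank_range_add_finrank_ker f
  have h2 := LinearMap.finrank_range_add_finrank_ker f'
  rw [LinearMap.range_eq_top.2 hf] at h1
  rw [LinearMap.range_eq_top.2 hf'] at h2
  let ψ : LinearMap.ker f' ≃ₗ[K] LinearMap.ker f := LinearEquiv.ofFinrankEq _ _ (by omega)
  refine ⟨φ'.trans (((LinearEquiv.refl K U).prodCongr ψ).trans φ.symm), fun x => ?_⟩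
  rw [← hφ, ← hφ']
  simp

lemma vtrans [Module.Finite (ZMod p) W] (hr : Module.finrank (ZMod p) W < r)
    (v v' : Fin r → W) (hv : Submodule.span (ZMod p) (Set.range v) = ⊤)
    (hv' : Submodule.span (ZMod p) (Set.range v') = ⊤) :
    Relation.ReflTransGen (vMove p) v v' := by
  obtain ⟨e, he⟩ := exists_equiv (Fintype.linearCombination (ZMod p) v)
    (Fintype.linearCombination (ZMod p) v')
    (by rw [← LinearMap.range_eq_top, Fintype.range_linearCombination, hv])
    (by rw [← LinearMap.range_eq_top, Fintype.range_linearCombination, hv'])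
  have := vmat hr (LinearMap.toMatrix' e.toLinearMap).transpose (by
    rw [Matrix.det_transpose, LinearMap.det_toMatrix']
    exact (LinearEquiv.isUnit_det' e).ne_zero) v
  convert this using 1
  ext i
  have h := he (Pi.single i 1)
  rw [Fintype.linearCombination_apply, Fintype.linearCombination_apply_single, one_smul] at h
  rw [← h]
  simp [mact, LinearMap.toMatrix'_apply]

end vec

section heis
variable {p : ℕ} [Fact (Nat.Prime p)] {W : Type} [AddCommGroup W] [Module (ZMod p) W]
  [HeisData p W] {r : ℕ}

lemma hmul (x y : W × ZMod p) :
    x * y = (x.1 + y.1, x.2 + y.2 + (2 : ZMod p)⁻¹ * HeisData.ω x.1 y.1) := rfl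

lemma hone : (1 : W × ZMod p) = (0, 0) := rfl

lemma hpow (ha : ∀ v : W, HeisData.ω (p := p) v v = 0) (x : W × ZMod p) (n : ℕ) :
    x ^ n = ((n : ZMod p) • x.1, (n : ZMod p) * x.2) := by
  induction n with
  | zero => rw [pow_zero, hone]; simp
  | succ n ih =>
    rw [pow_succ, ih, hmul]
    refine Prod.ext ?_ ?_
    · simp [add_smul]
    · simp [ha]; ring

lemma hpowv (ha : ∀ v : W, HeisData.ω (p := p) v v = 0) (x : W × ZMod p) (a : ZMod p) :
    x ^ a.val = (a • x.1, a * x.2) := by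
  rw [hpow ha, ZMod.natCast_zmod_val]

lemma hspan (g : Fin r → W × ZMod p) (hg : g ∈ genSet r (W × ZMod p)) :
    Submodule.span (ZMod p) (Set.range fun i => (g i).1) = ⊤ := by
  rw [eq_top_iff]
  rintro w -
  have hg' : Subgroup.closure (Set.range g) = ⊤ := hg
  have hm : ((w, 0) : W × ZMod p) ∈ Subgroup.closure (Set.range g) := by
    rw [hg']; trivial
  have : ∀ x : W × ZMod p, x ∈ Subgroup.closure (Set.range g) →
      x.1 ∈ Submodule.span (ZMod p) (Set.range fun i => (g i).1) := by
    intro x hx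
    induction hx using Subgroup.closure_induction with
    | mem x h =>
      obtain ⟨i, rfl⟩ := h
      exact Submodule.subset_span ⟨i, rfl⟩
    | one => exact Submodule.zero_mem _
    | mul x y _ _ hx hy => exact Submodule.add_mem _ hx hy
    | inv x _ hx => exact Submodule.neg_mem _ hx
  exact this _ hm

lemma hlift (ha : ∀ v : W, HeisData.ω (p := p) v v = 0) (g : Fin r → W × ZMod p)
    (v' : Fin r → W) (h : Relation.ReflTransGen (vMove p) (fun i => (g i).1) v') :
    ∃ g' : Fin r → W × ZMod p, Relation.ReflTransGen (paMove p) g g' ∧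
      (fun i => (g' i).1) = v' := by
  induction h with
  | refl => exact ⟨g, Relation.ReflTransGen.refl, rfl⟩
  | tail _ h ih =>
    obtain ⟨g', h1, rfl⟩ := ih
    obtain ⟨i, j, a, hij, rfl⟩ := h
    refine ⟨_, h1.tail ⟨i, j, a, hij, Or.inl rfl⟩, ?_⟩
    ext k
    by_cases hk : k = i
    · subst hk; simp [hpowv ha, hmul]
    · simp [hk]

lemma hconj (h2 : (2 : ZMod p) ≠ 0) (ha : ∀ v : W, HeisData.ω (p := p) v v = 0)
    (g : Fin r → W × ZMod p) (i j : Fin r)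
    (hij : HeisData.ω (p := p) (g i).1 (g j).1 ≠ 0) (t : ZMod p) :
    Relation.ReflTransGen (paMove p) g (Function.update g i ((g i).1, t)) := by
  have hne : i ≠ j := by
    rintro rfl; exact hij (ha _)
  have hanti : HeisData.ω (p := p) (g j).1 (g i).1 = - HeisData.ω (p := p) (g i).1 (g j).1 := by
    have := ha ((g i).1 + (g j).1)
    simp only [map_add, LinearMap.add_apply, ha] at this
    linear_combination this
  set a : ZMod p := (t - (g i).2) / HeisData.ω (p := p) (g i).1 (g j).1 with hadef
  have haw : a * HeisData.ω (p := p) (g i).1 (g j).1 = t - (g i).2 := by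
    rw [hadef]; field_simp
  refine (Relation.ReflTransGen.single ⟨i, j, a, hne, Or.inl rfl⟩).tail
    ⟨i, j, -a, hne, Or.inr ?_⟩
  rw [Function.update_idem, Function.update_self, Function.update_of_ne hne.symm]
  congr 1
  rw [hpowv ha, hpowv ha, hmul, hmul]
  refine Prod.ext ?_ ?_
  · simp
  · simp only [map_add, map_smul, LinearMap.smul_apply, ha, hanti, smul_eq_mul]
    have h22 : (2 : ZMod p)⁻¹ * 2 = 1 := inv_mul_cancel₀ h2
    linear_combination (-1 : ZMod p) * haw -
      (a * HeisData.ω (p := p) (g i).1 (g j).1) * h22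

lemma exists_pair (hn : ∀ v : W, (∀ w : W, HeisData.ω (p := p) v w = 0) → v = 0)
    (v : Fin r → W) (hv : Submodule.span (ZMod p) (Set.range v) = ⊤) (x : W) (hx : x ≠ 0) :
    ∃ j, HeisData.ω (p := p) x (v j) ≠ 0 := by
  by_contra! hcon
  apply hx
  apply hn
  intro w
  have hw : w ∈ Submodule.span (ZMod p) (Set.range v) := by rw [hv]; trivial
  have hle : Submodule.span (ZMod p) (Set.range v) ≤
      LinearMap.ker (HeisData.ω (p := p) x) := by
    rw [Submodule.span_le]
    rintro _ ⟨j, rfl⟩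
    exact hcon j
  exact hle hw

lemma hcentral [Nontrivial W] (h2 : (2 : ZMod p) ≠ 0)
    (ha : ∀ v : W, HeisData.ω (p := p) v v = 0)
    (hn : ∀ v : W, (∀ w : W, HeisData.ω (p := p) v w = 0) → v = 0)
    (g : Fin r → W × ZMod p)
    (hv : Submodule.span (ZMod p) (Set.range fun i => (g i).1) = ⊤) (i : Fin r) (t : ZMod p) :
    Relation.ReflTransGen (paMove p) g (Function.update g i ((g i).1, t)) := by
  by_cases hi : (g i).1 = 0
  · obtain ⟨j, hj⟩ : ∃ j, (g j).1 ≠ 0 := by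
      by_contra! hcon
      have : (Set.range fun i => (g i).1) ⊆ {0} := by
        rintro _ ⟨j, rfl⟩; exact hcon j
      have h3 := Submodule.span_mono (R := ZMod p) this
      rw [hv] at h3
      simp at h3
    obtain ⟨k, hk⟩ := exists_pair hn _ hv _ hj
    have hji : j ≠ i := by rintro rfl; exact hj hi
    have hki : k ≠ i := by
      rintro rfl; simp [hi] at hk
    have s1 : paMove p g (Function.update g i (g i * (g j) ^ ((1 : ZMod p).val))) :=
      ⟨i, j, 1, hji.symm, Or.inl rfl⟩
    have e1 : (g i * (g j) ^ ((1 : ZMod p).val)).1 = (g j).1 := by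
      rw [hpowv ha, hmul]; simp [hi]
    have s2 := hconj h2 ha (Function.update g i (g i * (g j) ^ ((1 : ZMod p).val))) i k
      (by rw [Function.update_self, Function.update_of_ne hki, e1]; exact hk) (t + (g j).2)
    rw [Function.update_idem, Function.update_self, e1] at s2
    refine (Relation.ReflTransGen.head s1 s2).tail ⟨i, j, -1, hji.symm, Or.inl ?_⟩
    rw [Function.update_idem, Function.update_self, Function.update_of_ne hji]
    congr 1
    rw [hpowv ha, hmul, hi]
    refine Prod.ext ?_ ?_
    · simp
    · simp [ha]
  · obtain ⟨j, hj⟩ := exists_pair hn _ hv _ hi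
    exact hconj h2 ha g i j hj t

lemma hfix [Nontrivial W] (h2 : (2 : ZMod p) ≠ 0)
    (ha : ∀ v : W, HeisData.ω (p := p) v v = 0)
    (hn : ∀ v : W, (∀ w : W, HeisData.ω (p := p) v w = 0) → v = 0)
    (g g' : Fin r → W × ZMod p) (hgg : ∀ i, (g i).1 = (g' i).1)
    (hv : Submodule.span (ZMod p) (Set.range fun i => (g i).1) = ⊤) (s : Finset (Fin r)) :
    Relation.ReflTransGen (paMove p) g (fun i => if i ∈ s then g' i else g i) := by
  induction s using Finset.induction_on with
  | empty => simp; exact Relation.ReflTransGen.refl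
  | insert a s hs ih =>
    refine ih.trans ?_
    have hfst : ∀ i, ((fun i => if i ∈ s then g' i else g i) i).1 = (g i).1 := by
      intro i
      by_cases h : i ∈ s
      · simp [h, hgg]
      · simp [h]
    have := hcentral h2 ha hn (fun i => if i ∈ s then g' i else g i)
      (by simp only [hfst]; exact hv) a (g' a).2
    convert this using 1
    funext k
    by_cases hk : k = a
    · subst hk; simp [hs, hgg]
    · simp [hk]

end heis

theorem stmt11 :
    ∀ (p : ℕ) [Fact (Nat.Prime p)], p ≠ 2 →
    ∀ (W : Type) [AddCommGroup W] [Module (ZMod p) W] [HeisData p W] (m : ℕ),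
      1 ≤ m → Module.finrank (ZMod p) W = 2 * m →
      -- ω is alternating and nondegenerate
      (∀ v : W, HeisData.ω (p := p) v v = 0) →
      (∀ v : W, (∀ w : W, HeisData.ω (p := p) v w = 0) → v = 0) →
      ∀ r : ℕ, 2 * m + 1 ≤ r →
        ∀ g g' : Fin r → W × ZMod p, g ∈ genSet r (W × ZMod p) →
          g' ∈ genSet r (W × ZMod p) →
          Relation.ReflTransGen (paMove p) g g' := by
  intro p _ hp W _ _ _ m hm hfr ha hn r hr g g' hg hg'
  have h2 : (2 : ZMod p) ≠ 0 := by
    intro h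
    have h' : ((2 : ℕ) : ZMod p) = 0 := by exact_mod_cast h
    rw [ZMod.natCast_eq_zero_iff] at h'
    exact hp ((Nat.prime_dvd_prime_iff_eq (Fact.out : p.Prime) Nat.prime_two).1 h')
  haveI : Module.Finite (ZMod p) W := Module.finite_of_finrank_pos (by omega)
  haveI : Nontrivial W := Module.nontrivial_of_finrank_pos (R := ZMod p) (by omega)
  obtain ⟨g1, h1, e1⟩ := hlift ha g (fun i => (g' i).1)
    (vtrans (by omega) _ _ (hspan g hg) (hspan g' hg'))
  have h3 := hfix h2 ha hn g1 g' (fun i => congrFun e1 i) (by rw [e1]; exact hspan g' hg')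
    Finset.univ
  simp at h3
  exact h1.trans h3
end
end

section
/- Fix an odd prime p and ε ∈ (0,1), and let β₀ = β₀(p,ε) ∈ (1/p, 1) satisfy ε·log p < I_p(β₀). There is a constant c_{p,ε} > 0 such that, for all sufficiently large r and all h ≤ ε·r: π(G_H^c) ≤ e^{−c_{p,ε}·r}, where π is uniform on Ω = V_r(H); and moreover μ(G_H^c) → 0 as r → ∞, where μ is uniform on H^r and G_H^c is the complement taken inside H^r. -/
noncomputable section

/-- `N_ξ(g) = #{i : ξ(v_i) = 0}`, where `g i = (v_i, z_i)`. -/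
def NXi {p : ℕ} {W : Type*} [Fact (Nat.Prime p)] [AddCommGroup W] [Module (ZMod p) W]
    {r : ℕ} (ξ : W →ₗ[ZMod p] ZMod p) (g : Fin r → W × ZMod p) : ℕ :=
  (Finset.univ.filter fun i => ξ (g i).1 = 0).card

/-- The good set `G_H = {g ∈ Ω : N_ξ(g) ≤ β₀ r for every nonzero ξ}`. -/
def GH (p : ℕ) (W : Type*) [Fact (Nat.Prime p)] [AddCommGroup W] [Module (ZMod p) W]
    [HeisData p W] (β₀ : ℝ) (r : ℕ) : Set (Fin r → W × ZMod p) :=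
  {g | g ∈ genSet r (W × ZMod p) ∧
    ∀ ξ : W →ₗ[ZMod p] ZMod p, ξ ≠ 0 → (NXi ξ g : ℝ) ≤ β₀ * r}

/-- The large-deviation rate `I_p(β) = β log(βp) + (1−β) log((1−β)p/(p−1))`. -/
def Ip (p : ℕ) (β : ℝ) : ℝ :=
  β * Real.log (β * p) + (1 - β) * Real.log ((1 - β) * p / ((p : ℝ) - 1))

section helpers
variable {p : ℕ} [Fact (Nat.Prime p)] {W : Type} [AddCommGroup W] [Module (ZMod p) W]

theorem heis_mul_def [HeisData p W] (x y : W × ZMod p) :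
    x * y = (x.1 + y.1, x.2 + y.2 + (2 : ZMod p)⁻¹ * HeisData.ω x.1 y.1) := rfl

theorem heis_gen [HeisData p W] [Nontrivial W] (hp : p ≠ 2)
    (halt : ∀ v : W, HeisData.ω (p := p) v v = 0)
    (hnd : ∀ v : W, (∀ w : W, HeisData.ω (p := p) v w = 0) → v = 0)
    {r : ℕ} (g : Fin r → W × ZMod p)
    (hg : ∀ ξ : W →ₗ[ZMod p] ZMod p, (∀ i, ξ (g i).1 = 0) → ξ = 0) :
    g ∈ genSet r (W × ZMod p) := by
  have hspan : Submodule.span (ZMod p) (Set.range fun i => (g i).1) = ⊤ := by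
    by_contra hne
    obtain ⟨f, hf, hle⟩ := Submodule.exists_le_ker_of_lt_top _ (lt_top_iff_ne_top.mpr hne)
    exact hf (hg f fun i => hle (Submodule.subset_span ⟨i, rfl⟩))
  have h2 : (2 : ZMod p) ≠ 0 := by
    intro h
    have h' : ((2 : ℕ) : ZMod p) = 0 := by exact_mod_cast h
    rw [ZMod.natCast_eq_zero_iff] at h'
    exact hp ((Nat.prime_dvd_prime_iff_eq Fact.out Nat.prime_two).mp h')
  show Subgroup.closure (Set.range g) = ⊤
  set K := Subgroup.closure (Set.range g) with hK
  let A : AddSubgroup W :=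
    { carrier := {w | ∃ z : ZMod p, (w, z) ∈ K}
      zero_mem' := ⟨0, K.one_mem⟩
      add_mem' := by
        rintro a b ⟨x, hx⟩ ⟨y, hy⟩
        exact ⟨_, K.mul_mem hx hy⟩
      neg_mem' := by
        rintro a ⟨x, hx⟩
        exact ⟨_, K.inv_mem hx⟩ }
  have hA : ∀ w : W, ∃ z : ZMod p, (w, z) ∈ K := by
    intro w
    have hle : Submodule.span (ZMod p) (Set.range fun i => (g i).1)
        ≤ AddSubgroup.toZModSubmodule p A := by
      rw [Submodule.span_le]
      rintro _ ⟨i, rfl⟩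
      exact ⟨(g i).2, Subgroup.subset_closure ⟨i, rfl⟩⟩
    have : w ∈ AddSubgroup.toZModSubmodule p A := hle (by rw [hspan]; trivial)
    exact this
  have hC : ∀ t : ZMod p, ((0 : W), t) ∈ K := by
    intro t
    obtain ⟨v, hv⟩ := exists_ne (0 : W)
    have : ∃ w : W, HeisData.ω (p := p) v w ≠ 0 := by
      by_contra h
      push Not at h
      exact hv (hnd v h)
    obtain ⟨w, hw⟩ := this
    obtain ⟨a, ha⟩ := hA v
    obtain ⟨b, hb⟩ := hA ((t * (HeisData.ω (p := p) v w)⁻¹) • w)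
    set w' := (t * (HeisData.ω (p := p) v w)⁻¹) • w with hw'
    have e1 : HeisData.ω (p := p) v w' = t := by
      rw [hw', map_smul, smul_eq_mul, mul_assoc, inv_mul_cancel₀ hw, mul_one]
    have e2 : HeisData.ω (p := p) w' v = -t := by
      have h := halt (v + w')
      simp only [map_add, LinearMap.add_apply, halt, e1] at h
      linear_combination h
    have e3 : ((v, a) * (w', b) : W × ZMod p) = (0, t) * ((w', b) * (v, a)) := by
      simp only [heis_mul_def, e1, e2, map_zero, LinearMap.zero_apply]
      refine Prod.ext ?_ ?_
      · show v + w' = 0 + (w' + v)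
        rw [zero_add, add_comm]
      · show a + b + 2⁻¹ * t = t + (b + a + 2⁻¹ * (-t)) + 2⁻¹ * 0
        field_simp
        ring
    rw [eq_mul_inv_iff_mul_eq.mpr e3.symm]
    exact K.mul_mem (K.mul_mem ha hb) (K.inv_mem (K.mul_mem hb ha))
  rw [eq_top_iff]
  rintro ⟨w, z⟩ -
  obtain ⟨z', hz'⟩ := hA w
  have := K.mul_mem hz' (hC (z - z'))
  rw [heis_mul_def] at this
  simpa using this

theorem ker_card [Fintype W] [DecidableEq W] (ξ : W →ₗ[ZMod p] ZMod p) (hξ : ξ ≠ 0) :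
    (Finset.univ.filter fun x : W × ZMod p => ξ x.1 = 0).card = Fintype.card W := by
  have hs : Function.Surjective ξ := LinearMap.surjective hξ
  have h1 := AddSubgroup.card_eq_card_quotient_mul_card_addSubgroup ξ.toAddMonoidHom.ker
  have h2 : Nat.card (W ⧸ ξ.toAddMonoidHom.ker) = p := by
    rw [Nat.card_congr (QuotientAddGroup.quotientKerEquivOfSurjective ξ.toAddMonoidHom hs).toEquiv,
      Nat.card_zmod]
  rw [h2] at h1
  have h3 : (Finset.univ.filter fun x : W × ZMod p => ξ x.1 = 0)
      = (Finset.univ.filter fun w : W => ξ w = 0) ×ˢ Finset.univ := by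
    ext x; simp
  rw [h3, Finset.card_product, Finset.card_univ, ZMod.card, ← Nat.card_eq_fintype_card, h1, mul_comm]
  congr 1
  rw [← Fintype.card_subtype, ← Nat.card_eq_fintype_card]
  rfl

theorem exp_sum [Fintype W] [DecidableEq W] (ξ : W →ₗ[ZMod p] ZMod p) (hξ : ξ ≠ 0) (r : ℕ)
    (t : ℝ) :
    ∑ g : Fin r → W × ZMod p, t ^ NXi ξ g =
      ((Fintype.card W : ℝ) * (t + p - 1)) ^ r := by
  have h0 : ∀ g : Fin r → W × ZMod p, t ^ NXi ξ g = ∏ i, (if ξ (g i).1 = 0 then t else 1) := by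
    intro g
    rw [Finset.prod_ite]
    simp [NXi]
  simp only [h0]
  rw [← Fintype.piFinset_univ, ← Finset.prod_univ_sum (fun _ => Finset.univ)
    (fun _ x => if ξ (Prod.fst x) = 0 then t else 1)]
  rw [Finset.prod_const, Finset.card_univ, Fintype.card_fin]
  congr 1
  have h1 : ∀ x : W × ZMod p, (if ξ x.1 = 0 then t else 1)
      = 1 + (if ξ x.1 = 0 then t - 1 else 0) := by
    intro x; split_ifs <;> ring
  simp only [h1, Finset.sum_add_distrib]
  rw [← Finset.sum_filter, Finset.sum_const, Finset.sum_const, ker_card ξ hξ]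
  simp [ZMod.card]
  ring

theorem Ip_eq (p : ℕ) (hp : 2 ≤ p) (β : ℝ) (h0 : 0 < β) (h1 : β < 1) :
    Real.exp (-Ip p β) * p * (β * (p - 1) / (1 - β)) ^ β = β * (p - 1) / (1 - β) + p - 1 := by
  have hp' : (2 : ℝ) ≤ p := by exact_mod_cast hp
  have a : (0 : ℝ) < p - 1 := by linarith
  have b : (0 : ℝ) < 1 - β := by linarith
  have c : (0 : ℝ) < p := by linarith
  have e : β * (p - 1) / (1 - β) + p - 1 = (p - 1) / (1 - β) := by field_simp; ring
  rw [e, Real.rpow_def_of_pos (by positivity)]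
  have e4 : Real.exp (-Ip p β) * p = Real.exp (-Ip p β + Real.log p) := by
    rw [Real.exp_add, Real.exp_log c]
  rw [e4, ← Real.exp_add, ← Real.exp_log (show 0 < ((p : ℝ) - 1) / (1 - β) by positivity)]
  congr 1
  unfold Ip
  rw [Real.log_div (by positivity) (by positivity), Real.log_div (by positivity) (by positivity),
    Real.log_div (by positivity) (by positivity),
    Real.log_mul (by positivity) (by positivity), Real.log_mul (by positivity) (by positivity),
    Real.log_mul (by positivity) (by positivity)]
  ring

theorem chernoff [Fintype W] [DecidableEq W] (ξ : W →ₗ[ZMod p] ZMod p) (hξ : ξ ≠ 0) (r : ℕ)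
    (β : ℝ) (h0 : 1 / (p : ℝ) < β) (h1 : β < 1) :
    ((Finset.univ.filter fun g : Fin r → W × ZMod p => β * r < NXi ξ g).card : ℝ)
      ≤ Real.exp (-(Ip p β * r)) * Fintype.card (Fin r → W × ZMod p) := by
  have hp : 2 ≤ p := (Fact.out : p.Prime).two_le
  have hp' : (2 : ℝ) ≤ p := by exact_mod_cast hp
  have a : (0 : ℝ) < p - 1 := by linarith
  have b : (0 : ℝ) < 1 - β := by linarith
  have c : (0 : ℝ) < p := by linarith
  have hβ : 0 < β := lt_trans (by positivity) h0
  have hI := Ip_eq p hp β hβ h1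
  set t := β * (p - 1) / (1 - β) with ht
  have ht1 : 1 ≤ t := by
    rw [ht, le_div_iff₀ b]
    rw [div_lt_iff₀ c] at h0
    linarith
  have ht0 : 0 < t := by linarith
  have hs := exp_sum ξ hξ r t
  rw [← hI] at hs
  have key : ((Finset.univ.filter fun g : Fin r → W × ZMod p => β * r < NXi ξ g).card : ℝ)
      * (t ^ β) ^ r ≤ ∑ g : Fin r → W × ZMod p, t ^ NXi ξ g := by
    rw [← nsmul_eq_mul, ← Finset.sum_const]
    refine (Finset.sum_le_sum ?_).trans
      (Finset.sum_le_sum_of_subset_of_nonneg (Finset.filter_subset _ _) ?_)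
    · intro g hg
      rw [Finset.mem_filter] at hg
      rw [← Real.rpow_natCast (t ^ β), ← Real.rpow_mul ht0.le, ← Real.rpow_natCast t]
      exact Real.rpow_le_rpow_of_exponent_le ht1 hg.2.le
    · intros; positivity
  have hpos : 0 < (t ^ β) ^ r := by positivity
  rw [hs] at key
  refine le_of_mul_le_mul_right (key.trans_eq ?_) hpos
  have : Real.exp (-(Ip p β * r)) = Real.exp (-Ip p β) ^ r := by
    rw [← Real.exp_nat_mul]; congr 1; ring
  rw [this]
  simp only [Fintype.card_fun, Fintype.card_prod, ZMod.card, Fintype.card_fin]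
  push_cast
  rw [← mul_pow, ← mul_pow]
  congr 1
  ring

theorem mu_bound [HeisData p W] [Fintype W] [DecidableEq W] (hp : p ≠ 2) (ε β : ℝ)
    (h0 : 1 / (p : ℝ) < β) (h1 : β < 1) (m r : ℕ) (hr : 1 ≤ r) (hm : 1 ≤ m)
    (hW : Module.finrank (ZMod p) W = 2 * m)
    (halt : ∀ v : W, HeisData.ω (p := p) v v = 0)
    (hnd : ∀ v : W, (∀ w : W, HeisData.ω (p := p) v w = 0) → v = 0)
    (hmr : (2 * m : ℝ) ≤ ε * r) :
    (Nat.card ↥((GH p W β r)ᶜ) : ℝ) ≤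
      Real.exp (-((Ip p β - ε * Real.log p) * r)) * Fintype.card (Fin r → W × ZMod p) := by
  classical
  have hp2 : 2 ≤ p := (Fact.out : p.Prime).two_le
  have hp' : (2 : ℝ) ≤ p := by exact_mod_cast hp2
  have : Nontrivial W := Module.nontrivial_of_finrank_pos (R := ZMod p) (by omega)
  have : Fintype (W →ₗ[ZMod p] ZMod p) :=
    Fintype.ofInjective (fun f => (f : W → ZMod p)) DFunLike.coe_injective
  have hr' : (0 : ℝ) < r := by exact_mod_cast hr
  have hsub : (GH p W β r)ᶜ ⊆ ↑((Finset.univ.filter fun ξ : W →ₗ[ZMod p] ZMod p => ξ ≠ 0).biUnion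
      fun ξ => Finset.univ.filter fun g : Fin r → W × ZMod p => β * r < NXi ξ g) := by
    intro g hg
    simp only [Finset.coe_biUnion, Set.mem_iUnion, Finset.coe_filter, Finset.mem_univ, true_and,
      Set.mem_ofPred_eq, exists_prop]
    by_contra hcon
    push Not at hcon
    refine hg ⟨heis_gen hp halt hnd g ?_, fun ξ hξ => hcon ξ hξ⟩
    intro ξ hξ
    by_contra hne
    have h := hcon ξ hne
    have : NXi ξ g = r := by simp [NXi, hξ]
    rw [this] at h
    nlinarith
  have hcard : Fintype.card (W →ₗ[ZMod p] ZMod p) = p ^ (2 * m) := by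
    have := Module.card_eq_pow_finrank (K := ZMod p) (V := W →ₗ[ZMod p] ZMod p)
    rw [ZMod.card] at this
    rw [this]
    congr 1
    rw [← hW]
    exact Subspace.dual_finrank_eq
  calc (Nat.card ↥((GH p W β r)ᶜ) : ℝ)
      ≤ (((Finset.univ.filter fun ξ : W →ₗ[ZMod p] ZMod p => ξ ≠ 0).biUnion
      fun ξ => Finset.univ.filter fun g : Fin r → W × ZMod p => β * r < NXi ξ g).card : ℝ) := by
        rw [← Set.ncard_coe_finset, Nat.card_coe_set_eq]
        exact_mod_cast Set.ncard_le_ncard hsub (Finset.finite_toSet _)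
    _ ≤ ∑ ξ ∈ (Finset.univ.filter fun ξ : W →ₗ[ZMod p] ZMod p => ξ ≠ 0),
        ((Finset.univ.filter fun g : Fin r → W × ZMod p => β * r < NXi ξ g).card : ℝ) := by
        exact_mod_cast Finset.card_biUnion_le
    _ ≤ ∑ ξ ∈ (Finset.univ.filter fun ξ : W →ₗ[ZMod p] ZMod p => ξ ≠ 0),
        Real.exp (-(Ip p β * r)) * Fintype.card (Fin r → W × ZMod p) := by
        refine Finset.sum_le_sum fun ξ hξ => chernoff ξ (Finset.mem_filter.mp hξ).2 r β h0 h1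
    _ ≤ (p : ℝ) ^ (2 * m) * (Real.exp (-(Ip p β * r)) * Fintype.card (Fin r → W × ZMod p)) := by
        rw [Finset.sum_const, nsmul_eq_mul]
        gcongr
        rw [← Nat.cast_pow, ← hcard]
        exact_mod_cast Finset.card_le_univ _
    _ ≤ Real.exp (ε * Real.log p * r) *
          (Real.exp (-(Ip p β * r)) * Fintype.card (Fin r → W × ZMod p)) := by
        gcongr
        rw [← Real.rpow_natCast, Real.rpow_def_of_pos (by linarith)]
        have := Real.log_nonneg (show (1 : ℝ) ≤ p by linarith)
        apply Real.exp_le_exp.mpr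
        push_cast
        nlinarith
    _ = _ := by
        rw [← mul_assoc, ← Real.exp_add]
        congr 2
        ring

theorem exp_small (δ η : ℝ) (hδ : 0 < δ) (hη : 0 < η) :
    ∃ r₁ : ℕ, ∀ r : ℕ, r₁ ≤ r → Real.exp (-(δ * r)) ≤ η := by
  have : Filter.Tendsto (fun r : ℕ => Real.exp (-(δ * r))) Filter.atTop (nhds 0) :=
    Real.tendsto_exp_neg_atTop_nhds_zero.comp
      (tendsto_natCast_atTop_atTop.const_mul_atTop hδ)
  exact Filter.eventually_atTop.mp (this.eventually (ge_mem_nhds hη))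

end helpers

theorem stmt12 :
    ∀ (p : ℕ) [Fact (Nat.Prime p)], p ≠ 2 →
    ∀ ε β₀ : ℝ, 0 < ε → ε < 1 → 1 / (p : ℝ) < β₀ → β₀ < 1 →
      ε * Real.log p < Ip p β₀ →
      -- π(G_H^c) ≤ e^{−c r} uniformly for h ≤ ε r, for large r
      (∃ c : ℝ, 0 < c ∧ ∃ r₀ : ℕ, ∀ r : ℕ, r₀ ≤ r →
        ∀ (m : ℕ) (W : Type) [AddCommGroup W] [Module (ZMod p) W] [Fintype W]
          [DecidableEq W] [HeisData p W],
          1 ≤ m → Module.finrank (ZMod p) W = 2 * m →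
          (∀ v : W, HeisData.ω (p := p) v v = 0) →
          (∀ v : W, (∀ w : W, HeisData.ω (p := p) v w = 0) → v = 0) →
          (2 * m : ℝ) ≤ ε * r →
          (Nat.card ↥(genSet r (W × ZMod p) ∩ (GH p W β₀ r)ᶜ) : ℝ) /
              (Nat.card ↥(genSet r (W × ZMod p)) : ℝ) ≤ Real.exp (-(c * r))) ∧
      -- μ(G_H^c) → 0 as r → ∞ (complement taken inside H^r)
      (∀ η : ℝ, 0 < η → ∃ r₁ : ℕ, ∀ r : ℕ, r₁ ≤ r →
        ∀ (m : ℕ) (W : Type) [AddCommGroup W] [Module (ZMod p) W] [Fintype W]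
          [DecidableEq W] [HeisData p W],
          1 ≤ m → Module.finrank (ZMod p) W = 2 * m →
          (∀ v : W, HeisData.ω (p := p) v v = 0) →
          (∀ v : W, (∀ w : W, HeisData.ω (p := p) v w = 0) → v = 0) →
          (2 * m : ℝ) ≤ ε * r →
          (Nat.card ↥((GH p W β₀ r)ᶜ) : ℝ) /
              (Fintype.card (Fin r → W × ZMod p) : ℝ) ≤ η) := by
  intro p _ hp ε β₀ hε0 hε1 hb0 hb1 hI
  have hδ : 0 < Ip p β₀ - ε * Real.log p := by linarith
  set δ := Ip p β₀ - ε * Real.log p with hδd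
  constructor
  · obtain ⟨r₁, h₁⟩ := exp_small (δ / 2) (1 / 2) (by positivity) (by norm_num)
    refine ⟨δ / 2, by positivity, max 1 r₁, ?_⟩
    intro r hr m W _ _ _ _ _ hm hW halt hnd hmr
    have hB := mu_bound (W := W) hp ε β₀ hb0 hb1 m r (le_trans (le_max_left _ _) hr) hm hW
      halt hnd hmr
    have hx := h₁ r (le_trans (le_max_right _ _) hr)
    rw [← hδd] at hB
    have hexp : Real.exp (-(δ * r)) = Real.exp (-(δ / 2 * r)) * Real.exp (-(δ / 2 * r)) := by
      rw [← Real.exp_add]; congr 1; ring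
    rw [hexp] at hB
    have hx0 := Real.exp_pos (-(δ / 2 * r))
    set x := Real.exp (-(δ / 2 * r)) with hxd
    set T : ℝ := ((Fintype.card (Fin r → W × ZMod p) : ℕ) : ℝ) with hT
    have hT0 : 0 ≤ T := Nat.cast_nonneg _
    rw [Nat.card_coe_set_eq] at hB ⊢
    rw [Nat.card_coe_set_eq]
    have hA : ((genSet r (W × ZMod p) ∩ (GH p W β₀ r)ᶜ).ncard : ℝ) ≤ ((GH p W β₀ r)ᶜ).ncard := by
      exact_mod_cast Set.ncard_le_ncard Set.inter_subset_right (Set.toFinite _)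
    have hG : T ≤ ((genSet r (W × ZMod p)).ncard : ℝ) + ((GH p W β₀ r)ᶜ).ncard := by
      have h := Set.ncard_add_ncard_compl (GH p W β₀ r) (Set.toFinite _) (Set.toFinite _)
      rw [Nat.card_eq_fintype_card] at h
      have h' : (GH p W β₀ r).ncard ≤ (genSet r (W × ZMod p)).ncard :=
        Set.ncard_le_ncard (fun g hg => hg.1) (Set.toFinite _)
      rw [hT]
      have h3 : Fintype.card (Fin r → W × ZMod p) ≤ (genSet r (W × ZMod p)).ncard +
          ((GH p W β₀ r)ᶜ).ncard := by omega
      exact_mod_cast h3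
    refine div_le_of_le_mul₀ (Nat.cast_nonneg _) hx0.le ?_
    have h5 : x * x * T ≤ 1 / 2 * T := by
      apply mul_le_mul_of_nonneg_right _ hT0
      nlinarith
    have h6 : x * T ≤ 1 / 2 * T := mul_le_mul_of_nonneg_right hx hT0
    have h7 : T / 2 ≤ ((genSet r (W × ZMod p)).ncard : ℝ) := by linarith
    have h8 := mul_le_mul_of_nonneg_left h7 hx0.le
    have h9 := mul_le_mul_of_nonneg_left h6 hx0.le
    linarith
  · intro η hη
    obtain ⟨r₁, h₁⟩ := exp_small δ η hδ hη
    refine ⟨max 1 r₁, ?_⟩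
    intro r hr m W _ _ _ _ _ hm hW halt hnd hmr
    have hB := mu_bound (W := W) hp ε β₀ hb0 hb1 m r (le_trans (le_max_left _ _) hr) hm hW
      halt hnd hmr
    have hx := h₁ r (le_trans (le_max_right _ _) hr)
    rw [← hδd] at hB
    refine div_le_of_le_mul₀ (Nat.cast_nonneg _) hη.le (hB.trans ?_)
    exact mul_le_mul_of_nonneg_right hx (Nat.cast_nonneg _)
end
end

section
/- Fix an odd prime p and α ∈ (0, (p−1)/p). There is a constant C_{p,α} < ∞ such that, for all sufficiently large r, the birth–death chain (S_t) on {1,…,r} with rates B_s, D_s satisfies sup_{1≤s≤r} E_s[τ_α] ≤ C_{p,α}·r·log r, where τ_α = inf{t : S_t ≥ α·r}. Consequently, there exists B_{p,α} < ∞ with sup_{1≤s≤r} P_s(τ_α > B_{p,α}·r·log r) ≤ 1/2. -/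
open Finset

noncomputable section

/-- Birth probability from state `s` (real-valued). -/
def bdB (p r : ℕ) (s : ℝ) : ℝ := (((p : ℝ) - 1) / p) * (s * ((r : ℝ) - s)) / ((r : ℝ) * ((r : ℝ) - 1))

/-- Death probability from state `s` (real-valued). -/
def bdD (p r : ℕ) (s : ℝ) : ℝ := (1 / (p : ℝ)) * (s * (s - 1)) / ((r : ℝ) * ((r : ℝ) - 1))

/-- The birth–death chain on `{1,…,r}` (state `i : Fin r` has value `i+1`). -/
def bdM (p r : ℕ) : Matrix (Fin r) (Fin r) ℝ := fun i j =>
  if (j : ℕ) = (i : ℕ) + 1 then bdB p r ((i : ℕ) + 1)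
  else if ((j : ℕ) + 1) = (i : ℕ) then bdD p r ((i : ℕ) + 1)
  else if j = i then 1 - bdB p r ((i : ℕ) + 1) - bdD p r ((i : ℕ) + 1)
  else 0

/-- The chain killed on entering `{s : s ≥ α r}`. -/
def bdKillUp (p r : ℕ) (α : ℝ) : Matrix (Fin r) (Fin r) ℝ := fun i j =>
  if (((i : ℕ) + 1 : ℝ) < α * r) ∧ (((j : ℕ) + 1 : ℝ) < α * r) then bdM p r i j else 0

/-- Expected hitting time `E_s[τ_α]` of `{s : s ≥ α r}`, via `Σ_t P_s(τ_α > t)`. -/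
def bdEHit (p r : ℕ) (α : ℝ) (i : Fin r) : ℝ :=
  if ((i : ℕ) + 1 : ℝ) < α * r then ∑' t : ℕ, ∑ j, ((bdKillUp p r α) ^ t) i j else 0

/-- `P_s(τ_α > T)`: the probability of staying below `α r` for `T` steps. -/
def bdSurv (p r : ℕ) (α : ℝ) (i : Fin r) (T : ℕ) : ℝ :=
  if ((i : ℕ) + 1 : ℝ) < α * r then ∑ j, ((bdKillUp p r α) ^ T) i j else 0

lemma aux_B_nonneg (p r : ℕ) (hp : 2 ≤ p) (hr : 2 ≤ r) (s : ℝ) (h1 : 1 ≤ s) (h2 : s ≤ r) :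
    0 ≤ bdB p r s := by
  have hp' : (2:ℝ) ≤ p := by exact_mod_cast hp
  have hr' : (2:ℝ) ≤ r := by exact_mod_cast hr
  unfold bdB
  apply div_nonneg
  · apply mul_nonneg
    · apply div_nonneg <;> linarith
    · apply mul_nonneg <;> linarith
  · apply mul_nonneg <;> linarith

lemma aux_D_nonneg (p r : ℕ) (hp : 2 ≤ p) (hr : 2 ≤ r) (s : ℝ) (h1 : 1 ≤ s) :
    0 ≤ bdD p r s := by
  have hp' : (2:ℝ) ≤ p := by exact_mod_cast hp
  have hr' : (2:ℝ) ≤ r := by exact_mod_cast hr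
  unfold bdD
  apply div_nonneg
  · apply mul_nonneg
    · apply div_nonneg <;> linarith
    · apply mul_nonneg <;> linarith
  · apply mul_nonneg <;> linarith

lemma aux_hold_nonneg (p r : ℕ) (hp : 2 ≤ p) (hr : 2 ≤ r) (s : ℝ) (h1 : 1 ≤ s) (h2 : s ≤ r) :
    0 ≤ 1 - bdB p r s - bdD p r s := by
  have hp' : (2:ℝ) ≤ p := by exact_mod_cast hp
  have hr' : (2:ℝ) ≤ r := by exact_mod_cast hr
  have hR : 0 < (r:ℝ) * (r - 1) := mul_pos (by linarith) (by linarith)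
  have hq0 : (0:ℝ) < 1 / p := by positivity
  have hq1 : (1:ℝ) / p ≤ 1 := by
    rw [div_le_one (by linarith)]; linarith
  have e : ((p:ℝ) - 1) / p = 1 - 1 / p := by field_simp
  have : bdB p r s + bdD p r s ≤ 1 := by
    unfold bdB bdD
    rw [← add_div, div_le_one hR, e]
    generalize (1:ℝ) / p = q at *
    have a1 : 0 ≤ s * (r - s) := mul_nonneg (by linarith) (by linarith)
    have a2 : 0 ≤ s * (s - 1) := mul_nonneg (by linarith) (by linarith)
    nlinarith [mul_nonneg hq0.le a1, mul_nonneg (sub_nonneg.2 hq1) a2,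
      mul_nonneg (sub_nonneg.2 h2) (by linarith : (0:ℝ) ≤ r - 1)]
  linarith

lemma aux_M_nonneg (p r : ℕ) (hp : 2 ≤ p) (hr : 2 ≤ r) (i j : Fin r) : 0 ≤ bdM p r i j := by
  have h1 : (1:ℝ) ≤ (i:ℕ) + 1 := by
    have : (0:ℝ) ≤ ((i:ℕ):ℝ) := Nat.cast_nonneg _
    linarith
  have h2 : (((i:ℕ):ℝ) + 1) ≤ r := by exact_mod_cast i.2
  unfold bdM
  split_ifs
  · exact aux_B_nonneg p r hp hr _ h1 h2
  · exact aux_D_nonneg p r hp hr _ h1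
  · exact aux_hold_nonneg p r hp hr _ h1 h2
  · exact le_rfl

lemma aux_row (p r : ℕ) (i : Fin r) (hi : (i:ℕ) + 1 < r) (f : ℕ → ℝ) :
    ∑ j, bdM p r i j * f j = bdB p r ((i:ℕ)+1) * f (i+1) + bdD p r ((i:ℕ)+1) * f (i-1)
      + (1 - bdB p r ((i:ℕ)+1) - bdD p r ((i:ℕ)+1)) * f i := by
  have e : ∀ j : Fin r, bdM p r i j * f j =
      (if j = ⟨i+1, hi⟩ then bdB p r ((i:ℕ)+1) * f (i+1) else 0)
      + (if (j:ℕ) + 1 = i then bdD p r ((i:ℕ)+1) * f (i-1) else 0)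
      + (if j = i then (1 - bdB p r ((i:ℕ)+1) - bdD p r ((i:ℕ)+1)) * f i else 0) := by
    intro j
    unfold bdM
    by_cases h1 : (j:ℕ) = i + 1
    · have a : j = ⟨i+1, hi⟩ := Fin.ext h1
      have b : ¬ ((j:ℕ) + 1 = i) := by omega
      have c : ¬ (j = i) := by intro h; rw [h] at h1; omega
      rw [if_pos h1, if_pos a, if_neg b, if_neg c, h1]; ring
    · have a : ¬ (j = ⟨i+1, hi⟩) := fun h => h1 (by rw [h])
      rw [if_neg h1, if_neg a]
      by_cases h2 : (j:ℕ) + 1 = i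
      · have c : ¬ (j = i) := by intro h; rw [h] at h2; omega
        have d : (i:ℕ) - 1 = j := by omega
        rw [if_pos h2, if_pos h2, if_neg c, d]; ring
      · rw [if_neg h2, if_neg h2]
        by_cases h3 : j = i
        · rw [if_pos h3, if_pos h3, h3]; ring
        · rw [if_neg h3, if_neg h3]; ring
  rw [Finset.sum_congr rfl (fun j _ => e j), Finset.sum_add_distrib, Finset.sum_add_distrib]
  simp only [Finset.sum_ite_eq', Finset.mem_univ, if_true]
  congr 2
  by_cases h0 : (i:ℕ) = 0
  · have : bdD p r ((i:ℕ)+1) = 0 := by unfold bdD; rw [h0]; simp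
    simp [this]
  · have hh : ∀ j : Fin r, ((j:ℕ) + 1 = i) ↔ j = ⟨i-1, by omega⟩ := by
      intro j
      rw [Fin.ext_iff]
      simp only
      omega
    simp only [hh, Finset.sum_ite_eq', Finset.mem_univ, if_true]

lemma aux_K_nonneg (p r : ℕ) (α : ℝ) (hp : 2 ≤ p) (hr : 2 ≤ r) (i j : Fin r) :
    0 ≤ bdKillUp p r α i j := by
  unfold bdKillUp
  split_ifs
  · exact aux_M_nonneg p r hp hr i j
  · exact le_rfl

lemma aux_Kpow_nonneg (p r : ℕ) (α : ℝ) (hp : 2 ≤ p) (hr : 2 ≤ r) (t : ℕ) (i j : Fin r) :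
    0 ≤ ((bdKillUp p r α) ^ t) i j := by
  induction t generalizing i j with
  | zero => rw [pow_zero, Matrix.one_apply]; split_ifs <;> norm_num
  | succ t ih =>
    rw [pow_succ, Matrix.mul_apply]
    exact Finset.sum_nonneg (fun k _ => mul_nonneg (ih i k) (aux_K_nonneg p r α hp hr k j))

lemma aux_K_row_le (p r : ℕ) (α : ℝ) (hp : 2 ≤ p) (hr : 2 ≤ r) (i : Fin r) (f : ℕ → ℝ)
    (hf : ∀ j : Fin r, 0 ≤ f j) :
    ∑ j, bdKillUp p r α i j * f j ≤ ∑ j, bdM p r i j * f j := by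
  apply Finset.sum_le_sum
  intro j _
  apply mul_le_mul_of_nonneg_right _ (hf j)
  unfold bdKillUp
  split_ifs
  · exact le_rfl
  · exact aux_M_nonneg p r hp hr i j

/-- Lyapunov function. -/
def auxV (r : ℕ) (c : ℝ) (i : ℕ) : ℝ := (r / c) * ((harmonic r : ℝ) - (harmonic i : ℝ))

lemma aux_harm_mono (a b : ℕ) (h : a ≤ b) : (harmonic a : ℝ) ≤ harmonic b := by
  induction b, h using Nat.le_induction with
  | base => exact le_rfl
  | succ n _ ih =>
    rw [harmonic_succ]
    push_cast
    have : (0:ℝ) ≤ ((n:ℝ)+1)⁻¹ := by positivity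
    linarith

lemma aux_drift (p r : ℕ) (c α : ℝ) (hp : 2 ≤ p) (hr : 2 ≤ r) (hc : 0 < c)
    (hα : α = ((p:ℝ)-1)/p - c) (i : Fin r) (hi : (((i:ℕ):ℝ) + 1) < α * r) (hi' : (i:ℕ)+1 < r) :
    ∑ j, bdM p r i j * auxV r c j ≤ auxV r c i - 1 := by
  have hp' : (2:ℝ) ≤ p := by exact_mod_cast hp
  have hr' : (2:ℝ) ≤ r := by exact_mod_cast hr
  rw [aux_row p r i hi' (auxV r c)]
  have e : ((p:ℝ) - 1) / p = 1 - 1 / p := by field_simp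
  obtain ⟨n, hn⟩ : ∃ n, n = (i:ℕ) := ⟨_, rfl⟩
  rw [← hn] at hi hi' ⊢
  have hB : bdB p r ((n:ℝ)+1) * (auxV r c (n+1) - auxV r c n)
      = -((1 - 1/p) * (r - (n+1)) / (c * (r-1))) := by
    have : auxV r c (n+1) - auxV r c n = -(r/c) * ((n:ℝ)+1)⁻¹ := by
      unfold auxV; rw [harmonic_succ]; push_cast; ring
    rw [this]; unfold bdB; rw [e]
    have h1 : (r:ℝ) - 1 ≠ 0 := by linarith
    have h2 : (n:ℝ) + 1 ≠ 0 := by positivity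
    generalize (1:ℝ)/p = q
    field_simp
  have hD : bdD p r ((n:ℝ)+1) * (auxV r c (n-1) - auxV r c n)
      = (1/p) * (n+1) / (c * (r-1)) ∨ n = 0 := by
    rcases n with _ | m
    · right; rfl
    left
    have : auxV r c (m+1-1) - auxV r c (m+1) = (r/c) * ((m:ℝ)+1)⁻¹ := by
      rw [Nat.add_sub_cancel]
      unfold auxV; rw [harmonic_succ]; push_cast; ring
    rw [this]; unfold bdD
    have h1 : (r:ℝ) - 1 ≠ 0 := by linarith
    have h2 : (m:ℝ) + 1 ≠ 0 := by positivity
    push_cast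
    generalize (1:ℝ)/p = q
    field_simp
    ring
  have hq0 : (0:ℝ) < 1 / p := by positivity
  have hD' : bdD p r ((n:ℝ)+1) * (auxV r c (n-1) - auxV r c n)
      ≤ (1/p) * (n+1) / (c * (r-1)) := by
    rcases hD with h | h
    · exact h.le
    · have : bdD p r ((n:ℝ)+1) = 0 := by unfold bdD; rw [h]; simp
      rw [this, zero_mul]
      apply div_nonneg
      · positivity
      · apply mul_nonneg <;> linarith
  have hpos : 0 < c * ((r:ℝ) - 1) := mul_pos hc (by linarith)
  have key : (1/p) * (n+1) / (c * (r-1)) - (1 - 1/p) * (r - (n+1)) / (c * (r-1)) ≤ (-1:ℝ) := by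
    rw [← sub_div, div_le_iff₀ hpos]
    rw [e] at hα
    subst hα
    generalize (1:ℝ)/p = q at *
    nlinarith
  linarith

lemma aux_sum_succ (r : ℕ) (K : Matrix (Fin r) (Fin r) ℝ) (t : ℕ) (i : Fin r) :
    ∑ j, (K ^ (t+1)) i j = ∑ k, K i k * ∑ j, (K ^ t) k j := by
  rw [pow_succ']
  simp only [Matrix.mul_apply, Finset.mul_sum]
  exact Finset.sum_comm

theorem stmt13 :
    ∀ p : ℕ, Nat.Prime p → p ≠ 2 →
    ∀ α : ℝ, 0 < α → α < ((p : ℝ) - 1) / p →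
      ∃ C : ℝ, 0 < C ∧ ∃ B : ℝ, 0 < B ∧ ∃ r₀ : ℕ, ∀ r : ℕ, r₀ ≤ r →
        (∀ i : Fin r, bdEHit p r α i ≤ C * r * Real.log r) ∧
        -- consequently, B·r·log r steps suffice to hit with probability ≥ 1/2
        (∀ i : Fin r, ∀ T : ℕ, B * r * Real.log r ≤ T →
          bdSurv p r α i T ≤ 1 / 2) := by
  intro p hpp _ α hα0 hα1
  have hp := hpp.two_le
  have hp' : (2:ℝ) ≤ p := by exact_mod_cast hp
  obtain ⟨c, hcdef⟩ : ∃ c, c = ((p:ℝ)-1)/p - α := ⟨_, rfl⟩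
  have hc : 0 < c := by linarith
  have hαc : α = ((p:ℝ)-1)/p - c := by linarith
  have hα2 : α < 1 := by
    refine hα1.trans ?_
    rw [div_lt_one (by linarith)]; linarith
  refine ⟨2 / c, by positivity, 4 / c, by positivity, 3, ?_⟩
  intro r hr3
  have hr : 2 ≤ r := by omega
  have hr' : (3:ℝ) ≤ r := by exact_mod_cast hr3
  have hlog : 1 ≤ Real.log r := by
    rw [Real.le_log_iff_exp_le (by linarith)]
    exact (Real.exp_one_lt_d9.le.trans (by norm_num)).trans hr'
  have hV0 : ∀ j : Fin r, 0 ≤ auxV r c j := by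
    intro j
    unfold auxV
    apply mul_nonneg (by positivity)
    have := aux_harm_mono j r j.2.le
    linarith
  have hVub : ∀ j : Fin r, auxV r c j ≤ 2 / c * r * Real.log r := by
    intro j
    have h1 := aux_harm_mono 0 j (Nat.zero_le _)
    rw [harmonic_zero, Rat.cast_zero] at h1
    have h2 := harmonic_le_one_add_log r
    unfold auxV
    calc (r / c) * ((harmonic r : ℝ) - (harmonic j : ℝ)) ≤ (r/c) * (2 * Real.log r) := by
          apply mul_le_mul_of_nonneg_left _ (by positivity)
          linarith
      _ = _ := by ring
  have hlt : ∀ i : Fin r, (((i:ℕ):ℝ) + 1) < α * r → (i:ℕ) + 1 < r := by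
    intro i hi
    have : (((i:ℕ):ℝ) + 1) < r := by nlinarith
    exact_mod_cast this
  have hS : ∀ n : ℕ, ∀ i : Fin r, (((i:ℕ):ℝ) + 1) < α * r →
      ∑ t ∈ range n, ∑ j, ((bdKillUp p r α) ^ t) i j ≤ auxV r c i := by
    intro n
    induction n with
    | zero => intro i _; simpa using hV0 i
    | succ n ih =>
      intro i hi
      rw [Finset.sum_range_succ']
      have h0 : ∑ j, ((bdKillUp p r α) ^ 0) i j = 1 := by
        simp [Matrix.one_apply]
      rw [h0]
      have h1 : ∑ t ∈ range n, ∑ j, ((bdKillUp p r α) ^ (t+1)) i j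
          = ∑ k, bdKillUp p r α i k * ∑ t ∈ range n, ∑ j, ((bdKillUp p r α) ^ t) k j := by
        simp only [aux_sum_succ]
        rw [Finset.sum_comm]
        simp only [Finset.mul_sum]
      rw [h1]
      have h2 : ∑ k, bdKillUp p r α i k * ∑ t ∈ range n, ∑ j, ((bdKillUp p r α) ^ t) k j
          ≤ ∑ k, bdKillUp p r α i k * auxV r c k := by
        apply Finset.sum_le_sum
        intro k _
        by_cases hk : (((k:ℕ):ℝ) + 1) < α * r
        · exact mul_le_mul_of_nonneg_left (ih k hk) (aux_K_nonneg p r α hp hr i k)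
        · have : bdKillUp p r α i k = 0 := by
            unfold bdKillUp; rw [if_neg]; exact fun h => hk h.2
          rw [this]; simp
      have h3 := aux_K_row_le p r α hp hr i (auxV r c) hV0
      have h4 := aux_drift p r c α hp hr hc hαc i hi (hlt i hi)
      linarith
  have hrow : ∀ k : Fin r, ∑ j, bdKillUp p r α k j ≤ 1 := by
    intro k
    by_cases hk : (((k:ℕ):ℝ) + 1) < α * r
    · have h3 := aux_K_row_le p r α hp hr k (fun _ => 1) (fun _ => zero_le_one)
      rw [aux_row p r k (hlt k hk) (fun _ => 1)] at h3
      simp only [mul_one] at h3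
      linarith
    · have : ∀ j, bdKillUp p r α k j = 0 := by
        intro j
        unfold bdKillUp; rw [if_neg]; exact fun h => hk h.1
      simp [this]
  have hanti : ∀ i : Fin r, Antitone (fun t : ℕ => ∑ j, ((bdKillUp p r α) ^ t) i j) := by
    intro i
    apply antitone_nat_of_succ_le
    intro t
    simp only [pow_succ, Matrix.mul_apply]
    rw [Finset.sum_comm]
    apply Finset.sum_le_sum
    intro k _
    rw [← Finset.mul_sum]
    exact mul_le_of_le_one_right (aux_Kpow_nonneg p r α hp hr t i k) (hrow k)
  have hCpos : 0 < 2 / c * r * Real.log r := by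
    have : 0 < Real.log r := by linarith
    positivity
  constructor
  · intro i
    unfold bdEHit
    split_ifs with hi
    · refine le_trans ?_ (hVub i)
      apply Real.tsum_le_of_sum_range_le
      · intro t
        exact Finset.sum_nonneg (fun j _ => aux_Kpow_nonneg p r α hp hr t i j)
      · intro n; exact hS n i hi
    · exact hCpos.le
  · intro i T hT
    unfold bdSurv
    split_ifs with hi
    · have h1 := (hS T i hi).trans (hVub i)
      have h2 : (T:ℝ) * ∑ j, ((bdKillUp p r α) ^ T) i j
          ≤ ∑ t ∈ range T, ∑ j, ((bdKillUp p r α) ^ t) i j := by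
        have := Finset.card_nsmul_le_sum (range T)
          (fun t : ℕ => ∑ j, ((bdKillUp p r α) ^ t) i j) (∑ j, ((bdKillUp p r α) ^ T) i j)
          (fun t ht => hanti i (Finset.mem_range.1 ht).le)
        simpa using this
      have h3 : 4 / c * r * Real.log r = 2 * (2 / c * r * Real.log r) := by ring
      rw [h3] at hT
      generalize 2 / c * r * Real.log r = X at *
      by_contra hcon
      push Not at hcon
      nlinarith
    · norm_num
end
end
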